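/- There exists an absolute constant C > 0 such that for all positive integers r ≤ n, there exists a prime power q with q ≤ C·n and a positive divisor d of q−1 satisfying d ≥ r and (q−1)/d ≥ n/r. (Equivalently, the cyclic group 𝔽_q^* contains a subgroup of size at least r having at least n/r cosets.) -/

import Mathlib

section
open Finset
namespace LSP

/-- counting integers in a residue class in an interval -/
lemma count_class (a b m c : ℕ) (hm : 0 < m) (hab : a ≤ b) :
    |(((Ioc a b).filter (fun n => n ≡ c [MOD m])).card : ℝ) - ((b : ℝ) - a) / m| ≤ 1 := by
  have h := Nat.Ioc_filter_modEq_card a b hm c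
  have hm' : (0 : ℝ) < m := by exact_mod_cast hm
  have key : ∀ t : ℕ, ((⌊((t : ℚ) - c) / m⌋ : ℤ) : ℝ) ≤ ((t : ℝ) - c) / m ∧
      ((t : ℝ) - c) / m < ((⌊((t : ℚ) - c) / m⌋ : ℤ) : ℝ) + 1 := by
    intro t
    constructor
    · have := Int.floor_le (((t : ℚ) - c) / m)
      have h2 : (((⌊((t : ℚ) - c) / m⌋ : ℤ) : ℚ) : ℝ) ≤ ((((t : ℚ) - c) / m : ℚ) : ℝ) := by
        exact_mod_cast this
      push_cast at h2; exact h2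
    · have := Int.lt_floor_add_one (((t : ℚ) - c) / m)
      have h2 : ((((t : ℚ) - c) / m : ℚ) : ℝ) < (((⌊((t : ℚ) - c) / m⌋ : ℤ) + 1 : ℚ) : ℝ) := by
        exact_mod_cast this
      push_cast at h2; exact h2
  have hb := key b
  have ha := key a
  have hmono : (⌊((a : ℚ) - c) / m⌋ : ℤ) ≤ ⌊((b : ℚ) - c) / m⌋ := by
    apply Int.floor_mono
    have : (a : ℚ) ≤ b := by exact_mod_cast hab
    gcongr
  have h3 : (((Ioc a b).filter (fun n => n ≡ c [MOD m])).card : ℝ)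
      = ((⌊((b : ℚ) - c) / m⌋ : ℤ) : ℝ) - ((⌊((a : ℚ) - c) / m⌋ : ℤ) : ℝ) := by
    rw [max_eq_left (by omega)] at h
    exact_mod_cast h
  rw [h3]
  have e : ((b : ℝ) - a) / m = ((b : ℝ) - c) / m - ((a : ℝ) - c) / m := by ring
  rw [e, abs_le]
  constructor <;> linarith [hb.1, hb.2, ha.1, ha.2]

/-- counting integers in a residue class that are divisible by `k` -/
lemma count_class_dvd (a b d c k : ℕ) (hd : 0 < d) (hk : 0 < k) (hab : a ≤ b)
    (hcop : Nat.Coprime d k) :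
    |(((Ioc a b).filter (fun n => n ≡ c [MOD d] ∧ k ∣ n)).card : ℝ)
      - ((b : ℝ) - a) / d * (1 / k)| ≤ 1 := by
  obtain ⟨v, hv1, hv2⟩ := Nat.chineseRemainder hcop c 0
  have : (Ioc a b).filter (fun n => n ≡ c [MOD d] ∧ k ∣ n)
      = (Ioc a b).filter (fun n => n ≡ v [MOD (d * k)]) := by
    apply filter_congr
    intro n _
    rw [← Nat.modEq_and_modEq_iff_modEq_mul hcop, ← Nat.modEq_zero_iff_dvd]
    constructor
    · rintro ⟨h1, h2⟩
      exact ⟨h1.trans hv1.symm, h2.trans hv2.symm⟩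
    · rintro ⟨h1, h2⟩
      exact ⟨h1.trans hv1, h2.trans hv2⟩
  rw [this]
  have h := count_class a b (d * k) v (by positivity) hab
  convert h using 3
  push_cast
  field_simp

/-- the divisor-sum weight -/
noncomputable def dsum (P : ℕ) (lam : ℕ → ℝ) (n : ℕ) : ℝ :=
  ∑ k ∈ P.divisors.filter (fun k => k ∣ n), lam k

noncomputable def Yf (P : ℕ) (lam : ℕ → ℝ) (j : ℕ) : ℝ :=
  ∑ k ∈ P.divisors.filter (fun k => j ∣ k), lam k / k

noncomputable def qform (P : ℕ) (lam : ℕ → ℝ) : ℝ :=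
  ∑ j ∈ P.divisors, (Nat.totient j : ℝ) * (Yf P lam j) ^ 2

lemma qform_eq (P : ℕ) (lam : ℕ → ℝ) (hP : P ≠ 0) :
    qform P lam = ∑ k ∈ P.divisors, ∑ l ∈ P.divisors, lam k * lam l * (1 / (Nat.lcm k l : ℝ)) := by
  have h1 : ∀ k ∈ P.divisors, ∀ l ∈ P.divisors, lam k * lam l * (1 / (Nat.lcm k l : ℝ))
      = ∑ j ∈ P.divisors, (if j ∣ k then (if j ∣ l then
        (Nat.totient j : ℝ) * (lam k / k * (lam l / l)) else 0) else 0) := by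
    intro k hk l hl
    have hk' := Nat.mem_divisors.1 hk
    have hl' := Nat.mem_divisors.1 hl
    have hk0 : 0 < k := Nat.pos_of_mem_divisors hk
    have hl0 : 0 < l := Nat.pos_of_mem_divisors hl
    have hg : (Nat.gcd k l : ℝ) = ∑ j ∈ (Nat.gcd k l).divisors, (Nat.totient j : ℝ) := by
      exact_mod_cast (Nat.sum_totient (Nat.gcd k l)).symm
    have hlcm : (Nat.gcd k l : ℝ) * Nat.lcm k l = k * l := by exact_mod_cast Nat.gcd_mul_lcm k l
    have hl1 : (0 : ℝ) < Nat.lcm k l := by exact_mod_cast Nat.lcm_pos hk0 hl0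
    have hk1 : (0 : ℝ) < k := by exact_mod_cast hk0
    have hl2 : (0 : ℝ) < l := by exact_mod_cast hl0
    have e1 : lam k * lam l * (1 / (Nat.lcm k l : ℝ))
        = (Nat.gcd k l : ℝ) * (lam k / k * (lam l / l)) := by
      field_simp
      linear_combination -(lam k * lam l) * hlcm
    rw [e1, hg, sum_mul]
    have e2 : (Nat.gcd k l).divisors = P.divisors.filter (fun j => j ∣ k ∧ j ∣ l) := by
      ext j
      simp only [Nat.mem_divisors, mem_filter]
      constructor
      · rintro ⟨h, _⟩
        exact ⟨⟨(h.trans (Nat.gcd_dvd_left k l)).trans hk'.1, hP⟩,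
          h.trans (Nat.gcd_dvd_left k l), h.trans (Nat.gcd_dvd_right k l)⟩
      · rintro ⟨_, h1, h2⟩
        exact ⟨Nat.dvd_gcd h1 h2, (Nat.gcd_pos_of_pos_left _ hk0).ne'⟩
    rw [e2, sum_filter]
    apply sum_congr rfl
    intro j _
    by_cases a1 : j ∣ k <;> by_cases a2 : j ∣ l <;> simp [a1, a2]
  rw [sum_congr rfl (fun k hk => sum_congr rfl (h1 k hk))]
  unfold qform Yf
  have h2 : ∀ k ∈ P.divisors, (∑ l ∈ P.divisors, ∑ j ∈ P.divisors, (if j ∣ k then (if j ∣ l then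
        (Nat.totient j : ℝ) * (lam k / k * (lam l / l)) else 0) else 0))
      = ∑ j ∈ P.divisors, ∑ l ∈ P.divisors, (if j ∣ k then (if j ∣ l then
        (Nat.totient j : ℝ) * (lam k / k * (lam l / l)) else 0) else 0) := by
    intro k _
    exact sum_comm
  rw [sum_congr rfl h2, sum_comm]
  apply sum_congr rfl
  intro j _
  rw [sq, sum_filter, sum_mul_sum, mul_sum]
  apply sum_congr rfl
  intro k _
  rw [mul_sum]
  apply sum_congr rfl
  intro l _
  by_cases a1 : j ∣ k <;> by_cases a2 : j ∣ l <;> simp [a1, a2]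

lemma quad_form (P d a b c : ℕ) (lam : ℕ → ℝ) (hP : P ≠ 0) (hd : 0 < d) (hab : a ≤ b)
    (hcop : Nat.Coprime d P) :
    |∑ n ∈ (Ioc a b).filter (fun n => n ≡ c [MOD d]), (dsum P lam n) ^ 2
      - ((b : ℝ) - a) / d * qform P lam| ≤ (∑ k ∈ P.divisors, |lam k|) ^ 2 := by
  have h1 : ∑ n ∈ (Ioc a b).filter (fun n => n ≡ c [MOD d]), (dsum P lam n) ^ 2
      = ∑ k ∈ P.divisors, ∑ l ∈ P.divisors, lam k * lam l *
        (((Ioc a b).filter (fun n => n ≡ c [MOD d] ∧ Nat.lcm k l ∣ n)).card : ℝ) := by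
    have e : ∀ n, (dsum P lam n) ^ 2 = ∑ k ∈ P.divisors, ∑ l ∈ P.divisors,
        if Nat.lcm k l ∣ n then lam k * lam l else 0 := by
      intro n
      unfold dsum
      rw [sq, sum_filter, sum_mul_sum]
      apply sum_congr rfl
      intro k _
      apply sum_congr rfl
      intro l _
      by_cases a1 : k ∣ n <;> by_cases a2 : l ∣ n <;> simp [a1, a2, Nat.lcm_dvd_iff]
    rw [sum_congr rfl (fun n _ => e n), sum_comm]
    apply sum_congr rfl
    intro k _
    rw [sum_comm]
    apply sum_congr rfl
    intro l _
    rw [← sum_filter, sum_const, filter_filter, nsmul_eq_mul, mul_comm]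
  rw [h1, qform_eq P lam hP, mul_sum, ← sum_sub_distrib, sq, sum_mul_sum]
  refine (abs_sum_le_sum_abs _ _).trans (sum_le_sum fun k hk => ?_)
  rw [mul_sum, ← sum_sub_distrib]
  refine (abs_sum_le_sum_abs _ _).trans (sum_le_sum fun l hl => ?_)
  have hk0 : 0 < k := Nat.pos_of_mem_divisors hk
  have hl0 : 0 < l := Nat.pos_of_mem_divisors hl
  have hc : Nat.Coprime d (Nat.lcm k l) := by
    apply Nat.Coprime.coprime_dvd_right _ hcop
    exact Nat.lcm_dvd (Nat.dvd_of_mem_divisors hk) (Nat.dvd_of_mem_divisors hl)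
  have := count_class_dvd a b d c (Nat.lcm k l) hd (Nat.lcm_pos hk0 hl0) hab hc
  set X := (((Ioc a b).filter (fun n => n ≡ c [MOD d] ∧ Nat.lcm k l ∣ n)).card : ℝ)
  have e : lam k * lam l * X - ((b : ℝ) - a) / d * (lam k * lam l * (1 / (Nat.lcm k l : ℝ)))
      = lam k * lam l * (X - ((b : ℝ) - a) / d * (1 / (Nat.lcm k l : ℝ))) := by ring
  rw [e, abs_mul, abs_mul]
  calc _ ≤ |lam k| * |lam l| * 1 := by gcongr
    _ = _ := by ring

end LSP
end

section
open Finset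
namespace LSP

noncomputable def Gf (P D : ℕ) : ℝ :=
  ∑ j ∈ P.divisors.filter (fun j => j ≤ D), 1 / (Nat.totient j : ℝ)

noncomputable def selb (P D k : ℕ) : ℝ :=
  (k : ℝ) * (ArithmeticFunction.moebius k : ℝ) / Gf P D *
    ∑ j ∈ P.divisors.filter (fun j => j ≤ D ∧ k ∣ j), 1 / (Nat.totient j : ℝ)

lemma Gf_ge_one (P D : ℕ) (hP : P ≠ 0) (hD : 1 ≤ D) : 1 ≤ Gf P D := by
  unfold Gf
  have h : (1 : ℕ) ∈ P.divisors.filter (fun j => j ≤ D) := by simp [hP, hD]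
  have := single_le_sum (f := fun j : ℕ => 1 / (Nat.totient j : ℝ))
    (fun i _ => by positivity) h
  simpa using this

lemma selb_one (P D : ℕ) (hP : P ≠ 0) (hD : 1 ≤ D) : selb P D 1 = 1 := by
  have := Gf_ge_one P D hP hD
  unfold selb
  simp only [one_dvd, and_true]
  rw [show ∑ j ∈ P.divisors.filter (fun j => j ≤ D), 1 / (Nat.totient j : ℝ) = Gf P D from rfl]
  simp
  field_simp

lemma selb_zero (P D k : ℕ) (hk : D < k) : selb P D k = 0 := by
  unfold selb
  rw [sum_eq_zero, mul_zero]
  intro j hj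
  simp only [mem_filter] at hj
  have := Nat.le_of_dvd (Nat.pos_of_mem_divisors hj.1) hj.2.2
  omega

lemma selb_abs (P D k : ℕ) (hP : P ≠ 0) (hD : 1 ≤ D) : |selb P D k| ≤ k := by
  have hG := Gf_ge_one P D hP hD
  unfold selb
  have h1 : ∑ j ∈ P.divisors.filter (fun j => j ≤ D ∧ k ∣ j), 1 / (Nat.totient j : ℝ) ≤ Gf P D := by
    unfold Gf
    apply sum_le_sum_of_subset_of_nonneg
    · intro j; simp only [mem_filter]; tauto
    · intros; positivity
  have h0 : 0 ≤ ∑ j ∈ P.divisors.filter (fun j => j ≤ D ∧ k ∣ j), 1 / (Nat.totient j : ℝ) :=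
    sum_nonneg (fun _ _ => by positivity)
  rw [abs_mul, abs_div, abs_mul, abs_of_nonneg h0, abs_of_pos (show 0 < Gf P D by linarith),
    Nat.abs_cast]
  have h2 : |(ArithmeticFunction.moebius k : ℝ)| ≤ 1 := by
    have := ArithmeticFunction.abs_moebius_le_one (n := k)
    exact_mod_cast this
  calc (k : ℝ) * |(ArithmeticFunction.moebius k : ℝ)| / Gf P D * _
      ≤ (k : ℝ) * 1 / Gf P D * Gf P D := by gcongr
    _ = k := by field_simp

lemma selb_l1 (P D : ℕ) (hP : P ≠ 0) (hD : 1 ≤ D) :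
    ∑ k ∈ P.divisors, |selb P D k| ≤ (D : ℝ) ^ 2 := by
  calc ∑ k ∈ P.divisors, |selb P D k| = ∑ k ∈ P.divisors.filter (fun k => k ≤ D), |selb P D k| := by
        rw [sum_filter]
        apply sum_congr rfl
        intro k _
        split_ifs with h
        · rfl
        · rw [selb_zero P D k (by omega), abs_zero]
    _ ≤ ∑ k ∈ P.divisors.filter (fun k => k ≤ D), (D : ℝ) := by
        apply sum_le_sum
        intro k hk
        simp only [mem_filter] at hk
        exact (selb_abs P D k hP hD).trans (by exact_mod_cast hk.2)
    _ ≤ ∑ k ∈ Icc 1 D, (D : ℝ) := by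
        apply sum_le_sum_of_subset_of_nonneg
        · intro k hk
          simp only [mem_filter] at hk
          simp [hk.2, Nat.pos_of_mem_divisors hk.1, Nat.one_le_iff_ne_zero,
            (Nat.pos_of_mem_divisors hk.1).ne']
        · intros; positivity
    _ = (D : ℝ) ^ 2 := by simp [sq]

lemma moebius_between (P j l : ℕ) (hP : Squarefree P) (hj : j ∣ P) (hl : l ∣ P) :
    ∑ k ∈ P.divisors.filter (fun k => j ∣ k ∧ k ∣ l), (ArithmeticFunction.moebius k : ℝ)
      = if l = j then (ArithmeticFunction.moebius j : ℝ) else 0 := by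
  have hP0 := hP.ne_zero
  have hj0 : 0 < j := Nat.pos_of_dvd_of_pos hj (Nat.pos_of_ne_zero hP0)
  by_cases hjl : j ∣ l
  · obtain ⟨t, rfl⟩ := hjl
    have hsq : Squarefree (j * t) := hP.squarefree_of_dvd hl
    have hcop : Nat.Coprime j t := Nat.coprime_of_squarefree_mul hsq
    have ht0 : t ≠ 0 := by rintro rfl; simp at hsq
    have e : P.divisors.filter (fun k => j ∣ k ∧ k ∣ j * t)
        = t.divisors.image (fun u => j * u) := by
      ext k
      simp only [mem_filter, Nat.mem_divisors, mem_image]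
      constructor
      · rintro ⟨⟨_, _⟩, ⟨u, rfl⟩, h2⟩
        exact ⟨u, ⟨Nat.dvd_of_mul_dvd_mul_left hj0 h2, ht0⟩, rfl⟩
      · rintro ⟨u, ⟨hu, _⟩, rfl⟩
        exact ⟨⟨(Nat.mul_dvd_mul_left j hu).trans hl, hP0⟩, Dvd.intro _ rfl,
          Nat.mul_dvd_mul_left j hu⟩
    rw [e, sum_image (by intro a _ b _ h; exact Nat.eq_of_mul_eq_mul_left hj0 h)]
    have e2 : ∀ u ∈ t.divisors, (ArithmeticFunction.moebius (j * u) : ℝ)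
        = (ArithmeticFunction.moebius j : ℝ) * (ArithmeticFunction.moebius u : ℝ) := by
      intro u hu
      rw [ArithmeticFunction.isMultiplicative_moebius.map_mul_of_coprime
        (hcop.coprime_dvd_right (Nat.dvd_of_mem_divisors hu))]
      push_cast; rfl
    rw [sum_congr rfl e2, ← mul_sum]
    have e3 : ∑ u ∈ t.divisors, (ArithmeticFunction.moebius u : ℤ) = if t = 1 then 1 else 0 := by
      have := congrArg (fun f => f t) ArithmeticFunction.moebius_mul_coe_zeta
      simp only [ArithmeticFunction.coe_mul_zeta_apply, ArithmeticFunction.one_apply] at this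
      exact this
    have e4 : ∑ u ∈ t.divisors, (ArithmeticFunction.moebius u : ℝ) = if t = 1 then 1 else 0 := by
      have := congrArg (fun z : ℤ => (z : ℝ)) e3
      push_cast at this
      exact_mod_cast this
    rw [e4]
    have : (j * t = j) ↔ t = 1 := by
      constructor
      · intro h; exact Nat.eq_of_mul_eq_mul_left hj0 (by simpa using h)
      · rintro rfl; simp
    simp [this]
  · rw [if_neg (by rintro rfl; exact hjl dvd_rfl)]
    apply sum_eq_zero
    intro k hk
    simp only [mem_filter] at hk
    exact absurd (hk.2.1.trans hk.2.2) hjl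

lemma Y_selb (P D j : ℕ) (hP : Squarefree P) (hD : 1 ≤ D) (hj : j ∣ P) :
    Yf P (selb P D) j = if j ≤ D then
      (ArithmeticFunction.moebius j : ℝ) / (Gf P D * Nat.totient j) else 0 := by
  have hP0 := hP.ne_zero
  have hG := Gf_ge_one P D hP0 hD
  unfold Yf
  have h1 : ∀ k ∈ P.divisors.filter (fun k => j ∣ k), selb P D k / k
      = (1 / Gf P D) * ∑ l ∈ P.divisors.filter (fun l => l ≤ D),
        if k ∣ l then (ArithmeticFunction.moebius k : ℝ) * (1 / (Nat.totient l : ℝ)) else 0 := by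
    intro k hk
    simp only [mem_filter] at hk
    have hk0 : (0 : ℝ) < k := by exact_mod_cast Nat.pos_of_mem_divisors hk.1
    unfold selb
    rw [← sum_filter, filter_filter, ← mul_sum]
    field_simp
  rw [sum_congr rfl h1, ← mul_sum, sum_comm]
  have h2 : ∀ l ∈ P.divisors.filter (fun l => l ≤ D),
      (∑ k ∈ P.divisors.filter (fun k => j ∣ k), if k ∣ l then
        (ArithmeticFunction.moebius k : ℝ) * (1 / (Nat.totient l : ℝ)) else 0)
      = if l = j then (ArithmeticFunction.moebius j : ℝ) * (1 / (Nat.totient j : ℝ)) else 0 := by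
    intro l hl
    simp only [mem_filter] at hl
    rw [← sum_filter, filter_filter, ← sum_mul,
      moebius_between P j l hP hj (Nat.dvd_of_mem_divisors hl.1)]
    split_ifs with h
    · rw [h]
    · simp
  rw [sum_congr rfl h2, sum_ite_eq']
  simp only [mem_filter, Nat.mem_divisors, hj, hP0, ne_eq, not_false_eq_true, true_and]
  split_ifs
  · field_simp
  · simp

lemma moebius_sq_of_sqf (j : ℕ) (hj : Squarefree j) : (ArithmeticFunction.moebius j : ℝ) ^ 2 = 1 := by
  have := ArithmeticFunction.moebius_sq_eq_one_of_squarefree hj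
  exact_mod_cast this

lemma qform_selb (P D : ℕ) (hP : Squarefree P) (hD : 1 ≤ D) :
    qform P (selb P D) = 1 / Gf P D := by
  have hP0 := hP.ne_zero
  have hG := Gf_ge_one P D hP0 hD
  unfold qform
  have h1 : ∀ j ∈ P.divisors, (Nat.totient j : ℝ) * (Yf P (selb P D) j) ^ 2
      = if j ≤ D then (1 / (Gf P D) ^ 2) * (1 / (Nat.totient j : ℝ)) else 0 := by
    intro j hj
    have hj' := Nat.dvd_of_mem_divisors hj
    rw [Y_selb P D j hP hD hj']
    have : (0 : ℝ) < Nat.totient j := by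
      exact_mod_cast Nat.totient_pos.2 (Nat.pos_of_mem_divisors hj)
    split_ifs
    · rw [div_pow, moebius_sq_of_sqf j (hP.squarefree_of_dvd hj')]
      field_simp
    · simp
  rw [sum_congr rfl h1, ← sum_filter, ← mul_sum]
  change 1 / (Gf P D) ^ 2 * Gf P D = _
  field_simp

/-- The sum of `1/φ(j)` over the critical range for the prime `q`. -/
noncomputable def Wf (P D q : ℕ) : ℝ :=
  ∑ j ∈ (P / q).divisors.filter (fun j => j ≤ D ∧ D < q * j), 1 / (Nat.totient j : ℝ)

noncomputable def selbq (P D q k : ℕ) : ℝ := selb P D k + selb P D (q * k)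

lemma divisors_split (Q q : ℕ) (hQ : Q ≠ 0) (hq : q.Prime) (hc : Nat.Coprime q Q) (f : ℕ → ℝ) :
    ∑ k ∈ (q * Q).divisors, f k = ∑ k ∈ Q.divisors, (f k + f (q * k)) := by
  have hdis : Disjoint Q.divisors (Q.divisors.image (fun k => q * k)) := by
    rw [disjoint_left]
    intro k hk hk2
    simp only [mem_image] at hk2
    obtain ⟨u, _, rfl⟩ := hk2
    have : q ∣ Q := (Dvd.intro _ rfl).trans (Nat.dvd_of_mem_divisors hk)
    exact hq.one_lt.ne' (Nat.Coprime.eq_one_of_dvd hc this)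
  have e : (q * Q).divisors = Q.divisors ∪ Q.divisors.image (fun k => q * k) := by
    ext k
    simp only [Nat.mem_divisors, mem_union, mem_image]
    constructor
    · rintro ⟨h, _⟩
      by_cases hqk : q ∣ k
      · obtain ⟨u, rfl⟩ := hqk
        exact Or.inr ⟨u, ⟨Nat.dvd_of_mul_dvd_mul_left hq.pos h, hQ⟩, rfl⟩
      · exact Or.inl ⟨(((Nat.Prime.coprime_iff_not_dvd hq).2 hqk).symm).dvd_of_dvd_mul_left h, hQ⟩
    · rintro (⟨h, _⟩ | ⟨u, ⟨h, _⟩, rfl⟩)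
      · exact ⟨h.mul_left q, mul_ne_zero hq.ne_zero hQ⟩
      · exact ⟨Nat.mul_dvd_mul_left q h, mul_ne_zero hq.ne_zero hQ⟩
  rw [e, sum_union hdis, sum_image (by intro a _ b _ h; exact Nat.eq_of_mul_eq_mul_left hq.pos h),
    sum_add_distrib]

lemma qform_selbq (P D q : ℕ) (hP : Squarefree P) (hD : 1 ≤ D) (hq : q.Prime) (hqP : q ∣ P) :
    qform (P / q) (selbq P D q) = Wf P D q / (Gf P D) ^ 2 := by
  obtain ⟨Q, rfl⟩ := hqP
  have hP0 := hP.ne_zero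
  have hQ0 : Q ≠ 0 := by rintro rfl; simp at hP0
  have hG := Gf_ge_one _ D hP0 hD
  have hcop : Nat.Coprime q Q := Nat.coprime_of_squarefree_mul hP
  have hQsq : Squarefree Q := hP.squarefree_of_dvd (Dvd.intro_left q rfl)
  have hdiv : q * Q / q = Q := Nat.mul_div_cancel_left Q hq.pos
  have hq1 : (1 : ℝ) < q := by exact_mod_cast hq.one_lt
  unfold qform Wf
  rw [hdiv]
  have hY : ∀ j ∈ Q.divisors, Yf Q (selbq (q * Q) D q) j
      = Yf (q * Q) (selb (q * Q) D) j + (q - 1) * Yf (q * Q) (selb (q * Q) D) (q * j) := by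
    intro j hj
    have hj' := Nat.dvd_of_mem_divisors hj
    have hqj : Nat.Coprime q j := hcop.coprime_dvd_right hj'
    unfold Yf
    rw [sum_filter, sum_filter, sum_filter, divisors_split Q q hQ0 hq hcop,
      divisors_split Q q hQ0 hq hcop, mul_sum, ← sum_add_distrib]
    apply sum_congr rfl
    intro k hk
    have hk' := Nat.dvd_of_mem_divisors hk
    have hk0 : (0 : ℝ) < k := by exact_mod_cast Nat.pos_of_mem_divisors hk
    have a1 : j ∣ q * k ↔ j ∣ k := ⟨fun h => hqj.symm.dvd_of_dvd_mul_left h, fun h => h.mul_left q⟩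
    have a2 : ¬ (q * j ∣ k) := by
      intro h
      have : q ∣ Q := ((Dvd.intro _ rfl).trans h).trans hk'
      have := Nat.Coprime.eq_one_of_dvd hcop this
      exact hq.one_lt.ne' this
    have a3 : q * j ∣ q * k ↔ j ∣ k := Nat.mul_dvd_mul_iff_left hq.pos
    simp only [a1, a2, a3, if_false, selbq]
    split_ifs
    · push_cast
      field_simp
      ring
    · simp
  have h1 : ∀ j ∈ Q.divisors, (Nat.totient j : ℝ) * (Yf Q (selbq (q * Q) D q) j) ^ 2
      = if (j ≤ D ∧ D < q * j) then (1 / (Nat.totient j : ℝ)) * (1 / (Gf (q * Q) D) ^ 2) else 0 := by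
    intro j hj
    have hj' := Nat.dvd_of_mem_divisors hj
    have hqj : Nat.Coprime q j := hcop.coprime_dvd_right hj'
    rw [hY j hj, Y_selb _ D j hP hD (hj'.mul_left q),
      Y_selb _ D (q * j) hP hD (Nat.mul_dvd_mul_left q hj'),
      ArithmeticFunction.isMultiplicative_moebius.map_mul_of_coprime hqj,
      ArithmeticFunction.moebius_apply_prime hq, Nat.totient_mul hqj, Nat.totient_prime hq]
    have ht : (0 : ℝ) < Nat.totient j := by
      exact_mod_cast Nat.totient_pos.2 (Nat.pos_of_mem_divisors hj)
    have hm := moebius_sq_of_sqf j (hQsq.squarefree_of_dvd hj')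
    have hjq : j ≤ q * j := Nat.le_mul_of_pos_left j hq.pos
    push_cast [Nat.cast_sub hq.one_le]
    have hq2 : (0 : ℝ) < (q : ℝ) - 1 := by linarith
    by_cases b1 : j ≤ D
    · by_cases b2 : q * j ≤ D
      · rw [if_pos b1, if_pos b2, if_neg (by omega)]
        field_simp
        ring
      · rw [if_pos b1, if_neg b2, if_pos ⟨b1, by omega⟩]
        rw [mul_zero, add_zero, div_pow, hm]
        field_simp
    · rw [if_neg b1, if_neg (by omega), if_neg (by omega)]
      simp
  rw [sum_congr rfl h1, ← sum_filter, ← sum_mul]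
  field_simp

end LSP
end

section
open Finset
namespace LSP

noncomputable def nu (P D n : ℕ) : ℝ := (dsum P (selb P D) n) ^ 2

lemma nu_nonneg (P D n : ℕ) : 0 ≤ nu P D n := sq_nonneg _

lemma nu_class (P D d a b c : ℕ) (hP : Squarefree P) (hD : 1 ≤ D) (hd : 0 < d) (hab : a ≤ b)
    (hcop : Nat.Coprime d P) :
    |∑ n ∈ (Ioc a b).filter (fun n => n ≡ c [MOD d]), nu P D n
      - ((b : ℝ) - a) / d * (1 / Gf P D)| ≤ (D : ℝ) ^ 4 := by
  have h := quad_form P d a b c (selb P D) hP.ne_zero hd hab hcop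
  rw [qform_selb P D hP hD] at h
  refine h.trans ?_
  have h1 := selb_l1 P D hP.ne_zero hD
  have h0 : 0 ≤ ∑ k ∈ P.divisors, |selb P D k| := sum_nonneg (fun _ _ => abs_nonneg _)
  calc _ ≤ ((D : ℝ) ^ 2) ^ 2 := by gcongr
    _ = _ := by ring

lemma nu_coprime (P D n : ℕ) (hP : P ≠ 0) (hD : 1 ≤ D) (h : Nat.Coprime n P) : nu P D n = 1 := by
  unfold nu dsum
  have : P.divisors.filter (fun k => k ∣ n) = {1} := by
    ext k
    simp only [mem_filter, Nat.mem_divisors, mem_singleton]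
    constructor
    · rintro ⟨⟨h1, _⟩, h2⟩
      exact Nat.eq_one_of_dvd_coprimes h h2 h1
    · rintro rfl; simp [hP]
  rw [this, sum_singleton, selb_one P D hP hD, one_pow]

/-- The sifted count in a residue class. -/
noncomputable def Sc (P d a b c : ℕ) : ℝ :=
  (((Ioc a b).filter (fun n => n ≡ c [MOD d] ∧ Nat.Coprime n P)).card : ℝ)

lemma Sc_eq (P d a b c : ℕ) : Sc P d a b c
    = ∑ n ∈ (Ioc a b).filter (fun n => n ≡ c [MOD d]), if Nat.Coprime n P then (1 : ℝ) else 0 := by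
  unfold Sc
  rw [← sum_filter, filter_filter]
  simp

lemma Sc_upper (P D d a b c : ℕ) (hP : Squarefree P) (hD : 1 ≤ D) (hd : 0 < d) (hab : a ≤ b)
    (hcop : Nat.Coprime d P) :
    Sc P d a b c ≤ ((b : ℝ) - a) / d * (1 / Gf P D) + (D : ℝ) ^ 4 := by
  have h := (abs_le.1 (nu_class P D d a b c hP hD hd hab hcop)).2
  have : Sc P d a b c ≤ ∑ n ∈ (Ioc a b).filter (fun n => n ≡ c [MOD d]), nu P D n := by
    rw [Sc_eq]
    apply sum_le_sum
    intro n _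
    split_ifs with h
    · rw [nu_coprime P D n hP.ne_zero hD h]
    · exact nu_nonneg _ _ _
  linarith

lemma dsum_mul (P D q m : ℕ) (hP : Squarefree P) (hq : q.Prime) (hqP : q ∣ P) :
    dsum P (selb P D) (q * m) = dsum (P / q) (selbq P D q) m := by
  obtain ⟨Q, rfl⟩ := hqP
  have hP0 := hP.ne_zero
  have hQ0 : Q ≠ 0 := by rintro rfl; simp at hP0
  have hcop : Nat.Coprime q Q := Nat.coprime_of_squarefree_mul hP
  have hdiv : q * Q / q = Q := Nat.mul_div_cancel_left Q hq.pos
  unfold dsum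
  rw [hdiv, sum_filter, sum_filter, divisors_split Q q hQ0 hq hcop]
  apply sum_congr rfl
  intro k hk
  have hqk : Nat.Coprime q k := hcop.coprime_dvd_right (Nat.dvd_of_mem_divisors hk)
  have a1 : k ∣ q * m ↔ k ∣ m := ⟨fun h => hqk.symm.dvd_of_dvd_mul_left h, fun h => h.mul_left q⟩
  have a3 : q * k ∣ q * m ↔ k ∣ m := Nat.mul_dvd_mul_iff_left hq.pos
  simp only [a1, a3, selbq]
  split_ifs <;> simp

lemma selbq_l1 (P D q : ℕ) (hP : Squarefree P) (hD : 1 ≤ D) (hq : q.Prime) (hqP : q ∣ P) :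
    ∑ k ∈ (P / q).divisors, |selbq P D q k| ≤ (D : ℝ) ^ 2 := by
  refine le_trans ?_ (selb_l1 P D hP.ne_zero hD)
  obtain ⟨Q, rfl⟩ := hqP
  have hP0 := hP.ne_zero
  have hQ0 : Q ≠ 0 := by rintro rfl; simp at hP0
  have hcop : Nat.Coprime q Q := Nat.coprime_of_squarefree_mul hP
  have hdiv : q * Q / q = Q := Nat.mul_div_cancel_left Q hq.pos
  rw [hdiv, divisors_split Q q hQ0 hq hcop]
  exact sum_le_sum (fun k _ => abs_add_le _ _)

lemma Wf_le_Gf (P D q : ℕ) (hP : P ≠ 0) (hqP : q ∣ P) : Wf P D q ≤ Gf P D := by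
  unfold Wf Gf
  apply sum_le_sum_of_subset_of_nonneg
  · intro j
    simp only [mem_filter, Nat.mem_divisors]
    rintro ⟨⟨h1, _⟩, h2, _⟩
    exact ⟨⟨h1.trans (Nat.div_dvd_of_dvd hqP), hP⟩, h2⟩
  · intros; positivity

lemma Wf_nonneg (P D q : ℕ) : 0 ≤ Wf P D q := sum_nonneg (fun _ _ => by positivity)

lemma nu_class_q (P D d a b c q : ℕ) (hP : Squarefree P) (hD : 1 ≤ D) (hd : 0 < d) (hab : a ≤ b)
    (hcop : Nat.Coprime d P) (hq : q.Prime) (hqP : q ∣ P) :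
    ∑ n ∈ (Ioc a b).filter (fun n => n ≡ c [MOD d] ∧ q ∣ n), nu P D n
      ≤ ((b : ℝ) - a) / (d * q) * (Wf P D q / (Gf P D) ^ 2) + 2 * (D : ℝ) ^ 4 := by
  have hP0 := hP.ne_zero
  have hG := Gf_ge_one P D hP0 hD
  have hdq : Nat.Coprime d q := hcop.coprime_dvd_right hqP
  obtain ⟨v, hv1, hv2⟩ := Nat.chineseRemainder hdq c 0
  obtain ⟨c', rfl⟩ := (Nat.modEq_zero_iff_dvd).1 hv2
  have e : (Ioc a b).filter (fun n => n ≡ c [MOD d] ∧ q ∣ n)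
      = ((Ioc (a / q) (b / q)).filter (fun m => m ≡ c' [MOD d])).image (fun m => q * m) := by
    ext n
    simp only [mem_filter, mem_Ioc, mem_image]
    constructor
    · rintro ⟨⟨h1, h2⟩, h3, m, rfl⟩
      refine ⟨m, ⟨⟨?_, ?_⟩, ?_⟩, rfl⟩
      · rw [Nat.div_lt_iff_lt_mul hq.pos]; linarith
      · rw [Nat.le_div_iff_mul_le hq.pos]; linarith
      · exact Nat.ModEq.cancel_left_of_coprime hdq (h3.trans hv1.symm)
    · rintro ⟨m, ⟨⟨h1, h2⟩, h3⟩, rfl⟩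
      rw [Nat.div_lt_iff_lt_mul hq.pos] at h1
      rw [Nat.le_div_iff_mul_le hq.pos] at h2
      exact ⟨⟨by linarith, by linarith⟩, (h3.mul_left q).trans hv1, Dvd.intro _ rfl⟩
  rw [e, sum_image (by intro a _ b _ h; exact Nat.eq_of_mul_eq_mul_left hq.pos h)]
  have hQ0 : P / q ≠ 0 := (Nat.div_pos (Nat.le_of_dvd (Nat.pos_of_ne_zero hP0) hqP) hq.pos).ne'
  have h := quad_form (P / q) d (a / q) (b / q) c' (selbq P D q) hQ0 hd (Nat.div_le_div_right hab)
    (hcop.coprime_dvd_right (Nat.div_dvd_of_dvd hqP))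
  rw [qform_selbq P D q hP hD hq hqP] at h
  have h1 := selbq_l1 P D q hP hD hq hqP
  have h0 : 0 ≤ ∑ k ∈ (P / q).divisors, |selbq P D q k| := sum_nonneg (fun _ _ => abs_nonneg _)
  have h2 : (∑ k ∈ (P / q).divisors, |selbq P D q k|) ^ 2 ≤ (D : ℝ) ^ 4 := by
    calc _ ≤ ((D : ℝ) ^ 2) ^ 2 := by gcongr
      _ = _ := by ring
  have h3 : ∀ m, nu P D (q * m) = (dsum (P / q) (selbq P D q) m) ^ 2 := by
    intro m; unfold nu; rw [dsum_mul P D q m hP hq hqP]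
  rw [sum_congr rfl (fun m _ => h3 m)]
  have h4 := (abs_le.1 (h.trans h2)).2
  have hW0 := Wf_nonneg P D q
  have hWG := Wf_le_Gf P D q hP0 hqP
  have hq0 : (0 : ℝ) < q := by exact_mod_cast hq.pos
  have hd0 : (0 : ℝ) < d := by exact_mod_cast hd
  have hd1 : (1 : ℝ) ≤ d := by exact_mod_cast hd
  have hdivs : ((b / q : ℕ) : ℝ) - ((a / q : ℕ) : ℝ) ≤ ((b : ℝ) - a) / q + 1 := by
    have u1 : ((b / q : ℕ) : ℝ) ≤ (b : ℝ) / q := Nat.cast_div_le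
    have u2 : (a : ℝ) / q ≤ ((a / q : ℕ) : ℝ) + 1 := by
      rw [div_le_iff₀ hq0]
      have := Nat.lt_div_mul_add (a := a) hq.pos
      have t : (a : ℝ) ≤ ((a / q : ℕ) : ℝ) * q + q := by exact_mod_cast this.le
      linarith
    have : ((b : ℝ) - a) / q = (b : ℝ) / q - (a : ℝ) / q := by ring
    linarith
  have hr : Wf P D q / (Gf P D) ^ 2 ≤ 1 := by
    rw [div_le_one (by positivity)]
    nlinarith
  have hr0 : 0 ≤ Wf P D q / (Gf P D) ^ 2 := by positivity
  have hD4 : (1 : ℝ) ≤ (D : ℝ) ^ 4 := one_le_pow₀ (by exact_mod_cast hD)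
  set ρ := Wf P D q / (Gf P D) ^ 2
  have h5 : (((b / q : ℕ) : ℝ) - ((a / q : ℕ) : ℝ)) / d * ρ
      ≤ ((b : ℝ) - a) / (d * q) * ρ + 1 := by
    calc _ ≤ (((b : ℝ) - a) / q + 1) / d * ρ := by gcongr
      _ = ((b : ℝ) - a) / (d * q) * ρ + ρ / d := by field_simp
      _ ≤ _ := by
        have : ρ / d ≤ 1 := by rw [div_le_one hd0]; linarith
        linarith
  linarith

lemma Sc_lower (P D d a b c : ℕ) (hP : Squarefree P) (hD : 1 ≤ D) (hd : 0 < d) (hab : a ≤ b)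
    (hcop : Nat.Coprime d P) :
    ((b : ℝ) - a) / d * (1 / Gf P D) - (D : ℝ) ^ 4
      - ∑ q ∈ P.primeFactors, (((b : ℝ) - a) / (d * q) * (Wf P D q / (Gf P D) ^ 2)
        + 2 * (D : ℝ) ^ 4) ≤ Sc P d a b c := by
  have hP0 := hP.ne_zero
  have h := (abs_le.1 (nu_class P D d a b c hP hD hd hab hcop)).1
  have h1 : ∑ n ∈ (Ioc a b).filter (fun n => n ≡ c [MOD d]), nu P D n ≤ Sc P d a b c
      + ∑ q ∈ P.primeFactors,
        ∑ n ∈ (Ioc a b).filter (fun n => n ≡ c [MOD d] ∧ q ∣ n), nu P D n := by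
    have e : ∀ q ∈ P.primeFactors,
        ∑ n ∈ (Ioc a b).filter (fun n => n ≡ c [MOD d] ∧ q ∣ n), nu P D n
        = ∑ n ∈ (Ioc a b).filter (fun n => n ≡ c [MOD d]), if q ∣ n then nu P D n else 0 := by
      intro q _
      rw [← sum_filter, filter_filter]
    rw [sum_congr rfl e, sum_comm, Sc_eq, ← sum_add_distrib]
    apply sum_le_sum
    intro n _
    by_cases hn : Nat.Coprime n P
    · rw [if_pos hn, nu_coprime P D n hP0 hD hn]
      have : 0 ≤ ∑ q ∈ P.primeFactors, if q ∣ n then (1 : ℝ) else 0 :=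
        sum_nonneg (fun _ _ => by split_ifs <;> simp)
      linarith
    · rw [if_neg hn]
      obtain ⟨q, hq, h1, h2⟩ := Nat.Prime.not_coprime_iff_dvd.1 hn
      have hmem : q ∈ P.primeFactors := Nat.mem_primeFactors.2 ⟨hq, h2, hP0⟩
      have := single_le_sum (f := fun q : ℕ => if q ∣ n then nu P D n else 0)
        (fun i _ => by split_ifs <;> first | exact nu_nonneg _ _ _ | exact le_rfl) hmem
      simp only [h1, if_true] at this
      linarith
  have h2 : ∑ q ∈ P.primeFactors,
        ∑ n ∈ (Ioc a b).filter (fun n => n ≡ c [MOD d] ∧ q ∣ n), nu P D n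
      ≤ ∑ q ∈ P.primeFactors, (((b : ℝ) - a) / (d * q) * (Wf P D q / (Gf P D) ^ 2)
        + 2 * (D : ℝ) ^ 4) := by
    apply sum_le_sum
    intro q hq
    have hq' := Nat.mem_primeFactors.1 hq
    exact nu_class_q P D d a b c q hP hD hd hab hcop hq'.1 hq'.2.1
  linarith

end LSP
end

section
open Finset
namespace LSP

/-- product of a finite set of primes -/
def PS (S : Finset ℕ) : ℕ := ∏ p ∈ S, p

lemma PS_pos (S : Finset ℕ) (hS : ∀ p ∈ S, p.Prime) : 0 < PS S :=
  prod_pos (fun p hp => (hS p hp).pos)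

lemma PS_coprime (S : Finset ℕ) (hS : ∀ p ∈ S, p.Prime) (q : ℕ) (hq : q.Prime) (h : q ∉ S) :
    Nat.Coprime q (PS S) := by
  unfold PS
  apply Nat.Coprime.prod_right
  intro p hp
  exact (Nat.coprime_primes hq (hS p hp)).2 (by rintro rfl; exact h hp)

lemma PS_insert (S : Finset ℕ) (q : ℕ) (h : q ∉ S) : PS (insert q S) = q * PS S := prod_insert h

lemma PS_sqf (S : Finset ℕ) (hS : ∀ p ∈ S, p.Prime) : Squarefree (PS S) := by
  induction S using Finset.induction_on with
  | empty => simp [PS]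
  | insert q S hq ih =>
    rw [PS_insert S q hq]
    have hS' : ∀ p ∈ S, p.Prime := fun p hp => hS p (mem_insert_of_mem hp)
    have hqp := hS q (mem_insert_self q S)
    rw [Nat.squarefree_mul (PS_coprime S hS' q hqp hq)]
    exact ⟨hqp.prime.squarefree, ih hS'⟩

lemma PS_primeFactors (S : Finset ℕ) (hS : ∀ p ∈ S, p.Prime) : (PS S).primeFactors = S :=
  Nat.primeFactors_prod hS

lemma PS_dvd_of (S : Finset ℕ) (j : ℕ) (hj : Squarefree j) (h : j.primeFactors ⊆ S) : j ∣ PS S := by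
  rw [← Nat.prod_primeFactors_of_squarefree hj]
  exact prod_dvd_prod_of_subset _ _ _ h

/-- Multiplicative sums over the divisors of a product of primes. -/
lemma sum_div_PS (S : Finset ℕ) (hS : ∀ p ∈ S, p.Prime) (f : ℕ → ℝ) (f1 : f 1 = 1)
    (hf : ∀ q k, q.Prime → Nat.Coprime q k → f (q * k) = f q * f k) :
    ∑ k ∈ (PS S).divisors, f k = ∏ p ∈ S, (1 + f p) := by
  induction S using Finset.induction_on with
  | empty => simp [PS, f1]
  | insert q S hq ih =>
    have hS' : ∀ p ∈ S, p.Prime := fun p hp => hS p (mem_insert_of_mem hp)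
    have hqp := hS q (mem_insert_self q S)
    have hc := PS_coprime S hS' q hqp hq
    rw [PS_insert S q hq, divisors_split _ q (PS_pos S hS').ne' hqp hc, prod_insert hq, ← ih hS',
      mul_sum]
    apply sum_congr rfl
    intro k hk
    rw [hf q k hqp (hc.coprime_dvd_right (Nat.dvd_of_mem_divisors hk))]
    ring

lemma ratio_PS (S : Finset ℕ) (hS : ∀ p ∈ S, p.Prime) :
    (PS S : ℝ) / Nat.totient (PS S) = ∏ p ∈ S, (1 + 1 / (Nat.totient p : ℝ)) := by
  induction S using Finset.induction_on with
  | empty => simp [PS]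
  | insert q S hq ih =>
    have hS' : ∀ p ∈ S, p.Prime := fun p hp => hS p (mem_insert_of_mem hp)
    have hqp := hS q (mem_insert_self q S)
    have hc := PS_coprime S hS' q hqp hq
    rw [PS_insert S q hq, prod_insert hq, ← ih hS', Nat.totient_mul hc, Nat.totient_prime hqp]
    have h1 : (1 : ℝ) < q := by exact_mod_cast hqp.one_lt
    push_cast [Nat.cast_sub hqp.one_le]
    have h2 : (0 : ℝ) < (q : ℝ) - 1 := by linarith
    have h3 : (1 : ℝ) + 1 / ((q : ℝ) - 1) = q / (q - 1) := by field_simp; ring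
    rw [h3, div_mul_div_comm]

lemma inv_totient_eq (j : ℕ) (hj : Squarefree j) :
    1 / (Nat.totient j : ℝ) = (1 / (j : ℝ)) * ∑ e ∈ j.divisors, 1 / (Nat.totient e : ℝ) := by
  have hS : ∀ p ∈ j.primeFactors, p.Prime := fun p hp => Nat.prime_of_mem_primeFactors hp
  have e : PS j.primeFactors = j := Nat.prod_primeFactors_of_squarefree hj
  have h1 := ratio_PS _ hS
  have h2 := sum_div_PS _ hS (fun k => 1 / (Nat.totient k : ℝ)) (by simp) (by
    intro q k hq hc
    rw [Nat.totient_mul hc]; push_cast; field_simp)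
  rw [e] at h1 h2
  rw [h2, ← h1]
  have : (0 : ℝ) < j := by exact_mod_cast Nat.pos_of_ne_zero hj.ne_zero
  field_simp

/-! ### A Mertens type upper bound -/

lemma sum_log_primeFactors_le (S : Finset ℕ) (hS : ∀ p ∈ S, p.Prime) (k : ℕ) (hk : 0 < k) :
    ∑ p ∈ S.filter (fun p => p ∣ k), Real.log p ≤ Real.log k := by
  have h1 : PS (S.filter (fun p => p ∣ k)) ∣ k := by
    refine dvd_trans ?_ (Nat.prod_primeFactors_dvd k)
    apply prod_dvd_prod_of_subset
    intro p hp
    simp only [mem_filter] at hp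
    exact Nat.mem_primeFactors.2 ⟨hS p hp.1, hp.2, hk.ne'⟩
  have h2 : ∑ p ∈ S.filter (fun p => p ∣ k), Real.log p
      = Real.log (PS (S.filter (fun p => p ∣ k)) : ℝ) := by
    unfold PS
    push_cast
    rw [Real.log_prod]
    intro p hp
    simp only [mem_filter] at hp
    exact_mod_cast (hS p hp.1).ne_zero
  rw [h2]
  apply Real.log_le_log
  · exact_mod_cast PS_pos _ (fun p hp => hS p (mem_filter.1 hp).1)
  · exact_mod_cast Nat.le_of_dvd hk h1

lemma mertens_upper (z : ℕ) (hz : 2 ≤ z) :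
    ∑ p ∈ Nat.primesBelow z, Real.log p / ((p : ℝ) - 1) ≤ 6 * Real.log z := by
  have hz0 : (0 : ℝ) < z := by positivity
  have hp : ∀ p ∈ Nat.primesBelow z, p.Prime := fun p hp => Nat.prime_of_mem_primesBelow hp
  have hlog2 : Real.log 4 ≤ 2 * Real.log z := by
    have : Real.log 4 = 2 * Real.log 2 := by
      rw [show (4 : ℝ) = 2 ^ 2 by norm_num, Real.log_pow]; norm_num
    rw [this]
    have : Real.log 2 ≤ Real.log z := Real.log_le_log (by norm_num) (by exact_mod_cast hz)
    linarith
  have h1 : ∑ k ∈ Ioc 0 z, ∑ p ∈ (Nat.primesBelow z).filter (fun p => p ∣ k), Real.log p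
      ≤ z * Real.log z := by
    calc _ ≤ ∑ k ∈ Ioc 0 z, Real.log z := by
          apply sum_le_sum
          intro k hk
          rw [mem_Ioc] at hk
          refine (sum_log_primeFactors_le _ hp k hk.1).trans ?_
          apply Real.log_le_log (by exact_mod_cast hk.1) (by exact_mod_cast hk.2)
      _ = z * Real.log z := by simp
  have h2 : ∑ k ∈ Ioc 0 z, ∑ p ∈ (Nat.primesBelow z).filter (fun p => p ∣ k), Real.log p
      = ∑ p ∈ Nat.primesBelow z, Real.log p * ((z / p : ℕ) : ℝ) := by
    simp_rw [sum_filter]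
    rw [sum_comm]
    apply sum_congr rfl
    intro p _
    rw [← sum_filter, sum_const, Nat.Ioc_filter_dvd_card_eq_div, nsmul_eq_mul, mul_comm]
  have h3 : ∑ p ∈ Nat.primesBelow z, Real.log p ≤ Real.log 4 * z := by
    refine le_trans ?_ (Chebyshev.theta_le_log4_mul_x hz0.le)
    rw [Chebyshev.theta_eq_sum_primesLE_log]
    apply sum_le_sum_of_subset_of_nonneg
    · intro p hp
      simp only [Nat.primesLE, Nat.mem_primesBelow] at hp ⊢
      exact ⟨by omega, hp.2⟩
    · intro p _ _
      exact Real.log_natCast_nonneg p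
  have h4 : ∑ p ∈ Nat.primesBelow z, Real.log p / ((p : ℝ) - 1) * z
      ≤ ∑ p ∈ Nat.primesBelow z, (2 * (Real.log p * ((z / p : ℕ) : ℝ)) + 2 * Real.log p) := by
    apply sum_le_sum
    intro p hp'
    have hpp := hp p hp'
    have hp2 : (2 : ℝ) ≤ p := by exact_mod_cast hpp.two_le
    have hl : 0 ≤ Real.log p := Real.log_natCast_nonneg p
    have t : (z : ℝ) ≤ ((z / p : ℕ) : ℝ) * p + p := by
      exact_mod_cast (Nat.lt_div_mul_add (a := z) hpp.pos).le
    have : (z : ℝ) / (p - 1) ≤ 2 * ((z / p : ℕ) : ℝ) + 2 := by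
      rw [div_le_iff₀ (by linarith)]
      have : (0 : ℝ) ≤ ((z / p : ℕ) : ℝ) := by positivity
      nlinarith
    calc Real.log p / ((p : ℝ) - 1) * z = Real.log p * ((z : ℝ) / (p - 1)) := by ring
      _ ≤ Real.log p * (2 * ((z / p : ℕ) : ℝ) + 2) := by gcongr
      _ = _ := by ring
  rw [sum_add_distrib, ← mul_sum, ← mul_sum, ← h2, ← sum_mul] at h4
  have : (∑ p ∈ Nat.primesBelow z, Real.log p / ((p : ℝ) - 1)) * z ≤ 6 * Real.log z * z := by
    nlinarith
  exact le_of_mul_le_mul_right this hz0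

/-! ### Lower bound for `G` -/

lemma sum_inv_sq (M : ℕ) : ∑ m ∈ Icc 1 M, 1 / ((m : ℝ) ^ 2) ≤ 2 := by
  have h : ∀ M : ℕ, ∑ m ∈ Icc 1 (M + 1), 1 / ((m : ℝ) ^ 2) ≤ 2 - 1 / ((M : ℝ) + 1) := by
    intro M
    induction M with
    | zero => simp; norm_num
    | succ M ih =>
      rw [sum_Icc_succ_top (by omega)]
      have : 1 / (((M + 1 + 1 : ℕ) : ℝ) ^ 2) ≤ 1 / ((M : ℝ) + 1) - 1 / ((M : ℝ) + 1 + 1) := by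
        push_cast
        rw [div_sub_div _ _ (by positivity) (by positivity), div_le_div_iff₀ (by positivity) (by positivity)]
        nlinarith
      push_cast at this ⊢
      linarith
  rcases Nat.eq_zero_or_pos M with rfl | hM
  · simp
  · obtain ⟨M, rfl⟩ := Nat.exists_eq_succ_of_ne_zero hM.ne'
    have := h M
    have h2 : 0 ≤ 1 / ((M : ℝ) + 1) := by positivity
    simp only [Nat.succ_eq_add_one]
    linarith

lemma G_full (z D : ℕ) (hz : 1 ≤ z) (hD : z ≤ D) :
    Real.log z ≤ 2 * Gf (PS (Nat.primesBelow z)) D := by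
  have hp : ∀ p ∈ Nat.primesBelow z, p.Prime := fun p hp => Nat.prime_of_mem_primesBelow hp
  have h1 : ∑ k ∈ (Icc 1 (z - 1)).filter Squarefree, 1 / (k : ℝ) ≤ Gf (PS (Nat.primesBelow z)) D := by
    unfold Gf
    calc _ ≤ ∑ k ∈ (Icc 1 (z - 1)).filter Squarefree, 1 / (Nat.totient k : ℝ) := by
          apply sum_le_sum
          intro k hk
          simp only [mem_filter, mem_Icc] at hk
          have : (0 : ℝ) < Nat.totient k := by exact_mod_cast Nat.totient_pos.2 (by omega)
          apply one_div_le_one_div_of_le this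
          exact_mod_cast Nat.totient_le k
      _ ≤ _ := by
          apply sum_le_sum_of_subset_of_nonneg
          · intro k hk
            simp only [mem_filter, mem_Icc] at hk
            simp only [mem_filter, Nat.mem_divisors]
            refine ⟨⟨PS_dvd_of _ k hk.2 ?_, (PS_pos _ hp).ne'⟩, by omega⟩
            intro p hpk
            have hpk' := Nat.mem_primeFactors.1 hpk
            rw [Nat.mem_primesBelow]
            refine ⟨?_, hpk'.1⟩
            have := Nat.le_of_dvd (by omega) hpk'.2.1
            omega
          · intros; positivity
  have h2 : ∑ n ∈ Icc 1 (z - 1), 1 / (n : ℝ) ≤ 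
      ∑ x ∈ (Icc 1 (z - 1)) ×ˢ ((Icc 1 (z - 1)).filter Squarefree), 
        (1 / ((x.1 : ℝ) ^ 2)) * (1 / (x.2 : ℝ)) := by
    have hex : ∀ n : ℕ, ∃ x : ℕ × ℕ, x.1 ^ 2 * x.2 = n ∧ Squarefree x.2 := by
      intro n
      obtain ⟨a, b, h1, h2⟩ := Nat.sq_mul_squarefree n
      exact ⟨(b, a), h1, h2⟩
    choose g hg1 hg2 using hex
    have hinj : Set.InjOn g (Icc 1 (z - 1) : Finset ℕ) := by
      intro a _ b _ h
      rw [← hg1 a, ← hg1 b, h]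
    have e : ∑ n ∈ Icc 1 (z - 1), 1 / (n : ℝ)
        = ∑ x ∈ (Icc 1 (z - 1)).image g, (1 / ((x.1 : ℝ) ^ 2)) * (1 / (x.2 : ℝ)) := by
      rw [sum_image hinj]
      apply sum_congr rfl
      intro n _
      have : (n : ℝ) = ((g n).1 : ℝ) ^ 2 * (g n).2 := by exact_mod_cast (hg1 n).symm
      rw [this, one_div_mul_one_div]
    rw [e]
    apply sum_le_sum_of_subset_of_nonneg
    · intro x hx
      rw [mem_image] at hx
      obtain ⟨n, hn, rfl⟩ := hx
      rw [mem_Icc] at hn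
      have h := hg1 n
      have p1 : 0 < (g n).1 := by
        rcases Nat.eq_zero_or_pos (g n).1 with h0 | h0
        · rw [h0] at h; simp at h; omega
        · exact h0
      have p2 : 0 < (g n).2 := by
        rcases Nat.eq_zero_or_pos (g n).2 with h0 | h0
        · rw [h0] at h; simp at h; omega
        · exact h0
      simp only [mem_product, mem_filter, mem_Icc]
      have q1 : (g n).1 ≤ n := by
        have h5 : (g n).1 * 1 ≤ (g n).1 * ((g n).1 * (g n).2) :=
          Nat.mul_le_mul_left _ (Nat.mul_pos p1 p2)
        calc (g n).1 ≤ (g n).1 * ((g n).1 * (g n).2) := by simpa using h5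
          _ = (g n).1 ^ 2 * (g n).2 := by ring
          _ = n := h
      have q2 : (g n).2 ≤ n := by
        conv_rhs => rw [← h]
        exact Nat.le_mul_of_pos_left _ (by positivity)
      exact ⟨⟨p1, by omega⟩, ⟨p2, by omega⟩, hg2 n⟩
    · intros; positivity
  rw [sum_product] at h2
  simp_rw [← mul_sum] at h2
  rw [← sum_mul] at h2
  have h3 := sum_inv_sq (z - 1)
  have h4 : Real.log z ≤ ∑ n ∈ Icc 1 (z - 1), 1 / (n : ℝ) := by
    have := log_add_one_le_harmonic (z - 1)
    rw [harmonic_eq_sum_Icc] at this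
    push_cast at this
    rw [Nat.cast_sub hz] at this
    simpa using this
  have h5 : 0 ≤ ∑ k ∈ (Icc 1 (z - 1)).filter Squarefree, 1 / (k : ℝ) :=
    sum_nonneg (fun _ _ => by positivity)
  calc Real.log z ≤ _ := h4
    _ ≤ _ := h2
    _ ≤ 2 * ∑ k ∈ (Icc 1 (z - 1)).filter Squarefree, 1 / (k : ℝ) := by gcongr
    _ ≤ _ := by gcongr

lemma G_step (P D q : ℕ) (hP : P ≠ 0) (hq : q.Prime) (hc : Nat.Coprime q P) :
    Gf (q * P) D ≤ (1 + 1 / ((q : ℝ) - 1)) * Gf P D := by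
  have h1 : (1 : ℝ) < q := by exact_mod_cast hq.one_lt
  have h2 : (0 : ℝ) < (q : ℝ) - 1 := by linarith
  unfold Gf
  rw [sum_filter, sum_filter, divisors_split P q hP hq hc, mul_sum]
  apply sum_le_sum
  intro k hk
  have hqk := hc.coprime_dvd_right (Nat.dvd_of_mem_divisors hk)
  have hle : k ≤ q * k := Nat.le_mul_of_pos_left k hq.pos
  have ht : (0 : ℝ) < Nat.totient k := by
    exact_mod_cast Nat.totient_pos.2 (Nat.pos_of_mem_divisors hk)
  rw [Nat.totient_mul hqk, Nat.totient_prime hq]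
  push_cast [Nat.cast_sub hq.one_le]
  by_cases a1 : k ≤ D
  · rw [if_pos a1]
    have : (if q * k ≤ D then 1 / (((q : ℝ) - 1) * (Nat.totient k : ℝ)) else 0)
        ≤ 1 / (((q : ℝ) - 1) * (Nat.totient k : ℝ)) := by
      split_ifs
      · exact le_rfl
      · positivity
    have e : (1 + 1 / ((q : ℝ) - 1)) * (1 / (Nat.totient k : ℝ))
      = 1 / (Nat.totient k : ℝ) + 1 / (((q : ℝ) - 1) * (Nat.totient k : ℝ)) := by
      field_simp
    linarith
  · rw [if_neg a1, if_neg (by omega)]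
    simp

lemma G_union (S E : Finset ℕ) (D : ℕ) (hS : ∀ p ∈ S, p.Prime) (hE : ∀ p ∈ E, p.Prime)
    (hdis : Disjoint S E) :
    Gf (PS (S ∪ E)) D ≤ (∏ q ∈ E, (1 + 1 / ((q : ℝ) - 1))) * Gf (PS S) D := by
  induction E using Finset.induction_on with
  | empty => simp
  | insert q E hq ih =>
    have hE' : ∀ p ∈ E, p.Prime := fun p hp => hE p (mem_insert_of_mem hp)
    have hqp := hE q (mem_insert_self q E)
    rw [disjoint_insert_right] at hdis
    have hSE : ∀ p ∈ S ∪ E, p.Prime := by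
      intro p hp
      rcases mem_union.1 hp with h | h
      · exact hS p h
      · exact hE' p h
    have hnot : q ∉ S ∪ E := by
      rw [mem_union]; push Not; exact ⟨hdis.1, hq⟩
    rw [union_insert, PS_insert _ q hnot, prod_insert hq]
    refine (G_step _ D q (PS_pos _ hSE).ne' hqp (PS_coprime _ hSE q hqp hnot)).trans ?_
    rw [mul_assoc]
    have h1 : (1 : ℝ) < q := by exact_mod_cast hqp.one_lt
    have h2 : (0 : ℝ) < (q : ℝ) - 1 := by linarith
    gcongr
    exact ih hE' hdis.2

lemma G_lower (z D : ℕ) (E : Finset ℕ) (hz : 1 ≤ z) (hD : z ≤ D) (hE : ∀ p ∈ E, p.Prime)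
    (hE2 : ∑ q ∈ E, 1 / ((q : ℝ) - 1) ≤ 2) :
    Real.log z ≤ 16 * Gf (PS (Nat.primesBelow z \ E)) D := by
  have hp : ∀ p ∈ Nat.primesBelow z, p.Prime := fun p hp => Nat.prime_of_mem_primesBelow hp
  have h1 := G_full z D hz hD
  have h2 := G_union (Nat.primesBelow z \ E) (Nat.primesBelow z ∩ E) D
    (fun p h => hp p (mem_sdiff.1 h).1) (fun p h => hp p (mem_inter.1 h).1)
    (disjoint_sdiff_inter _ _)
  rw [sdiff_union_inter] at h2
  have hpos : ∀ q ∈ E, (0 : ℝ) < 1 / ((q : ℝ) - 1) := by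
    intro q hq
    have : (1 : ℝ) < q := by exact_mod_cast (hE q hq).one_lt
    have : (0 : ℝ) < (q : ℝ) - 1 := by linarith
    positivity
  have h3 : ∏ q ∈ Nat.primesBelow z ∩ E, (1 + 1 / ((q : ℝ) - 1)) ≤ 8 := by
    calc _ ≤ ∏ q ∈ Nat.primesBelow z ∩ E, Real.exp (1 / ((q : ℝ) - 1)) := by
          apply prod_le_prod
          · intro q hq
            have := hpos q (mem_inter.1 hq).2
            linarith
          · intro q _
            linarith [Real.add_one_le_exp (1 / ((q : ℝ) - 1))]
      _ = Real.exp (∑ q ∈ Nat.primesBelow z ∩ E, 1 / ((q : ℝ) - 1)) := (Real.exp_sum _ _).symm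
      _ ≤ Real.exp 2 := by
          apply Real.exp_le_exp.2
          refine le_trans ?_ hE2
          apply sum_le_sum_of_subset_of_nonneg inter_subset_right
          intro q hq _
          exact (hpos q hq).le
      _ ≤ 8 := by
          have := Real.exp_one_lt_d9
          rw [show (2 : ℝ) = 1 + 1 by norm_num, Real.exp_add]
          nlinarith [Real.exp_pos 1]
  have h4 : 0 ≤ Gf (PS (Nat.primesBelow z \ E)) D := sum_nonneg (fun _ _ => by positivity)
  nlinarith

end LSP
end

section
open Finset
namespace LSP

/-- `∑ 1/φ(j)` over `j ∣ Q`, `B/q < j ≤ B`. -/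
noncomputable def Hf (Q B q : ℕ) : ℝ :=
  ∑ j ∈ Q.divisors.filter (fun j => j ≤ B ∧ B < q * j), 1 / (Nat.totient j : ℝ)

lemma Hf_nonneg (Q B q : ℕ) : 0 ≤ Hf Q B q := sum_nonneg (fun _ _ => by positivity)

lemma sum_inv_Ioc (Y X : ℕ) (hY : 1 ≤ Y) (hX : Y ≤ X) :
    ∑ i ∈ Ioc Y X, 1 / (i : ℝ) ≤ Real.log X - Real.log Y := by
  induction X, hX using Nat.le_induction with
  | base => simp
  | succ X hX ih =>
    rw [sum_Ioc_succ_top hX]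
    have hX0 : (0 : ℝ) < X := by exact_mod_cast (by omega : 0 < X)
    have h : 1 / ((X + 1 : ℕ) : ℝ) ≤ Real.log ((X + 1 : ℕ) : ℝ) - Real.log X := by
      have := Real.one_sub_inv_le_log_of_pos (show (0 : ℝ) < ((X + 1 : ℕ) : ℝ) / X by positivity)
      rw [Real.log_div (by positivity) (by positivity)] at this
      refine le_trans (le_of_eq ?_) this
      push_cast
      field_simp
      ring
    linarith

lemma sum_inv_range (q X : ℕ) (hq : 2 ≤ q) :
    ∑ i ∈ (Icc 1 X).filter (fun i => X < q * i), 1 / (i : ℝ) ≤ 3 * Real.log q := by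
  have hq0 : 0 < q := by omega
  have hl2 : 0.69 ≤ Real.log q := by
    have : Real.log 2 ≤ Real.log q := Real.log_le_log (by norm_num) (by exact_mod_cast hq)
    linarith [Real.log_two_gt_d9]
  rcases Nat.eq_zero_or_pos X with rfl | hX
  · simp; linarith
  set Y := X / q + 1 with hY
  have hXY : X < q * Y := by
    have := Nat.lt_div_mul_add (a := X) hq0
    rw [hY]; linarith [Nat.mul_comm q (X / q)]
  have hYX : Y ≤ X := by
    have : X / q < X := Nat.div_lt_self hX (by omega)
    omega
  have hY1 : 1 ≤ Y := Nat.le_add_left 1 _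
  have hsub : (Icc 1 X).filter (fun i => X < q * i) ⊆ insert Y (Ioc Y X) := by
    intro i hi
    simp only [mem_filter, mem_Icc, mem_insert, mem_Ioc] at hi ⊢
    have : Y ≤ i := by
      have : X / q < i := by rw [Nat.div_lt_iff_lt_mul hq0]; linarith [Nat.mul_comm q i]
      omega
    omega
  have hY0 : (0 : ℝ) < Y := by exact_mod_cast hY1
  calc _ ≤ ∑ i ∈ insert Y (Ioc Y X), 1 / (i : ℝ) :=
        sum_le_sum_of_subset_of_nonneg hsub (fun _ _ _ => by positivity)
    _ = 1 / (Y : ℝ) + ∑ i ∈ Ioc Y X, 1 / (i : ℝ) := by rw [sum_insert (by simp)]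
    _ ≤ 1 + (Real.log X - Real.log Y) := by
        have h1 : 1 / (Y : ℝ) ≤ 1 := by
          rw [div_le_one hY0]; exact_mod_cast hY1
        linarith [sum_inv_Ioc Y X hY1 hYX]
    _ ≤ 1 + Real.log q := by
        have : Real.log X ≤ Real.log (q * Y : ℝ) := by
          apply Real.log_le_log (by exact_mod_cast hX)
          exact_mod_cast hXY.le
        rw [Real.log_mul (by positivity) (by positivity)] at this
        linarith
    _ ≤ _ := by linarith

lemma sum_eprod (S : Finset ℕ) (hS : ∀ p ∈ S, p.Prime) :
    ∑ e ∈ (PS S).divisors, 1 / ((e : ℝ) * Nat.totient e) ≤ 3 := by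
  rw [sum_div_PS S hS (fun e => 1 / ((e : ℝ) * Nat.totient e)) (by simp) (by
    intro q k hq hc
    rw [Nat.totient_mul hc]; push_cast; field_simp)]
  have h1 : ∀ S : Finset ℕ, (∀ p ∈ S, p.Prime) →
      ∑ p ∈ S, 1 / ((p : ℝ) * Nat.totient p) ≤ 1 := by
    intro S hS
    have h : ∀ M : ℕ, ∑ m ∈ Ico 2 (M + 2), 1 / ((m : ℝ) * (m - 1)) ≤ 1 - 1 / ((M : ℝ) + 1) := by
      intro M
      induction M with
      | zero => simp
      | succ M ih =>
        rw [show M + 1 + 2 = (M + 2) + 1 by ring, sum_Ico_succ_top (by omega)]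
        have : 1 / (((M + 2 : ℕ) : ℝ) * (((M + 2 : ℕ) : ℝ) - 1))
            = 1 / ((M : ℝ) + 1) - 1 / ((M : ℝ) + 1 + 1) := by
          push_cast
          have : (M : ℝ) + 2 - 1 = M + 1 := by ring
          rw [this]
          field_simp
          ring
        rw [this]
        push_cast
        linarith
    have hsub : S ⊆ Ico 2 (S.sup id + 2) := by
      intro p hp
      rw [mem_Ico]
      have := le_sup (f := id) hp
      simp only [id] at this
      exact ⟨(hS p hp).two_le, by omega⟩
    calc ∑ p ∈ S, 1 / ((p : ℝ) * Nat.totient p) = ∑ p ∈ S, 1 / ((p : ℝ) * (p - 1)) := by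
          apply sum_congr rfl
          intro p hp
          rw [Nat.totient_prime (hS p hp), Nat.cast_sub (hS p hp).one_le]
          simp
      _ ≤ ∑ m ∈ Ico 2 (S.sup id + 2), 1 / ((m : ℝ) * (m - 1)) := by
          apply sum_le_sum_of_subset_of_nonneg hsub
          intro m hm _
          rw [mem_Ico] at hm
          have : (2 : ℝ) ≤ m := by exact_mod_cast hm.1
          have : (0 : ℝ) < (m : ℝ) - 1 := by linarith
          positivity
      _ ≤ 1 := by
          have := h (S.sup id)
          have h3 : (0 : ℝ) ≤ 1 / (((S.sup id : ℕ) : ℝ) + 1) := by positivity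
          linarith
  calc ∏ p ∈ S, (1 + 1 / ((p : ℝ) * Nat.totient p))
      ≤ ∏ p ∈ S, Real.exp (1 / ((p : ℝ) * Nat.totient p)) := by
        apply prod_le_prod
        · intros; positivity
        · intro p _
          linarith [Real.add_one_le_exp (1 / ((p : ℝ) * Nat.totient p))]
    _ = Real.exp (∑ p ∈ S, 1 / ((p : ℝ) * Nat.totient p)) := (Real.exp_sum _ _).symm
    _ ≤ Real.exp 1 := Real.exp_le_exp.2 (h1 S hS)
    _ ≤ 3 := by linarith [Real.exp_one_lt_d9]

lemma Hf_base (S : Finset ℕ) (hS : ∀ p ∈ S, p.Prime) (B q : ℕ) (hq : 2 ≤ q) :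
    Hf (PS S) B q ≤ 9 * Real.log q := by
  have hsq := PS_sqf S hS
  have hP0 := hsq.ne_zero
  have hlq : 0 ≤ Real.log q := Real.log_natCast_nonneg q
  unfold Hf
  have h1 : ∑ j ∈ (PS S).divisors.filter (fun j => j ≤ B ∧ B < q * j), 1 / (Nat.totient j : ℝ)
      = ∑ e ∈ (PS S).divisors, (1 / (Nat.totient e : ℝ)) *
        ∑ j ∈ (PS S).divisors.filter (fun j => (j ≤ B ∧ B < q * j) ∧ e ∣ j), 1 / (j : ℝ) := by
    have e1 : ∀ j ∈ (PS S).divisors.filter (fun j => j ≤ B ∧ B < q * j), 1 / (Nat.totient j : ℝ)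
        = ∑ e ∈ (PS S).divisors, if e ∣ j then (1 / (Nat.totient e : ℝ)) * (1 / (j : ℝ)) else 0 := by
      intro j hj
      simp only [mem_filter, Nat.mem_divisors] at hj
      rw [inv_totient_eq j (hsq.squarefree_of_dvd hj.1.1), ← sum_filter, mul_sum]
      have : j.divisors = (PS S).divisors.filter (fun e => e ∣ j) := by
        ext e
        simp only [mem_filter, Nat.mem_divisors]
        constructor
        · rintro ⟨h, _⟩; exact ⟨⟨h.trans hj.1.1, hP0⟩, h⟩
        · rintro ⟨_, h⟩; exact ⟨h, by rintro rfl; simp at hj⟩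
      rw [this]
      exact sum_congr rfl (fun _ _ => mul_comm _ _)
    rw [sum_congr rfl e1, sum_comm]
    apply sum_congr rfl
    intro e _
    rw [← sum_filter, filter_filter, mul_sum]
  rw [h1]
  calc _ ≤ ∑ e ∈ (PS S).divisors, (1 / ((e : ℝ) * Nat.totient e)) * (3 * Real.log q) := by
        apply sum_le_sum
        intro e he
        have he0 := Nat.pos_of_mem_divisors he
        have he1 : (0 : ℝ) < e := by exact_mod_cast he0
        have h2 : ∑ j ∈ (PS S).divisors.filter (fun j => (j ≤ B ∧ B < q * j) ∧ e ∣ j), 1 / (j : ℝ)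
            ≤ (1 / (e : ℝ)) * (3 * Real.log q) := by
          calc _ ≤ ∑ j ∈ ((Icc 1 (B / e)).filter (fun i => B / e < q * i)).image (fun i => e * i),
                1 / (j : ℝ) := by
                apply sum_le_sum_of_subset_of_nonneg
                · intro j hj
                  simp only [mem_filter, Nat.mem_divisors] at hj
                  obtain ⟨_, ⟨hjB, hBj⟩, i, rfl⟩ := hj
                  simp only [mem_image, mem_filter, mem_Icc]
                  refine ⟨i, ⟨⟨?_, ?_⟩, ?_⟩, rfl⟩
                  · rcases Nat.eq_zero_or_pos i with h0 | h0
                    · rw [h0] at hBj; simp at hBj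
                    · exact h0
                  · rw [Nat.le_div_iff_mul_le he0]; linarith
                  · rw [Nat.div_lt_iff_lt_mul he0]
                    calc B < q * (e * i) := hBj
                      _ = q * i * e := by ring
                · intros; positivity
            _ = ∑ i ∈ (Icc 1 (B / e)).filter (fun i => B / e < q * i), (1 / (e : ℝ)) * (1 / (i : ℝ)) := by
                rw [sum_image (by intro a _ b _ h; exact Nat.eq_of_mul_eq_mul_left he0 h)]
                apply sum_congr rfl
                intro i _
                push_cast
                rw [one_div_mul_one_div]
            _ = (1 / (e : ℝ)) * ∑ i ∈ (Icc 1 (B / e)).filter (fun i => B / e < q * i), (1 / (i : ℝ)) := by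
                rw [mul_sum]
            _ ≤ _ := by
                gcongr
                exact sum_inv_range q (B / e) hq
        calc _ ≤ (1 / (Nat.totient e : ℝ)) * ((1 / (e : ℝ)) * (3 * Real.log q)) := by gcongr
          _ = _ := by
            rw [← mul_assoc, one_div_mul_one_div, mul_comm (Nat.totient e : ℝ)]
    _ = (∑ e ∈ (PS S).divisors, 1 / ((e : ℝ) * Nat.totient e)) * (3 * Real.log q) := by
        rw [sum_mul]
    _ ≤ 3 * (3 * Real.log q) := by
        gcongr
        exact sum_eprod S hS
    _ = _ := by ring

lemma Hf_step (S : Finset ℕ) (hS : ∀ p ∈ S, p.Prime) (z B q : ℕ) (hz : 2 ≤ z)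
    (hSz : ∀ p ∈ S, p < z) (L K : ℝ) (hK0 : 0 ≤ K)
    (hL : ∀ j : ℕ, B < q * j → L ≤ Real.log j)
    (hK : ∀ l ∈ S, Hf (PS S) (B / l) q ≤ K) :
    Hf (PS S) B q * L ≤ K * (6 * Real.log z) := by
  have hsq := PS_sqf S hS
  have hP0 := hsq.ne_zero
  have h1 : Hf (PS S) B q * L ≤ ∑ j ∈ (PS S).divisors.filter (fun j => j ≤ B ∧ B < q * j),
      ∑ l ∈ S, if l ∣ j then (1 / (Nat.totient j : ℝ)) * Real.log l else 0 := by
    unfold Hf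
    rw [sum_mul]
    apply sum_le_sum
    intro j hj
    simp only [mem_filter, Nat.mem_divisors] at hj
    have hjs := hsq.squarefree_of_dvd hj.1.1
    rw [← sum_filter, ← mul_sum]
    gcongr
    refine (hL j hj.2.2).trans (le_of_eq ?_)
    have e1 : S.filter (fun l => l ∣ j) = j.primeFactors := by
      ext l
      simp only [mem_filter, Nat.mem_primeFactors]
      constructor
      · rintro ⟨h, h2⟩; exact ⟨hS l h, h2, hjs.ne_zero⟩
      · rintro ⟨h, h2, _⟩
        refine ⟨?_, h2⟩
        rw [← PS_primeFactors S hS]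
        exact Nat.mem_primeFactors.2 ⟨h, h2.trans hj.1.1, hP0⟩
    rw [e1, ← Real.log_prod]
    · rw [← Nat.cast_prod, Nat.prod_primeFactors_of_squarefree hjs]
    · intro l hl
      exact_mod_cast (Nat.prime_of_mem_primeFactors hl).ne_zero
  rw [sum_comm] at h1
  refine h1.trans ?_
  have h2 : ∀ l ∈ S, (∑ j ∈ (PS S).divisors.filter (fun j => j ≤ B ∧ B < q * j),
      if l ∣ j then (1 / (Nat.totient j : ℝ)) * Real.log l else 0)
      ≤ Real.log l / ((l : ℝ) - 1) * K := by
    intro l hl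
    have hlp := hS l hl
    have hl1 : (1 : ℝ) < l := by exact_mod_cast hlp.one_lt
    have hl2 : (0 : ℝ) < (l : ℝ) - 1 := by linarith
    have hll : 0 ≤ Real.log l := Real.log_natCast_nonneg l
    rw [← sum_filter, filter_filter]
    calc _ ≤ ∑ j ∈ ((PS S).divisors.filter (fun i => i ≤ B / l ∧ B / l < q * i ∧ Nat.Coprime l i)).image
            (fun i => l * i), (1 / (Nat.totient j : ℝ)) * Real.log l := by
          apply sum_le_sum_of_subset_of_nonneg
          · intro j hj
            simp only [mem_filter, Nat.mem_divisors] at hj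
            obtain ⟨⟨hjP, _⟩, ⟨hjB, hBj⟩, i, rfl⟩ := hj
            simp only [mem_image, mem_filter, Nat.mem_divisors]
            refine ⟨i, ⟨⟨(Dvd.intro_left l rfl).trans hjP, hP0⟩, ?_, ?_, ?_⟩, rfl⟩
            · rw [Nat.le_div_iff_mul_le hlp.pos]; linarith
            · rw [Nat.div_lt_iff_lt_mul hlp.pos]
              calc B < q * (l * i) := hBj
                _ = q * i * l := by ring
            · exact Nat.coprime_of_squarefree_mul (hsq.squarefree_of_dvd hjP)
          · intros; positivity
      _ = ∑ i ∈ (PS S).divisors.filter (fun i => i ≤ B / l ∧ B / l < q * i ∧ Nat.Coprime l i),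
            (Real.log l / ((l : ℝ) - 1)) * (1 / (Nat.totient i : ℝ)) := by
          rw [sum_image (by intro a _ b _ h; exact Nat.eq_of_mul_eq_mul_left hlp.pos h)]
          apply sum_congr rfl
          intro i hi
          simp only [mem_filter] at hi
          rw [Nat.totient_mul hi.2.2.2, Nat.totient_prime hlp]
          push_cast [Nat.cast_sub hlp.one_le]
          rw [← one_div_mul_one_div]
          ring
      _ = (Real.log l / ((l : ℝ) - 1)) *
          ∑ i ∈ (PS S).divisors.filter (fun i => i ≤ B / l ∧ B / l < q * i ∧ Nat.Coprime l i),
             (1 / (Nat.totient i : ℝ)) := by rw [mul_sum]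
      _ ≤ (Real.log l / ((l : ℝ) - 1)) * Hf (PS S) (B / l) q := by
          gcongr
          unfold Hf
          apply sum_le_sum_of_subset_of_nonneg
          · intro i
            simp only [mem_filter]
            tauto
          · intros; positivity
      _ ≤ _ := by
          gcongr
          exact hK l hl
  refine (sum_le_sum h2).trans ?_
  rw [← sum_mul, mul_comm]
  gcongr
  refine le_trans ?_ (mertens_upper z hz)
  apply sum_le_sum_of_subset_of_nonneg
  · intro p hp
    exact Nat.mem_primesBelow.2 ⟨hSz p hp, hS p hp⟩
  · intro p hp _
    have : (1 : ℝ) < p := by exact_mod_cast (Nat.prime_of_mem_primesBelow hp).one_lt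
    have h2 : (0 : ℝ) < (p : ℝ) - 1 := by linarith
    have := Real.log_natCast_nonneg p
    positivity

lemma Hf_final (S : Finset ℕ) (hS : ∀ p ∈ S, p.Prime) (z V q : ℕ) (hz : 2 ≤ z) (hV : 3 ≤ V)
    (hSz : ∀ p ∈ S, p < z) (hq : 2 ≤ q) (hqz : q < z) :
    Hf (PS S) (z ^ V) q ≤ 324 * Real.log q / ((V : ℝ) - 2) ^ 2 := by
  have hlz : 0 < Real.log z := Real.log_pos (by exact_mod_cast (by omega : 1 < z))
  have hlq : 0 ≤ Real.log q := Real.log_natCast_nonneg q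
  have hV2 : (0 : ℝ) < (V : ℝ) - 2 := by
    have : (3 : ℝ) ≤ V := by exact_mod_cast hV
    linarith
  have hpow : ∀ j : ℕ, z ^ (V - 2) < j → ((V : ℝ) - 2) * Real.log z ≤ Real.log j := by
    intro j hj
    have : Real.log ((z ^ (V - 2) : ℕ) : ℝ) ≤ Real.log j := by
      apply Real.log_le_log
      · exact_mod_cast Nat.pow_pos (by omega)
      · exact_mod_cast hj.le
    push_cast at this
    rw [Real.log_pow, Nat.cast_sub (by omega)] at this
    exact_mod_cast this
  have hzV : z ^ V = z ^ (V - 2) * z * z := by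
    rw [← pow_succ, ← pow_succ]; congr 1; omega
  have h1 : ∀ l ∈ S, Hf (PS S) (z ^ V / l) q ≤ 54 * Real.log q / ((V : ℝ) - 2) := by
    intro l hl
    have := Hf_step S hS z (z ^ V / l) q hz hSz (((V : ℝ) - 2) * Real.log z) (9 * Real.log q)
      (by positivity) (by
        intro j hj
        apply hpow
        rw [Nat.div_lt_iff_lt_mul (hS l hl).pos, hzV] at hj
        by_contra hcon
        push Not at hcon
        have : q * j * l ≤ z * z ^ (V - 2) * z := by
          have := (hSz l hl).le
          gcongr
        linarith [Nat.mul_comm z (z ^ (V - 2))]) (fun l' hl' => Hf_base S hS _ q hq)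
    rw [le_div_iff₀ hV2]
    have h3 : (Hf (PS S) (z ^ V / l) q * ((V : ℝ) - 2)) * Real.log z ≤ (54 * Real.log q) * Real.log z := by
      linarith
    exact le_of_mul_le_mul_right h3 hlz
  have := Hf_step S hS z (z ^ V) q hz hSz (((V : ℝ) - 2) * Real.log z) (54 * Real.log q / ((V : ℝ) - 2))
      (by positivity) (by
        intro j hj
        apply hpow
        rw [hzV] at hj
        by_contra hcon
        push Not at hcon
        have : q * j ≤ z * z ^ (V - 2) := by gcongr
        have h2 : z * z ^ (V - 2) ≤ z * z ^ (V - 2) * z := Nat.le_mul_of_pos_right _ (by omega)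
        linarith [Nat.mul_comm z (z ^ (V - 2))]) h1
  rw [le_div_iff₀ (by positivity)]
  have h3 : (Hf (PS S) (z ^ V) q * ((V : ℝ) - 2) ^ 2) * Real.log z ≤ (324 * Real.log q) * Real.log z := by
    have h4 : (Hf (PS S) (z ^ V) q * (((V : ℝ) - 2) * Real.log z)) * ((V : ℝ) - 2)
        ≤ (54 * Real.log q / ((V : ℝ) - 2) * (6 * Real.log z)) * ((V : ℝ) - 2) := by gcongr
    have e : (54 * Real.log q / ((V : ℝ) - 2) * (6 * Real.log z)) * ((V : ℝ) - 2)
      = (324 * Real.log q) * Real.log z := by field_simp; ring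
    rw [e] at h4
    linarith
  exact le_of_mul_le_mul_right h3 hlz

end LSP
end

section
open Finset
namespace LSP

lemma sieve_upper (z d a b c : ℕ) (E : Finset ℕ) (hz : 2 ≤ z) (hE : ∀ p ∈ E, p.Prime)
    (hE2 : ∑ q ∈ E, 1 / ((q : ℝ) - 1) ≤ 2) (hd : 0 < d) (hab : a ≤ b)
    (hcop : Nat.Coprime d (PS (Nat.primesBelow z \ E))) :
    Sc (PS (Nat.primesBelow z \ E)) d a b c
      ≤ 16 * ((b : ℝ) - a) / (d * Real.log z) + (z : ℝ) ^ 4 := by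
  have hS : ∀ p ∈ Nat.primesBelow z \ E, p.Prime :=
    fun p hp => Nat.prime_of_mem_primesBelow (mem_sdiff.1 hp).1
  have hlz : 0 < Real.log z := Real.log_pos (by exact_mod_cast (by omega : 1 < z))
  have h := Sc_upper _ z d a b c (PS_sqf _ hS) (by omega) hd hab hcop
  have hG := G_lower z z E (by omega) le_rfl hE hE2
  have hG1 := Gf_ge_one _ z (PS_sqf _ hS).ne_zero (by omega)
  refine h.trans ?_
  have hd0 : (0 : ℝ) < d := by exact_mod_cast hd
  have hba : (0 : ℝ) ≤ (b : ℝ) - a := by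
    have : (a : ℝ) ≤ b := by exact_mod_cast hab
    linarith
  have h1 : 1 / Gf (PS (Nat.primesBelow z \ E)) z ≤ 16 / Real.log z := by
    rw [div_le_div_iff₀ (by linarith) hlz]
    linarith
  have : ((b : ℝ) - a) / d * (1 / Gf (PS (Nat.primesBelow z \ E)) z)
      ≤ ((b : ℝ) - a) / d * (16 / Real.log z) := by gcongr
  have e : ((b : ℝ) - a) / d * (16 / Real.log z) = 16 * ((b : ℝ) - a) / (d * Real.log z) := by
    field_simp
  linarith

lemma fund_lemma (z V d a b c c' : ℕ) (E : Finset ℕ) (hz : 2 ≤ z) (hV : 3 ≤ V)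
    (hE : ∀ p ∈ E, p.Prime)
    (hE2 : ∑ q ∈ E, 1 / ((q : ℝ) - 1) ≤ 2) (hd : 0 < d) (hab : a ≤ b)
    (hcop : Nat.Coprime d (PS (Nat.primesBelow z \ E))) :
    Sc (PS (Nat.primesBelow z \ E)) d a b c'
      ≤ Sc (PS (Nat.primesBelow z \ E)) d a b c
        + 500000 * ((b : ℝ) - a) / (d * (((V : ℝ) - 2) ^ 2 * Real.log z))
        + 4 * z * ((z : ℝ) ^ V) ^ 4 := by
  have hS : ∀ p ∈ Nat.primesBelow z \ E, p.Prime :=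
    fun p hp => Nat.prime_of_mem_primesBelow (mem_sdiff.1 hp).1
  have hSz : ∀ p ∈ Nat.primesBelow z \ E, p < z :=
    fun p hp => Nat.lt_of_mem_primesBelow (mem_sdiff.1 hp).1
  set S := Nat.primesBelow z \ E with hSdef
  have hlz : 0 < Real.log z := Real.log_pos (by exact_mod_cast (by omega : 1 < z))
  have hD1 : 1 ≤ z ^ V := Nat.one_le_pow _ _ (by omega)
  have hDz : z ≤ z ^ V := Nat.le_self_pow (by omega) z
  have hsq := PS_sqf S hS
  have hU := Sc_upper _ (z ^ V) d a b c' hsq hD1 hd hab hcop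
  have hL := Sc_lower _ (z ^ V) d a b c hsq hD1 hd hab hcop
  have hG := G_lower z (z ^ V) E (by omega) hDz hE hE2
  have hG1 := Gf_ge_one _ (z ^ V) hsq.ne_zero hD1
  rw [← hSdef] at hG
  set G := Gf (PS S) (z ^ V) with hGdef
  rw [PS_primeFactors S hS] at hL
  have hV2 : (0 : ℝ) < (V : ℝ) - 2 := by
    have : (3 : ℝ) ≤ V := by exact_mod_cast hV
    linarith
  have hd0 : (0 : ℝ) < d := by exact_mod_cast hd
  have hba : (0 : ℝ) ≤ (b : ℝ) - a := by
    have : (a : ℝ) ≤ b := by exact_mod_cast hab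
    linarith
  have hW : ∀ q ∈ S, Wf (PS S) (z ^ V) q ≤ 324 * Real.log q / ((V : ℝ) - 2) ^ 2 := by
    intro q hq
    refine le_trans ?_ (Hf_final S hS z V q hz hV hSz (hS q hq).two_le (hSz q hq))
    unfold Wf Hf
    apply sum_le_sum_of_subset_of_nonneg
    · intro j
      simp only [mem_filter, Nat.mem_divisors]
      rintro ⟨⟨h1, _⟩, h2⟩
      refine ⟨⟨h1.trans (Nat.div_dvd_of_dvd ?_), hsq.ne_zero⟩, h2⟩
      exact dvd_prod_of_mem _ hq
    · intros; positivity
  have hsum : ∑ q ∈ S, (((b : ℝ) - a) / (d * q) * (Wf (PS S) (z ^ V) q / G ^ 2)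
        + 2 * ((z ^ V : ℕ) : ℝ) ^ 4)
      ≤ 500000 * ((b : ℝ) - a) / (d * (((V : ℝ) - 2) ^ 2 * Real.log z))
        + 2 * z * ((z : ℝ) ^ V) ^ 4 := by
    rw [sum_add_distrib]
    apply add_le_add
    · have hG2 : 1 / G ^ 2 ≤ 256 / (Real.log z) ^ 2 := by
        rw [div_le_div_iff₀ (by positivity) (by positivity)]
        nlinarith
      calc _ ≤ ∑ q ∈ S, (((b : ℝ) - a) / d * (324 / ((V : ℝ) - 2) ^ 2) * (256 / (Real.log z) ^ 2))
              * (Real.log q / ((q : ℝ) - 1)) := by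
            apply sum_le_sum
            intro q hq
            have hq1 : (1 : ℝ) < q := by exact_mod_cast (hS q hq).one_lt
            have hq2 : (0 : ℝ) < (q : ℝ) - 1 := by linarith
            have hlq := Real.log_natCast_nonneg q
            have hW0 := Wf_nonneg (PS S) (z ^ V) q
            calc ((b : ℝ) - a) / (d * q) * (Wf (PS S) (z ^ V) q / G ^ 2)
                = ((b : ℝ) - a) / d * (1 / q) * (Wf (PS S) (z ^ V) q * (1 / G ^ 2)) := by
                  field_simp
              _ ≤ ((b : ℝ) - a) / d * (1 / ((q : ℝ) - 1)) *
                  ((324 * Real.log q / ((V : ℝ) - 2) ^ 2) * (256 / (Real.log z) ^ 2)) := by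
                  have t1 := hW q hq
                  have t2 : 1 / (q : ℝ) ≤ 1 / ((q : ℝ) - 1) :=
                    one_div_le_one_div_of_le hq2 (by linarith)
                  gcongr
              _ = _ := by ring
        _ = (((b : ℝ) - a) / d * (324 / ((V : ℝ) - 2) ^ 2) * (256 / (Real.log z) ^ 2)) *
            ∑ q ∈ S, (Real.log q / ((q : ℝ) - 1)) := by rw [mul_sum]
        _ ≤ (((b : ℝ) - a) / d * (324 / ((V : ℝ) - 2) ^ 2) * (256 / (Real.log z) ^ 2)) *
            (6 * Real.log z) := by
            gcongr
            refine le_trans ?_ (mertens_upper z hz)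
            apply sum_le_sum_of_subset_of_nonneg sdiff_subset
            intro p hp _
            have : (1 : ℝ) < p := by exact_mod_cast (Nat.prime_of_mem_primesBelow hp).one_lt
            have h2 : (0 : ℝ) < (p : ℝ) - 1 := by linarith
            have := Real.log_natCast_nonneg p
            positivity
        _ = 497664 * ((b : ℝ) - a) / (d * (((V : ℝ) - 2) ^ 2 * Real.log z)) := by
            field_simp; ring
        _ ≤ _ := by gcongr; norm_num
    · rw [sum_const, nsmul_eq_mul]
      have hcard : (S.card : ℝ) ≤ z := by
        have : S.card ≤ z := by
          calc S.card ≤ (range z).card := card_le_card (by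
                intro p hp; exact mem_range.2 (hSz p hp))
            _ = z := card_range z
        exact_mod_cast this
      push_cast
      calc (S.card : ℝ) * (2 * ((z : ℝ) ^ V) ^ 4) ≤ z * (2 * ((z : ℝ) ^ V) ^ 4) := by gcongr
        _ = _ := by ring
  push_cast at hU hL hsum
  have hz2 : (2 : ℝ) ≤ z := by exact_mod_cast hz
  have h4 : (0 : ℝ) ≤ ((z : ℝ) ^ V) ^ 4 := by positivity
  have : 2 * ((z : ℝ) ^ V) ^ 4 ≤ z * ((z : ℝ) ^ V) ^ 4 := by gcongr
  linarith

end LSP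
end

section
open Finset
namespace LSP

lemma crt_sum (d e : ℕ) (hd : 0 < d) (he : 0 < e) (hc : Nat.Coprime d e) (f h : ℕ → ℝ) :
    ∑ c ∈ range (d * e), f (c % d) * h (c % e) = (∑ a ∈ range d, f a) * ∑ a ∈ range e, h a := by
  rw [sum_mul_sum, ← sum_product']
  refine sum_nbij' (fun c => (c % d, c % e)) (fun p => (Nat.chineseRemainder hc p.1 p.2 : ℕ)) ?_ ?_ ?_ ?_ ?_
  · intro c _
    simp [Nat.mod_lt _ hd, Nat.mod_lt _ he]
  · intro p _
    exact mem_range.2 (Nat.chineseRemainder_lt_mul hc p.1 p.2 hd.ne' he.ne')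
  · intro c hc'
    have h1 : c ≡ c % d [MOD d] := (Nat.mod_modEq c d).symm
    have h2 : c ≡ c % e [MOD e] := (Nat.mod_modEq c e).symm
    have h3 := Nat.chineseRemainder_modEq_unique hc h1 h2
    have h4 := Nat.chineseRemainder_lt_mul hc (c % d) (c % e) hd.ne' he.ne'
    have h5 : c < d * e := mem_range.1 hc'
    exact (Nat.ModEq.eq_of_lt_of_lt h3 h5 h4).symm
  · rintro ⟨a, b⟩ hab
    simp only [mem_product, mem_range] at hab
    have h1 := (Nat.chineseRemainder hc a b).2.1
    have h2 := (Nat.chineseRemainder hc a b).2.2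
    simp only [Prod.mk.injEq]
    constructor
    · have := h1; unfold Nat.ModEq at this; rw [this, Nat.mod_eq_of_lt hab.1]
    · have := h2; unfold Nat.ModEq at this; rw [this, Nat.mod_eq_of_lt hab.2]
  · intro c _; rfl

lemma sum_by_class (N m : ℕ) (hm : 0 < m) (f : ℕ → ℝ) :
    ∑ n ∈ Ioc 0 N, f n = ∑ c ∈ range m, ∑ n ∈ (Ioc 0 N).filter (fun n => n ≡ c [MOD m]), f n := by
  rw [← sum_fiberwise_of_maps_to (g := fun n => n % m) (t := range m)
    (fun n _ => mem_range.2 (Nat.mod_lt _ hm))]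
  apply sum_congr rfl
  intro c hc
  apply sum_congr _ (fun _ _ => rfl)
  apply filter_congr
  intro n _
  unfold Nat.ModEq
  rw [Nat.mod_eq_of_lt (mem_range.1 hc)]

lemma ls_dual (S : Finset ℕ) (hS : ∀ d ∈ S, d.Prime) (Rm : ℝ) (hR : ∀ d ∈ S, (d : ℝ) ≤ Rm) (N : ℕ)
    (ν : ℕ → ℝ) (hν : ∀ n, 0 ≤ ν n) (Q E : ℝ) (hE : 0 ≤ E)
    (h1 : ∀ d ∈ S, ∀ c, |∑ n ∈ (Ioc 0 N).filter (fun n => n ≡ c [MOD d]), ν n - (N : ℝ) / d * Q| ≤ E)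
    (h2 : ∀ d ∈ S, ∀ d' ∈ S, d ≠ d' → ∀ c,
      |∑ n ∈ (Ioc 0 N).filter (fun n => n ≡ c [MOD (d * d')]), ν n - (N : ℝ) / ((d * d' : ℕ) : ℝ) * Q| ≤ E)
    (g : ℕ → ℕ → ℝ) (hg : ∀ d ∈ S, ∀ n, g d n = g d (n % d)) (hg0 : ∀ d ∈ S, ∑ a ∈ range d, g d a = 0) :
    ∑ n ∈ Ioc 0 N, ν n * (∑ d ∈ S, (d : ℝ) * g d n) ^ 2
      ≤ (N * Q + E * Rm + E * S.card * Rm ^ 2) * ∑ d ∈ S, (d : ℝ) * ∑ a ∈ range d, (g d a) ^ 2 := by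
  set l1 : ℕ → ℝ := fun d => ∑ a ∈ range d, |g d a| with hl1
  set V : ℕ → ℝ := fun d => ∑ a ∈ range d, (g d a) ^ 2 with hV
  have hV0 : ∀ d, 0 ≤ V d := fun d => sum_nonneg (fun _ _ => sq_nonneg _)
  have hl0 : ∀ d, 0 ≤ l1 d := fun d => sum_nonneg (fun _ _ => abs_nonneg _)
  have hpair : ∀ d ∈ S, ∀ d' ∈ S, ∑ n ∈ Ioc 0 N, ν n * (g d n * g d' n)
      ≤ (if d = d' then V d * ((N : ℝ) / d * Q + E) else 0) + E * (l1 d * l1 d') := by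
    intro d hd d' hd'
    have hdp := (hS d hd).pos
    have hdp' := (hS d' hd').pos
    split_ifs with h
    · subst h
      have : ∑ n ∈ Ioc 0 N, ν n * (g d n * g d n) ≤ V d * ((N : ℝ) / d * Q + E) := by
        rw [sum_by_class N d hdp, hV, sum_mul]
        apply sum_le_sum
        intro c hc
        have : ∑ n ∈ (Ioc 0 N).filter (fun n => n ≡ c [MOD d]), ν n * (g d n * g d n)
            = (g d c) ^ 2 * ∑ n ∈ (Ioc 0 N).filter (fun n => n ≡ c [MOD d]), ν n := by
          rw [mul_sum]
          apply sum_congr rfl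
          intro n hn
          have hn2 : n % d = c % d := (mem_filter.1 hn).2
          rw [hg d hd n, hn2, ← hg d hd c]
          ring
        rw [this]
        apply mul_le_mul_of_nonneg_left _ (sq_nonneg _)
        have := (abs_le.1 (h1 d hd c)).2
        linarith
      have h3 : 0 ≤ E * (l1 d * l1 d) := mul_nonneg hE (mul_nonneg (hl0 _) (hl0 _))
      linarith
    · have hc : Nat.Coprime d d' := (Nat.coprime_primes (hS d hd) (hS d' hd')).2 h
      rw [sum_by_class N (d * d') (Nat.mul_pos hdp hdp'), zero_add]
      have e1 : ∀ c, ∑ n ∈ (Ioc 0 N).filter (fun n => n ≡ c [MOD (d * d')]), ν n * (g d n * g d' n)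
          = (g d (c % d) * g d' (c % d')) * ∑ n ∈ (Ioc 0 N).filter (fun n => n ≡ c [MOD (d * d')]), ν n := by
        intro c
        rw [mul_sum]
        apply sum_congr rfl
        intro n hn
        have hn2 : n % d = c % d := (mem_filter.1 hn).2.of_mul_right d'
        have hn3 : n % d' = c % d' := (mem_filter.1 hn).2.of_mul_left d
        rw [hg d hd n, hn2, hg d' hd' n, hn3]
        ring
      simp_rw [e1]
      calc _ ≤ ∑ c ∈ range (d * d'), ((g d (c % d) * g d' (c % d')) * ((N : ℝ) / ((d * d' : ℕ) : ℝ) * Q)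
            + E * (|g d (c % d)| * |g d' (c % d')|)) := by
            apply sum_le_sum
            intro c _
            have h3 := h2 d hd d' hd' h c
            set W := ∑ n ∈ (Ioc 0 N).filter (fun n => n ≡ c [MOD (d * d')]), ν n
            set w := g d (c % d) * g d' (c % d') with hw
            rw [← abs_mul, ← hw]
            have : w * (W - (N : ℝ) / ((d * d' : ℕ) : ℝ) * Q) ≤ |w| * E := by
              refine (le_abs_self _).trans ?_
              rw [abs_mul]
              gcongr
            linarith
        _ = _ := by
            rw [sum_add_distrib, ← sum_mul, ← mul_sum,
              crt_sum d d' hdp hdp' hc (fun a => g d a) (fun a => g d' a),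
              crt_sum d d' hdp hdp' hc (fun a => |g d a|) (fun a => |g d' a|), hg0 d hd]
            simp [hl1]
  have hexp : ∑ n ∈ Ioc 0 N, ν n * (∑ d ∈ S, (d : ℝ) * g d n) ^ 2
      = ∑ d ∈ S, ∑ d' ∈ S, (d : ℝ) * d' * ∑ n ∈ Ioc 0 N, ν n * (g d n * g d' n) := by
    have : ∀ n, ν n * (∑ d ∈ S, (d : ℝ) * g d n) ^ 2
        = ∑ d ∈ S, ∑ d' ∈ S, (d : ℝ) * d' * (ν n * (g d n * g d' n)) := by
      intro n
      rw [sq, sum_mul_sum, mul_sum]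
      apply sum_congr rfl
      intro d _
      rw [mul_sum]
      apply sum_congr rfl
      intro d' _
      ring
    simp_rw [this]
    rw [sum_comm]
    apply sum_congr rfl
    intro d _
    rw [sum_comm]
    apply sum_congr rfl
    intro d' _
    rw [mul_sum]
  rw [hexp]
  have hl1V : ∀ d, (l1 d) ^ 2 ≤ d * V d := by
    intro d
    have := sq_sum_le_card_mul_sum_sq (s := range d) (f := fun a => |g d a|)
    simpa [hl1, hV] using this
  have hRpos : ∀ d ∈ S, 0 ≤ Rm := fun d hd => le_trans (Nat.cast_nonneg d) (hR d hd)
  calc _ ≤ ∑ d ∈ S, ∑ d' ∈ S, ((if d = d' then (d : ℝ) * d' * (V d * ((N : ℝ) / d * Q + E)) else 0)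
        + E * ((d * l1 d) * (d' * l1 d'))) := by
        apply sum_le_sum
        intro d hd
        apply sum_le_sum
        intro d' hd'
        have h3 := mul_le_mul_of_nonneg_left (hpair d hd d' hd') (by positivity : (0 : ℝ) ≤ (d : ℝ) * d')
        refine h3.trans (le_of_eq ?_)
        split_ifs <;> ring
    _ = (∑ d ∈ S, (d : ℝ) * d * (V d * ((N : ℝ) / d * Q + E))) + E * (∑ d ∈ S, d * l1 d) ^ 2 := by
        simp_rw [sum_add_distrib]
        congr 1
        · apply sum_congr rfl
          intro d hd
          rw [sum_ite_eq, if_pos hd]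
        · rw [sq, sum_mul_sum, mul_sum]
          apply sum_congr rfl
          intro d _
          exact (mul_sum _ _ _).symm
    _ ≤ (∑ d ∈ S, (N * Q + E * Rm) * (d * V d)) + E * (∑ d ∈ S, S.card * Rm ^ 2 * (d * V d)) := by
        apply add_le_add
        · apply sum_le_sum
          intro d hd
          have hd0 : (0 : ℝ) < d := by exact_mod_cast (hS d hd).pos
          have : (d : ℝ) * d * (V d * ((N : ℝ) / d * Q + E)) = (N * Q + E * d) * (d * V d) := by
            field_simp
          rw [this]
          apply mul_le_mul_of_nonneg_right _ (mul_nonneg hd0.le (hV0 d))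
          have := mul_le_mul_of_nonneg_left (hR d hd) hE
          linarith
        · apply mul_le_mul_of_nonneg_left _ hE
          refine (sq_sum_le_card_mul_sum_sq (s := S) (f := fun d => (d : ℝ) * l1 d)).trans ?_
          rw [mul_sum]
          apply sum_le_sum
          intro d hd
          rw [mul_assoc]
          apply mul_le_mul_of_nonneg_left _ (Nat.cast_nonneg _)
          rw [mul_pow]
          have hd0 : (0 : ℝ) < d := by exact_mod_cast (hS d hd).pos
          have := hR d hd
          exact mul_le_mul (pow_le_pow_left₀ hd0.le this 2) (hl1V d) (sq_nonneg _) (sq_nonneg _)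
    _ = _ := by
        rw [← mul_sum, ← mul_sum]
        ring

/-- Discrepancy of `b` in residue classes. -/
noncomputable def gd (b : ℕ → ℝ) (N d n : ℕ) : ℝ :=
  if d ∣ n then 0 else ∑ m ∈ (Ioc 0 N).filter (fun m => m ≡ n [MOD d]), b m
    - (∑ m ∈ Ioc 0 N, b m) / ((d : ℝ) - 1)

noncomputable def Vd (b : ℕ → ℝ) (N d : ℕ) : ℝ := ∑ a ∈ range d, (gd b N d a) ^ 2

lemma gd_mod (b : ℕ → ℝ) (N d n : ℕ) : gd b N d n = gd b N d (n % d) := by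
  unfold gd
  have h : d ∣ n % d ↔ d ∣ n := Nat.dvd_mod_iff dvd_rfl
  have h2 : (Ioc 0 N).filter (fun m => m ≡ n [MOD d]) = (Ioc 0 N).filter (fun m => m ≡ n % d [MOD d]) := by
    apply filter_congr
    intro m _
    unfold Nat.ModEq
    rw [Nat.mod_mod]
  rw [h2]
  simp only [h]

lemma gd_sum (b : ℕ → ℝ) (N d : ℕ) (hd : d.Prime) (hb : ∀ n ∈ Ioc 0 N, b n ≠ 0 → ¬ d ∣ n) :
    ∑ a ∈ range d, gd b N d a = 0 := by
  have h := sum_by_class N d hd.pos b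
  have hr : range d = insert 0 ((range d).erase 0) := by
    rw [insert_erase]; simpa using hd.pos
  have h0 : ∑ n ∈ (Ioc 0 N).filter (fun n => n ≡ 0 [MOD d]), b n = 0 := by
    apply sum_eq_zero
    intro n hn
    rw [mem_filter] at hn
    by_contra hne
    exact hb n hn.1 hne ((Nat.modEq_zero_iff_dvd).1 hn.2)
  rw [hr, sum_insert (notMem_erase _ _)] at h ⊢
  rw [h0, zero_add] at h
  have : ∀ a ∈ (range d).erase 0, gd b N d a = ∑ m ∈ (Ioc 0 N).filter (fun m => m ≡ a [MOD d]), b m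
    - (∑ m ∈ Ioc 0 N, b m) / ((d : ℝ) - 1) := by
    intro a ha
    rw [mem_erase, mem_range] at ha
    unfold gd
    rw [if_neg (fun hda => absurd (Nat.le_of_dvd (Nat.pos_of_ne_zero ha.1) hda) (by omega))]
  rw [sum_congr rfl this, sum_sub_distrib, ← h, sum_const, card_erase_of_mem (by simpa using hd.pos),
    card_range]
  have hd1 : (d : ℝ) - 1 ≠ 0 := by
    have : (1 : ℝ) < d := by exact_mod_cast hd.one_lt
    linarith
  have : gd b N d 0 = 0 := by simp [gd]
  rw [this, nsmul_eq_mul, Nat.cast_sub hd.one_lt.le]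
  push_cast
  field_simp
  ring

lemma Vd_eq (b : ℕ → ℝ) (N d : ℕ) (hd : d.Prime) (hb : ∀ n ∈ Ioc 0 N, b n ≠ 0 → ¬ d ∣ n) :
    Vd b N d = ∑ m ∈ Ioc 0 N, b m * gd b N d m := by
  have h1 : ∀ a, (gd b N d a) ^ 2 = gd b N d a * (∑ m ∈ (Ioc 0 N).filter (fun m => m ≡ a [MOD d]), b m)
      - gd b N d a * ((∑ m ∈ Ioc 0 N, b m) / ((d : ℝ) - 1)) := by
    intro a
    by_cases h : d ∣ a
    · simp [gd, h]
    · rw [sq, ← mul_sub]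
      congr 1
      simp [gd, h]
  unfold Vd
  rw [sum_congr rfl (fun a _ => h1 a), sum_sub_distrib, ← sum_mul, gd_sum b N d hd hb, zero_mul, sub_zero,
    sum_by_class N d hd.pos]
  apply sum_congr rfl
  intro a _
  rw [mul_sum]
  apply sum_congr rfl
  intro m hm
  have : m % d = a % d := (mem_filter.1 hm).2
  rw [gd_mod b N d m, this, ← gd_mod, mul_comm]

lemma large_sieve (S : Finset ℕ) (hS : ∀ d ∈ S, d.Prime) (Rm : ℝ) (hR : ∀ d ∈ S, (d : ℝ) ≤ Rm) (hRm : 0 ≤ Rm) (N : ℕ)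
    (ν : ℕ → ℝ) (hν : ∀ n, 0 ≤ ν n) (Q E : ℝ) (hQ : 0 ≤ Q) (hE : 0 ≤ E)
    (h1 : ∀ d ∈ S, ∀ c, |∑ n ∈ (Ioc 0 N).filter (fun n => n ≡ c [MOD d]), ν n - (N : ℝ) / d * Q| ≤ E)
    (h2 : ∀ d ∈ S, ∀ d' ∈ S, d ≠ d' → ∀ c,
      |∑ n ∈ (Ioc 0 N).filter (fun n => n ≡ c [MOD (d * d')]), ν n - (N : ℝ) / ((d * d' : ℕ) : ℝ) * Q| ≤ E)
    (b : ℕ → ℝ) (hb : ∀ d ∈ S, ∀ n ∈ Ioc 0 N, b n ≠ 0 → ¬ d ∣ n)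
    (hb1 : ∀ n ∈ Ioc 0 N, b n ≠ 0 → 1 ≤ ν n) :
    ∑ d ∈ S, (d : ℝ) * Vd b N d
      ≤ (N * Q + E * Rm + E * S.card * Rm ^ 2) * ∑ n ∈ Ioc 0 N, (b n) ^ 2 := by
  set X := ∑ d ∈ S, (d : ℝ) * Vd b N d with hX
  set K := (N * Q + E * Rm + E * S.card * Rm ^ 2) with hK
  have hV0 : ∀ d, 0 ≤ Vd b N d := fun d => sum_nonneg (fun _ _ => sq_nonneg _)
  have hX0 : 0 ≤ X := sum_nonneg (fun d _ => mul_nonneg (Nat.cast_nonneg _) (hV0 d))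
  have hB0 : 0 ≤ ∑ n ∈ Ioc 0 N, (b n) ^ 2 := sum_nonneg (fun _ _ => sq_nonneg _)
  rcases S.eq_empty_or_nonempty with rfl | ⟨d0, hd0⟩
  · simp only [hX, sum_empty]; positivity
  have hK0 : 0 ≤ K := by positivity
  have hdual := ls_dual S hS Rm hR N ν hν Q E hE h1 h2 (gd b N) (fun d _ n => gd_mod b N d n)
    (fun d hd => gd_sum b N d (hS d hd) (hb d hd))
  have hXeq : X = ∑ n ∈ Ioc 0 N, b n * ∑ d ∈ S, (d : ℝ) * gd b N d n := by
    rw [hX, sum_congr rfl (fun d hd => by rw [Vd_eq b N d (hS d hd) (hb d hd), mul_sum]), sum_comm]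
    apply sum_congr rfl
    intro n _
    rw [mul_sum]
    apply sum_congr rfl
    intro d _
    ring
  set F : ℕ → ℝ := fun n => ∑ d ∈ S, (d : ℝ) * gd b N d n with hF
  have hsq : X ^ 2 ≤ (∑ n ∈ Ioc 0 N, (b n) ^ 2) * (K * X) := by
    have e : X = ∑ n ∈ Ioc 0 N, b n * (if b n = 0 then 0 else F n) := by
      rw [hXeq]
      apply sum_congr rfl
      intro n _
      split_ifs with h
      · simp [h]
      · rfl
    calc X ^ 2 ≤ (∑ n ∈ Ioc 0 N, (b n) ^ 2) * ∑ n ∈ Ioc 0 N, (if b n = 0 then 0 else F n) ^ 2 := by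
          rw [e]; exact sum_mul_sq_le_sq_mul_sq _ _ _
      _ ≤ _ := by
          apply mul_le_mul_of_nonneg_left _ hB0
          refine le_trans ?_ hdual
          apply sum_le_sum
          intro n hn
          split_ifs with h
          · simp only [ne_eq, OfNat.ofNat_ne_zero, not_false_eq_true, zero_pow]
            exact mul_nonneg (hν n) (sq_nonneg _)
          · have := hb1 n hn h
            have h3 := sq_nonneg (F n)
            show F n ^ 2 ≤ ν n * F n ^ 2
            nlinarith
  rcases hX0.eq_or_lt with h | h
  · rw [← h]; positivity
  · have : X * X ≤ (K * ∑ n ∈ Ioc 0 N, (b n) ^ 2) * X := by nlinarith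
    exact le_of_mul_le_mul_right this h

end LSP
end

section
open Finset
namespace LSP

def minv (d u : ℕ) : ℕ := ((u : ZMod d)⁻¹).val

lemma minv_lt (d u : ℕ) (hd : d.Prime) : minv d u < d := by
  haveI := Fact.mk hd
  exact ZMod.val_lt _

lemma minv_cast (d u : ℕ) (hd : d.Prime) : ((minv d u : ℕ) : ZMod d) = (u : ZMod d)⁻¹ := by
  haveI := Fact.mk hd
  unfold minv
  rw [ZMod.natCast_val, ZMod.cast_id]

lemma minv_mod (d u : ℕ) : minv d (u % d) = minv d u := by
  unfold minv
  rw [ZMod.natCast_mod]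

lemma minv_minv (d u : ℕ) (hd : d.Prime) (hu : u < d) : minv d (minv d u) = u := by
  haveI := Fact.mk hd
  have : minv d (minv d u) = (((minv d u : ℕ) : ZMod d)⁻¹).val := rfl
  rw [this, minv_cast d u hd, inv_inv, ZMod.val_natCast, Nat.mod_eq_of_lt hu]

lemma mul_modEq_one_iff (d i m : ℕ) (hd : d.Prime) (hi : ¬ d ∣ i) :
    i * m ≡ 1 [MOD d] ↔ m ≡ minv d i [MOD d] := by
  haveI := Fact.mk hd
  have hi' : (i : ZMod d) ≠ 0 := by
    rwa [Ne, ZMod.natCast_eq_zero_iff]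
  rw [← ZMod.natCast_eq_natCast_iff, ← ZMod.natCast_eq_natCast_iff, minv_cast d i hd]
  push_cast
  constructor
  · intro h
    exact (eq_inv_of_mul_eq_one_right h)
  · intro h
    rw [h, mul_inv_cancel₀ hi']

lemma minv_dvd (d i : ℕ) (hd : d.Prime) : d ∣ minv d i ↔ d ∣ i := by
  haveI := Fact.mk hd
  rw [← ZMod.natCast_eq_zero_iff, ← ZMod.natCast_eq_zero_iff, minv_cast d i hd, inv_eq_zero]

lemma sum_minv (d : ℕ) (hd : d.Prime) (f : ℕ → ℝ) :
    ∑ u ∈ range d, f (minv d u) = ∑ u ∈ range d, f u := by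
  refine sum_nbij' (minv d) (minv d) ?_ ?_ ?_ ?_ ?_
  · intro u _; exact mem_range.2 (minv_lt d u hd)
  · intro u _; exact mem_range.2 (minv_lt d u hd)
  · intro u hu; exact minv_minv d u hd (mem_range.1 hu)
  · intro u hu; exact minv_minv d u hd (mem_range.1 hu)
  · intro u _; rfl

/-- bilinear sum in the class one -/
noncomputable def Td (a b : ℕ → ℝ) (N M d : ℕ) : ℝ :=
  ∑ i ∈ Ioc 0 N, ∑ m ∈ (Ioc 0 M).filter (fun m => i * m ≡ 1 [MOD d]), a i * b m

lemma Td_le (a b : ℕ → ℝ) (N M d : ℕ) (hd : d.Prime) (ha : ∀ n ∈ Ioc 0 N, a n ≠ 0 → ¬ d ∣ n)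
    (hb : ∀ n ∈ Ioc 0 M, b n ≠ 0 → ¬ d ∣ n) :
    Td a b N M d ≤ (∑ n ∈ Ioc 0 N, a n) * (∑ n ∈ Ioc 0 M, b n) / ((d : ℝ) - 1)
      + √(Vd a N d) * √(Vd b M d) := by
  set A := ∑ n ∈ Ioc 0 N, a n with hA
  set B := ∑ n ∈ Ioc 0 M, b n with hB
  set h : ℕ → ℝ := fun u => gd b M d (minv d u) with hh
  have e1 : Td a b N M d = ∑ i ∈ Ioc 0 N, (a i * h i + a i * (B / ((d : ℝ) - 1))) := by
    unfold Td
    apply sum_congr rfl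
    intro i hi
    by_cases h0 : a i = 0
    · simp [h0]
    have hdi := ha i hi h0
    rw [← mul_sum, ← mul_add]
    congr 1
    simp only [hh, gd, minv_dvd d i hd, if_neg hdi, ← hB, sub_add_cancel]
    apply sum_congr _ (fun _ _ => rfl)
    apply filter_congr
    intro m _
    exact mul_modEq_one_iff d i m hd hdi
  have e2 : ∑ i ∈ Ioc 0 N, a i * h i = ∑ u ∈ range d, gd a N d u * h u := by
    rw [sum_by_class N d hd.pos]
    have : ∀ u ∈ range d, ∑ n ∈ (Ioc 0 N).filter (fun n => n ≡ u [MOD d]), a n * h n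
        = gd a N d u * h u + (A / ((d : ℝ) - 1)) * h u := by
      intro u _
      have e3 : ∑ n ∈ (Ioc 0 N).filter (fun n => n ≡ u [MOD d]), a n * h n
          = (∑ n ∈ (Ioc 0 N).filter (fun n => n ≡ u [MOD d]), a n) * h u := by
        rw [sum_mul]
        apply sum_congr rfl
        intro n hn
        have h3 : n % d = u % d := (mem_filter.1 hn).2
        simp only [hh]
        rw [← minv_mod d n, h3, minv_mod]
      rw [e3]
      by_cases hu : d ∣ u
      · have : h u = 0 := by simp [hh, gd, minv_dvd d u hd, hu]
        simp [this]
      · rw [← add_mul]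
        congr 1
        simp only [gd, if_neg hu, ← hA]
        ring
    rw [sum_congr rfl this, sum_add_distrib, ← mul_sum]
    have : ∑ u ∈ range d, h u = 0 := by
      rw [hh, sum_minv d hd (fun u => gd b M d u), gd_sum b M d hd hb]
    rw [this]; ring
  rw [e1, sum_add_distrib, e2, ← sum_mul, ← hA]
  have e4 : ∑ u ∈ range d, gd a N d u * h u ≤ √(Vd a N d) * √(Vd b M d) := by
    have := Real.sum_mul_le_sqrt_mul_sqrt (range d) (gd a N d) h
    have e5 : ∑ u ∈ range d, h u ^ 2 = Vd b M d := sum_minv d hd (fun u => (gd b M d u) ^ 2)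
    rw [e5] at this
    exact this
  have : A * (B / ((d : ℝ) - 1)) = A * B / ((d : ℝ) - 1) := by ring
  linarith

lemma bilin (S : Finset ℕ) (hS : ∀ d ∈ S, d.Prime) (a b : ℕ → ℝ) (N M : ℕ)
    (ha : ∀ d ∈ S, ∀ n ∈ Ioc 0 N, a n ≠ 0 → ¬ d ∣ n)
    (hb : ∀ d ∈ S, ∀ n ∈ Ioc 0 M, b n ≠ 0 → ¬ d ∣ n) (X Y : ℝ) (hX0 : 0 ≤ X) (hY0 : 0 ≤ Y)
    (hX : ∑ d ∈ S, (d : ℝ) * Vd a N d ≤ X ^ 2) (hY : ∑ d ∈ S, (d : ℝ) * Vd b M d ≤ Y ^ 2) :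
    ∑ d ∈ S, ((d : ℝ) - 1) * Td a b N M d
      ≤ S.card * ((∑ n ∈ Ioc 0 N, a n) * (∑ n ∈ Ioc 0 M, b n)) + X * Y := by
  set A := ∑ n ∈ Ioc 0 N, a n with hA
  set B := ∑ n ∈ Ioc 0 M, b n with hB
  have hV0 : ∀ b N d, 0 ≤ Vd b N d := fun b N d => sum_nonneg (fun _ _ => sq_nonneg _)
  calc _ ≤ ∑ d ∈ S, (A * B + √(d * Vd a N d) * √(d * Vd b M d)) := by
        apply sum_le_sum
        intro d hd
        have h1 := Td_le a b N M d (hS d hd) (ha d hd) (hb d hd)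
        have hd1 : (1 : ℝ) < d := by exact_mod_cast (hS d hd).one_lt
        have h2 := mul_le_mul_of_nonneg_left h1 (by linarith : (0 : ℝ) ≤ (d : ℝ) - 1)
        refine h2.trans ?_
        rw [← hA, ← hB, mul_add]
        apply add_le_add
        · rw [mul_div_cancel₀ _ (by linarith)]
        · rw [Real.sqrt_mul (by linarith), Real.sqrt_mul (by linarith)]
          have h3 : √(d : ℝ) * √(Vd a N d) * (√(d : ℝ) * √(Vd b M d)) = d * (√(Vd a N d) * √(Vd b M d)) := by
            have := Real.mul_self_sqrt (by linarith : (0 : ℝ) ≤ d)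
            calc _ = (√(d : ℝ) * √(d : ℝ)) * (√(Vd a N d) * √(Vd b M d)) := by ring
              _ = _ := by rw [this]
          rw [h3]
          apply mul_le_mul_of_nonneg_right (by linarith) (by positivity)
    _ = S.card * (A * B) + ∑ d ∈ S, √(d * Vd a N d) * √(d * Vd b M d) := by
        rw [sum_add_distrib, sum_const, nsmul_eq_mul]
    _ ≤ _ := by
        gcongr
        have h := Real.sum_mul_le_sqrt_mul_sqrt S (fun d => √(d * Vd a N d)) (fun d => √(d * Vd b M d))
        refine h.trans ?_
        apply mul_le_mul _ _ (Real.sqrt_nonneg _) hX0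
        · apply Real.sqrt_le_iff.2 ⟨hX0, ?_⟩
          refine le_trans (le_of_eq ?_) hX
          apply sum_congr rfl
          intro d _
          exact Real.sq_sqrt (mul_nonneg (Nat.cast_nonneg _) (hV0 _ _ _))
        · apply Real.sqrt_le_iff.2 ⟨hY0, ?_⟩
          refine le_trans (le_of_eq ?_) hY
          apply sum_congr rfl
          intro d _
          exact Real.sq_sqrt (mul_nonneg (Nat.cast_nonneg _) (hV0 _ _ _))

end LSP
end

section
open Finset
namespace LSP

/-- `n` has no prime factor below `z`. -/
def rough (z n : ℕ) : Prop := Nat.Coprime n (PS (Nat.primesBelow z))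

noncomputable instance (z : ℕ) : DecidablePred (rough z) := fun n => by unfold rough; infer_instance

lemma rough_iff (z n : ℕ) : rough z n ↔ ∀ p, p.Prime → p < z → ¬ p ∣ n := by
  constructor
  · intro h p hp hpz hpn
    have h2 : p ∣ PS (Nat.primesBelow z) := dvd_prod_of_mem _ (Nat.mem_primesBelow.2 ⟨hpz, hp⟩)
    exact hp.one_lt.ne' (Nat.eq_one_of_dvd_coprimes h hpn h2)
  · intro h
    apply Nat.Coprime.prod_right
    intro p hp
    rw [Nat.mem_primesBelow] at hp
    exact ((Nat.Prime.coprime_iff_not_dvd hp.2).2 (h p hp.2 hp.1)).symm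

lemma rough_mono {y z n : ℕ} (h : y ≤ z) (hn : rough z n) : rough y n := by
  rw [rough_iff] at *
  exact fun p hp hpy => hn p hp (by omega)

lemma rough_of_dvd {z m n : ℕ} (h : m ∣ n) (hn : rough z n) : rough z m := by
  rw [rough_iff] at *
  exact fun p hp hpy hpm => hn p hp hpy (hpm.trans h)

lemma rough_mul {z m n : ℕ} (hm : rough z m) (hn : rough z n) : rough z (m * n) := by
  unfold rough at *
  exact Nat.Coprime.mul_left hm hn

lemma rough_ge {z n : ℕ} (h : rough z n) (hn : 2 ≤ n) : z ≤ n := by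
  rw [rough_iff] at h
  by_contra hlt
  push Not at hlt
  exact h n.minFac (Nat.minFac_prime (by omega)) (lt_of_le_of_lt (Nat.minFac_le (by omega)) hlt) (Nat.minFac_dvd n)

lemma rough_prime {z p : ℕ} (hp : p.Prime) (h : z ≤ p) : rough z p := by
  rw [rough_iff]
  intro q hq hqz hqp
  have := (Nat.prime_dvd_prime_iff_eq hq hp).1 hqp
  omega

lemma rough_count (z a b : ℕ) (hz : 2 ≤ z) (hab : a ≤ b) :
    (((Ioc a b).filter (rough z)).card : ℝ) ≤ 16 * ((b : ℝ) - a) / Real.log z + (z : ℝ) ^ 4 := by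
  have h := sieve_upper z 1 a b 0 ∅ hz (by simp) (by simp) one_pos hab (Nat.coprime_one_left _)
  simp only [sdiff_empty, Nat.cast_one, one_mul] at h
  refine le_trans (le_of_eq ?_) h
  unfold Sc
  congr 2
  apply filter_congr
  intro n _
  simp [rough, Nat.modEq_one]

lemma ls_rough (S : Finset ℕ) (hS : ∀ d ∈ S, d.Prime) (hS2 : ∑ q ∈ S, 1 / ((q : ℝ) - 1) ≤ 2)
    (y z N : ℕ) (hy : 2 ≤ y) (hSy : ∀ d ∈ S, d ≤ y) (hyz : y < z) (hN : y ^ 10 ≤ N)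
    (b : ℕ → ℝ) (hb : ∀ n ∈ Ioc 0 N, b n ≠ 0 → rough z n) (Mx : ℝ) (hMx : ∀ n ∈ Ioc 0 N, |b n| ≤ Mx)
    (hM0 : 0 ≤ Mx) :
    ∑ d ∈ S, (d : ℝ) * Vd b N d ≤ (18 * N / Real.log y * Mx) ^ 2 := by
  set P := PS (Nat.primesBelow y \ S) with hP
  have hpr : ∀ p ∈ Nat.primesBelow y \ S, p.Prime :=
    fun p hp => Nat.prime_of_mem_primesBelow (mem_sdiff.1 hp).1
  have hsq : Squarefree P := PS_sqf _ hpr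
  have hcop : ∀ d ∈ S, Nat.Coprime d P := fun d hd =>
    PS_coprime _ hpr d (hS d hd) (fun h => (mem_sdiff.1 h).2 hd)
  have hy1 : (1 : ℝ) < y := by exact_mod_cast (by omega : 1 < y)
  have hlog : 0 < Real.log y := Real.log_pos hy1
  have hlogy : Real.log y ≤ y := (Real.log_le_sub_one_of_pos (by linarith)).trans (by linarith)
  have hG := G_lower y y S (by omega) le_rfl hS hS2
  rw [← hP] at hG
  have hGpos : 0 < Gf P y := by linarith
  have hcard : (S.card : ℝ) ≤ y := by
    have : S ⊆ Ioc 0 y := fun d hd => mem_Ioc.2 ⟨(hS d hd).pos, hSy d hd⟩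
    have := card_le_card this
    rw [Nat.card_Ioc] at this
    exact_mod_cast this
  have hrP : ∀ n, rough z n → Nat.Coprime n P := by
    intro n hn
    have := rough_mono hyz.le hn
    apply Nat.Coprime.coprime_dvd_right _ this
    exact prod_dvd_prod_of_subset _ _ _ sdiff_subset
  have hls := large_sieve S hS y (fun d hd => by exact_mod_cast hSy d hd) (by linarith) N (nu P y)
    (nu_nonneg P y) (1 / Gf P y) ((y : ℝ) ^ 4) (by positivity) (by positivity)
    (fun d hd c => by
      have := nu_class P y d 0 N c hsq (by omega) (hS d hd).pos (Nat.zero_le _) (hcop d hd)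
      simpa using this)
    (fun d hd d' hd' _ c => by
      have := nu_class P y (d * d') 0 N c hsq (by omega) (Nat.mul_pos (hS d hd).pos (hS d' hd').pos)
        (Nat.zero_le _) ((hcop d hd).mul_left (hcop d' hd'))
      simpa using this)
    b
    (fun d hd n hn h0 => (rough_iff z n).1 (hb n hn h0) d (hS d hd) (lt_of_le_of_lt (hSy d hd) hyz))
    (fun n hn h0 => by rw [nu_coprime P y n hsq.ne_zero (by omega) (hrP n (hb n hn h0))])
  have hNy : (y : ℝ) ^ 10 ≤ N := by exact_mod_cast hN
  have hpw : ∀ k : ℕ, k ≤ 9 → (y : ℝ) ^ k ≤ N / Real.log y := by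
    intro k hk
    rw [le_div_iff₀ hlog]
    calc (y : ℝ) ^ k * Real.log y ≤ (y : ℝ) ^ 9 * y := by gcongr; exact hy1.le
      _ ≤ N := by rw [← pow_succ]; exact hNy
  have hK : N * (1 / Gf P y) + (y : ℝ) ^ 4 * y + (y : ℝ) ^ 4 * S.card * (y : ℝ) ^ 2 ≤ 18 * N / Real.log y := by
    have h1 : (N : ℝ) * (1 / Gf P y) ≤ 16 * (N / Real.log y) := by
      rw [mul_one_div, div_le_iff₀ hGpos]
      calc (N : ℝ) = N / Real.log y * Real.log y := by field_simp
        _ ≤ N / Real.log y * (16 * Gf P y) := by gcongr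
        _ = _ := by ring
    have h2 := hpw 5 (by norm_num)
    have h3 := hpw 7 (by norm_num)
    have h4 : (y : ℝ) ^ 4 * S.card * (y : ℝ) ^ 2 ≤ (y : ℝ) ^ 4 * y * (y : ℝ) ^ 2 := by gcongr
    have h5 : 18 * (N : ℝ) / Real.log y = 18 * (N / Real.log y) := by ring
    rw [h5]
    nlinarith
  have hB : ∑ n ∈ Ioc 0 N, (b n) ^ 2 ≤ Mx ^ 2 * (18 * N / Real.log y) := by
    have hle : ∑ n ∈ Ioc 0 N, (b n) ^ 2 ≤ ∑ n ∈ (Ioc 0 N).filter (rough y), Mx ^ 2 := by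
      rw [sum_filter]
      apply sum_le_sum
      intro n hn
      split_ifs with h
      · rw [← sq_abs]
        exact pow_le_pow_left₀ (abs_nonneg _) (hMx n hn) 2
      · by_cases h0 : b n = 0
        · simp [h0]
        · exact absurd (rough_mono hyz.le (hb n hn h0)) h
    rw [sum_const, nsmul_eq_mul, mul_comm] at hle
    refine hle.trans ?_
    apply mul_le_mul_of_nonneg_left _ (sq_nonneg _)
    have := rough_count y 0 N hy (Nat.zero_le _)
    have h2 := hpw 4 (by norm_num)
    have h5 : 18 * (N : ℝ) / Real.log y = 18 * (N / Real.log y) := by ring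
    have h6 : 16 * ((N : ℝ) - (0 : ℕ)) / Real.log y = 16 * (N / Real.log y) := by push_cast; ring
    rw [h6] at this
    have h7 : 0 ≤ (N : ℝ) / Real.log y := by positivity
    rw [h5]
    linarith
  calc _ ≤ _ := hls
    _ ≤ (18 * N / Real.log y) * (Mx ^ 2 * (18 * N / Real.log y)) := by
        apply mul_le_mul hK hB (sum_nonneg (fun _ _ => sq_nonneg _)) (by positivity)
    _ = _ := by ring

end LSP
end

section
open Finset ArithmeticFunction
namespace LSP

noncomputable def Wp (z : ℕ) (i m : ℕ) : ℝ :=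
  if rough z i ∧ rough z m ∧ 2 ≤ i ∧ 2 ≤ m then vonMangoldt i else 0

noncomputable def Dn (z n : ℕ) : ℝ := if rough z n then Real.log n - vonMangoldt n else 0

lemma Wp_nonneg (z i m : ℕ) : 0 ≤ Wp z i m := by
  unfold Wp; split_ifs
  · exact vonMangoldt_nonneg
  · exact le_rfl

lemma Dn_eq (z n : ℕ) (hn : 1 ≤ n) : Dn z n = ∑ p ∈ n.divisorsAntidiagonal, Wp z p.1 p.2 := by
  unfold Dn
  split_ifs with h
  · have h1 : ∑ p ∈ n.divisorsAntidiagonal, vonMangoldt p.1 = Real.log n := by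
      rw [Nat.sum_divisorsAntidiagonal (f := fun i _ => vonMangoldt i), vonMangoldt_sum]
    have hmem : (n, 1) ∈ n.divisorsAntidiagonal := by
      rw [Nat.mem_divisorsAntidiagonal]; exact ⟨mul_one n, by omega⟩
    rw [← h1, ← sum_erase_add _ _ hmem, ← sum_erase_add _ (fun p : ℕ × ℕ => Wp z p.1 p.2) hmem]
    have h2 : Wp z n 1 = 0 := by simp [Wp]
    simp only [h2]
    rw [add_sub_cancel_right, add_zero]
    apply sum_congr rfl
    rintro ⟨i, m⟩ hp
    rw [mem_erase, Nat.mem_divisorsAntidiagonal] at hp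
    obtain ⟨hne, him, hn0⟩ := hp
    simp only at him
    simp only [Wp]
    by_cases hi : i = 1
    · subst hi; simp
    have hi0 : i ≠ 0 := by rintro rfl; simp at him; omega
    have hm0 : m ≠ 0 := by rintro rfl; simp at him; omega
    have hm1 : m ≠ 1 := by
      rintro rfl
      apply hne
      simp at him
      simp [him]
    rw [if_pos]
    exact ⟨rough_of_dvd ⟨m, him.symm⟩ h, rough_of_dvd ⟨i, by rw [mul_comm]; exact him.symm⟩ h, by omega, by omega⟩
  · symm
    apply sum_eq_zero
    rintro ⟨i, m⟩ hp
    rw [Nat.mem_divisorsAntidiagonal] at hp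
    unfold Wp
    rw [if_neg]
    rintro ⟨h1, h2, -⟩
    apply h
    rw [← hp.1]
    exact rough_mul h1 h2

lemma Dn_nonneg (z n : ℕ) : 0 ≤ Dn z n := by
  rcases Nat.eq_zero_or_pos n with rfl | h
  · simp [Dn]
  · rw [Dn_eq z n h]
    exact sum_nonneg (fun _ _ => Wp_nonneg _ _ _)

lemma sum_divAnti (s : Finset ℕ) (M : ℕ) (hs : s ⊆ Ioc 0 M) (f : ℕ × ℕ → ℝ) :
    ∑ n ∈ s, ∑ p ∈ n.divisorsAntidiagonal, f p
      = ∑ p ∈ (Ioc 0 M ×ˢ Ioc 0 M).filter (fun p => p.1 * p.2 ∈ s), f p := by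
  rw [← sum_fiberwise_of_maps_to (g := fun p : ℕ × ℕ => p.1 * p.2) (t := s)
    (fun p hp => (mem_filter.1 hp).2)]
  apply sum_congr rfl
  intro n hn
  apply sum_congr _ (fun _ _ => rfl)
  ext ⟨i, m⟩
  have hnM := mem_Ioc.1 (hs hn)
  simp only [Nat.mem_divisorsAntidiagonal, mem_filter, mem_product, mem_Ioc]
  constructor
  · rintro ⟨h1, h2⟩
    have hi0 : 0 < i := Nat.pos_of_ne_zero (by rintro rfl; simp at h1; omega)
    have hm0 : 0 < m := Nat.pos_of_ne_zero (by rintro rfl; simp at h1; omega)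
    have hi : i ≤ n := by rw [← h1]; exact Nat.le_mul_of_pos_right _ hm0
    have hm : m ≤ n := by rw [← h1]; exact Nat.le_mul_of_pos_left _ hi0
    exact ⟨⟨⟨⟨hi0, by omega⟩, ⟨hm0, by omega⟩⟩, by rw [h1]; exact hn⟩, h1⟩
  · rintro ⟨_, h1⟩
    exact ⟨h1, by omega⟩

noncomputable def bx (η : ℝ) (n : ℕ) : ℕ := ⌊Real.log n / η⌋₊

lemma bx_le (η : ℝ) (hη : 0 < η) (n : ℕ) : η * bx η n ≤ Real.log n := by
  have h := Nat.floor_le (div_nonneg (Real.log_natCast_nonneg n) hη.le)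
  rw [le_div_iff₀ hη] at h
  unfold bx; linarith

lemma bx_lt (η : ℝ) (hη : 0 < η) (n : ℕ) : Real.log n < η * (bx η n + 1) := by
  have h := Nat.lt_floor_add_one (Real.log n / η)
  rw [div_lt_iff₀ hη] at h
  unfold bx; linarith

noncomputable def Nb (η : ℝ) (u : ℕ) : ℕ := ⌊Real.exp (η * (u + 1))⌋₊

lemma le_Nb (η : ℝ) (hη : 0 < η) (n : ℕ) (hn : 0 < n) : n ≤ Nb η (bx η n) := by
  apply Nat.le_floor
  have h0 : (0 : ℝ) < n := by exact_mod_cast hn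
  rw [← Real.exp_log h0]
  apply Real.exp_le_exp.2
  exact (bx_lt η hη n).le

lemma Nb_le (η : ℝ) (u : ℕ) : (Nb η u : ℝ) ≤ Real.exp (η * (u + 1)) :=
  Nat.floor_le (Real.exp_pos _).le

noncomputable def al (z : ℕ) (η : ℝ) (u n : ℕ) : ℝ :=
  if rough z n ∧ 2 ≤ n ∧ bx η n = u then vonMangoldt n else 0

noncomputable def be (z : ℕ) (η : ℝ) (u n : ℕ) : ℝ :=
  if rough z n ∧ 2 ≤ n ∧ bx η n = u then 1 else 0

lemma Td_zero_left (a b : ℕ → ℝ) (N M d : ℕ) (h : ∀ n ∈ Ioc 0 N, a n = 0) : Td a b N M d = 0 := by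
  unfold Td
  apply sum_eq_zero
  intro i hi
  apply sum_eq_zero
  intro m _
  rw [h i hi, zero_mul]

lemma Td_zero_right (a b : ℕ → ℝ) (N M d : ℕ) (h : ∀ n ∈ Ioc 0 M, b n = 0) : Td a b N M d = 0 := by
  unfold Td
  apply sum_eq_zero
  intro i hi
  apply sum_eq_zero
  intro m hm
  rw [h m (mem_filter.1 hm).1, mul_zero]

lemma pair_bound (S : Finset ℕ) (hS : ∀ d ∈ S, d.Prime) (hS2 : ∑ q ∈ S, 1 / ((q : ℝ) - 1) ≤ 2)
    (y z : ℕ) (hy : 2 ≤ y) (hSy : ∀ d ∈ S, d ≤ y) (hyz : y < z) (hz : y ^ 10 ≤ z)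
    (η : ℝ) (hη : 0 < η) (T u v : ℕ) (huv : u + v ≤ T) :
    ∑ d ∈ S, ((d : ℝ) - 1) * Td (al z η u) (be z η v) (Nb η u) (Nb η v) d
      ≤ S.card * ((∑ n ∈ Ioc 0 (Nb η u), al z η u n) * (∑ n ∈ Ioc 0 (Nb η v), be z η v n))
        + (18 / Real.log y) ^ 2 * (Real.exp (η * (T + 2)) * (η * (T + 1))) := by
  have hy1 : (1 : ℝ) < y := by exact_mod_cast (by omega : 1 < y)
  have hlog : 0 < Real.log y := Real.log_pos hy1
  have hal : ∀ n, 0 ≤ al z η u n := by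
    intro n; unfold al; split_ifs
    · exact vonMangoldt_nonneg
    · exact le_rfl
  have hbe : ∀ n, 0 ≤ be z η v n := by
    intro n; unfold be; split_ifs <;> norm_num
  have hZ : 0 ≤ (18 / Real.log y) ^ 2 * (Real.exp (η * (T + 2)) * (η * (T + 1))) := by positivity
  have hmain : 0 ≤ (S.card : ℝ) * ((∑ n ∈ Ioc 0 (Nb η u), al z η u n) * (∑ n ∈ Ioc 0 (Nb η v), be z η v n)) :=
    mul_nonneg (Nat.cast_nonneg _) (mul_nonneg (sum_nonneg (fun _ _ => hal _)) (sum_nonneg (fun _ _ => hbe _)))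
  have hral : ∀ n, al z η u n ≠ 0 → rough z n ∧ 2 ≤ n ∧ bx η n = u := by
    intro n h
    by_contra hc
    exact h (by unfold al; rw [if_neg hc])
  have hrbe : ∀ n, be z η v n ≠ 0 → rough z n ∧ 2 ≤ n ∧ bx η n = v := by
    intro n h
    by_contra hc
    exact h (by unfold be; rw [if_neg hc])
  have hSz : ∀ n, rough z n → ∀ d ∈ S, ¬ d ∣ n := fun n hn d hd =>
    (rough_iff z n).1 hn d (hS d hd) (lt_of_le_of_lt (hSy d hd) hyz)
  by_cases hu : Nb η u < y ^ 10
  · have : ∀ n ∈ Ioc 0 (Nb η u), al z η u n = 0 := by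
      intro n hn
      by_contra h
      obtain ⟨h1, h2, -⟩ := hral n h
      have := rough_ge h1 h2
      have := (mem_Ioc.1 hn).2
      omega
    rw [sum_eq_zero (fun d _ => by rw [Td_zero_left _ _ _ _ _ this, mul_zero])]
    linarith
  by_cases hv : Nb η v < y ^ 10
  · have : ∀ n ∈ Ioc 0 (Nb η v), be z η v n = 0 := by
      intro n hn
      by_contra h
      obtain ⟨h1, h2, -⟩ := hrbe n h
      have := rough_ge h1 h2
      have := (mem_Ioc.1 hn).2
      omega
    rw [sum_eq_zero (fun d _ => by rw [Td_zero_right _ _ _ _ _ this, mul_zero])]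
    linarith
  push Not at hu hv
  have hT : η * ((u : ℝ) + 1) ≤ η * (T + 1) := by
    have : (u : ℝ) ≤ T := by exact_mod_cast (by omega : u ≤ T)
    gcongr
  have hX := ls_rough S hS hS2 y z (Nb η u) hy hSy hyz hu (al z η u) (fun n _ h => (hral n h).1)
    (η * (T + 1)) (fun n _ => by
      rw [abs_of_nonneg (hal n)]
      unfold al
      split_ifs with h
      · refine vonMangoldt_le_log.trans ?_
        have := bx_lt η hη n
        rw [h.2.2] at this
        linarith
      · positivity) (by positivity)
  have hY := ls_rough S hS hS2 y z (Nb η v) hy hSy hyz hv (be z η v) (fun n _ h => (hrbe n h).1)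
    1 (fun n _ => by
      rw [abs_of_nonneg (hbe n)]
      unfold be
      split_ifs <;> norm_num) (by norm_num)
  have hb := bilin S hS (al z η u) (be z η v) (Nb η u) (Nb η v)
    (fun d hd n _ h => hSz n (hral n h).1 d hd) (fun d hd n _ h => hSz n (hrbe n h).1 d hd)
    (18 * (Nb η u) / Real.log y * (η * (T + 1))) (18 * (Nb η v) / Real.log y * 1) (by positivity) (by positivity) hX hY
  refine hb.trans (add_le_add le_rfl ?_)
  have h1 := Nb_le η u
  have h2 := Nb_le η v
  have h3 : (Nb η u : ℝ) * Nb η v ≤ Real.exp (η * (T + 2)) := by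
    calc _ ≤ Real.exp (η * (u + 1)) * Real.exp (η * (v + 1)) := by gcongr
      _ = Real.exp (η * ((u + v : ℕ) + 2)) := by rw [← Real.exp_add]; push_cast; ring_nf
      _ ≤ _ := by
        apply Real.exp_le_exp.2
        have : ((u + v : ℕ) : ℝ) ≤ T := by exact_mod_cast huv
        gcongr
  calc _ = (18 / Real.log y) ^ 2 * ((Nb η u : ℝ) * Nb η v * (η * (T + 1))) := by ring
    _ ≤ _ := by gcongr

end LSP
end

section
open Finset ArithmeticFunction
namespace LSP

lemma Nb_mono (η : ℝ) (hη : 0 < η) {u v : ℕ} (h : u ≤ v) : Nb η u ≤ Nb η v := by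
  apply Nat.floor_mono
  apply Real.exp_le_exp.2
  have : (u : ℝ) ≤ v := by exact_mod_cast h
  gcongr

lemma Td_box (z : ℕ) (η : ℝ) (hη : 0 < η) (u v M d : ℕ) (hu : Nb η u ≤ M) (hv : Nb η v ≤ M) :
    Td (al z η u) (be z η v) (Nb η u) (Nb η v) d
      = ∑ p ∈ (Ioc 0 M ×ˢ Ioc 0 M).filter (fun p => p.1 * p.2 ≡ 1 [MOD d]),
          if (u, v) = (bx η p.1, bx η p.2) then Wp z p.1 p.2 else 0 := by
  have hout : ∀ u n, n ∈ Ioc 0 M → n ∉ Ioc 0 (Nb η u) → bx η n ≠ u := by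
    intro u n hn hn2 h
    apply hn2
    rw [mem_Ioc] at hn ⊢
    refine ⟨hn.1, ?_⟩
    rw [← h]
    exact le_Nb η hη n hn.1
  unfold Td
  rw [sum_filter, sum_product]
  have hsub : ∀ u, Nb η u ≤ M → Ioc 0 (Nb η u) ⊆ Ioc 0 M := fun u h => Ioc_subset_Ioc_right h
  rw [sum_subset (hsub u hu)]
  · apply sum_congr rfl
    intro i hi
    rw [sum_filter, sum_subset (hsub v hv)]
    · apply sum_congr rfl
      intro m hm
      simp only
      split_ifs with h1 h2 h2
      · simp only [Prod.mk.injEq] at h2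
        unfold al be Wp
        by_cases hc : rough z i ∧ rough z m ∧ 2 ≤ i ∧ 2 ≤ m
        · obtain ⟨a1, a2, a3, a4⟩ := hc
          simp [a1, a2, a3, a4, h2.1, h2.2]
        · rw [if_neg hc]
          by_cases c1 : rough z i ∧ 2 ≤ i ∧ bx η i = u
          · rw [if_neg (c := rough z m ∧ 2 ≤ m ∧ bx η m = v), mul_zero]
            rintro ⟨b1, b2, -⟩
            exact hc ⟨c1.1, b1, c1.2.1, b2⟩
          · rw [if_neg c1, zero_mul]
      · unfold al be
        by_cases c1 : rough z i ∧ 2 ≤ i ∧ bx η i = u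
        · rw [if_neg (c := rough z m ∧ 2 ≤ m ∧ bx η m = v), mul_zero]
          rintro ⟨b1, b2, b3⟩
          exact h2 (by rw [c1.2.2, b3])
        · rw [if_neg c1, zero_mul]
      · rfl
    · intro m hm hm2
      have := hout v m hm hm2
      simp [be, this]
  · intro i hi hi2
    have := hout u i hi hi2
    apply sum_eq_zero
    intro m _
    simp [al, this]

def prs (T0 T1 : ℕ) : Finset (ℕ × ℕ) :=
  (range (T1 + 1) ×ˢ range (T1 + 1)).filter (fun q => T0 ≤ q.1 + q.2 ∧ q.1 + q.2 ≤ T1)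

lemma prs_card (T0 T1 : ℕ) (h : T0 ≤ T1) : (prs T0 T1).card ≤ (T1 + 1) * (T1 + 1 - T0) := by
  have : (prs T0 T1).card ≤ (range (T1 + 1) ×ˢ Ico T0 (T1 + 1)).card := by
    apply card_le_card_of_injOn (fun q => (q.1, q.1 + q.2))
    · rintro ⟨a, b⟩ hq
      simp only [prs, coe_filter, mem_product, mem_range, Set.mem_setOf_eq] at hq
      simp only [coe_product, Set.mem_prod, coe_range, coe_Ico, Set.mem_Iio, Set.mem_Ico]
      omega
    · rintro ⟨a, b⟩ _ ⟨a', b'⟩ _ h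
      simp only [Prod.mk.injEq] at h ⊢
      omega
  rw [card_product, card_range, Nat.card_Ico] at this
  exact this

lemma prs_sum (z : ℕ) (η : ℝ) (hη : 0 < η) (T0 T1 M d : ℕ) (hM : Nb η T1 ≤ M) :
    ∑ q ∈ prs T0 T1, Td (al z η q.1) (be z η q.2) (Nb η q.1) (Nb η q.2) d
      = ∑ p ∈ (Ioc 0 M ×ˢ Ioc 0 M).filter (fun p => p.1 * p.2 ≡ 1 [MOD d] ∧
          T0 ≤ bx η p.1 + bx η p.2 ∧ bx η p.1 + bx η p.2 ≤ T1), Wp z p.1 p.2 := by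
  have h1 : ∀ q ∈ prs T0 T1, Td (al z η q.1) (be z η q.2) (Nb η q.1) (Nb η q.2) d
      = ∑ p ∈ (Ioc 0 M ×ˢ Ioc 0 M).filter (fun p => p.1 * p.2 ≡ 1 [MOD d]),
          if q = (bx η p.1, bx η p.2) then Wp z p.1 p.2 else 0 := by
    rintro ⟨u, v⟩ hq
    simp only [prs, mem_filter] at hq
    exact Td_box z η hη u v M d ((Nb_mono η hη (by omega)).trans hM) ((Nb_mono η hη (by omega)).trans hM)
  rw [sum_congr rfl h1, sum_comm, ← filter_filter, sum_filter (p := fun p : ℕ × ℕ =>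
    T0 ≤ bx η p.1 + bx η p.2 ∧ bx η p.1 + bx η p.2 ≤ T1)]
  apply sum_congr rfl
  intro p _
  rw [sum_ite_eq']
  congr 1
  simp only [prs, mem_filter, mem_product, mem_range, eq_iff_iff]
  omega

lemma prs_global (z : ℕ) (η : ℝ) (q : ℕ × ℕ) :
    (∑ n ∈ Ioc 0 (Nb η q.1), al z η q.1 n) * (∑ n ∈ Ioc 0 (Nb η q.2), be z η q.2 n)
      = Td (al z η q.1) (be z η q.2) (Nb η q.1) (Nb η q.2) 1 := by
  unfold Td
  rw [sum_mul_sum]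
  apply sum_congr rfl
  intro i _
  rw [filter_true_of_mem]
  intro m _
  exact Nat.modEq_one

set_option maxHeartbeats 1600000 in
lemma box_main (S : Finset ℕ) (hS : ∀ d ∈ S, d.Prime) (hS2 : ∑ q ∈ S, 1 / ((q : ℝ) - 1) ≤ 2)
    (y z : ℕ) (hy : 2 ≤ y) (hSy : ∀ d ∈ S, d ≤ y) (hyz : y < z) (hz : y ^ 10 ≤ z)
    (η : ℝ) (hη : 0 < η) (hη1 : η ≤ 1 / 4) (x a b : ℕ) (hx : 1 ≤ x)
    (ha : (a : ℝ) ≤ x * Real.exp (-2 * η)) (hb : 4 * x * Real.exp (2 * η) ≤ b) :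
    ∑ d ∈ S, ((d : ℝ) - 1) * ∑ n ∈ (Ioc x (4 * x)).filter (fun n => n ≡ 1 [MOD d]), Dn z n
      ≤ S.card * ∑ n ∈ Ioc a b, Dn z n
        + 1620 * b * (Real.log (8 * x) / Real.log y) ^ 2 / η ^ 2 := by
  have hx0 : (0 : ℝ) < x := by exact_mod_cast hx
  have hy1 : (1 : ℝ) < y := by exact_mod_cast (by omega : 1 < y)
  have hlog : 0 < Real.log y := Real.log_pos hy1
  have hlx : 0 ≤ Real.log x := Real.log_natCast_nonneg x
  have hl4 : Real.log 4 = 2 * Real.log 2 := by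
    rw [show (4 : ℝ) = 2 ^ 2 by norm_num, Real.log_pow]; norm_num
  have hl8 : Real.log 8 = 3 * Real.log 2 := by
    rw [show (8 : ℝ) = 2 ^ 3 by norm_num, Real.log_pow]; norm_num
  have hl2a := Real.log_two_gt_d9
  have hl2b := Real.log_two_lt_d9
  have hlog4x : Real.log (4 * x) = Real.log 4 + Real.log x := Real.log_mul (by norm_num) hx0.ne'
  have hlog8x : Real.log (8 * x) = Real.log 8 + Real.log x := Real.log_mul (by norm_num) hx0.ne'
  set T1 := ⌊Real.log (4 * x) / η⌋₊ with hT1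
  set T0 := ⌊Real.log x / η⌋₊ - 1 with hT0
  set M := b + Nb η T1 with hM
  have hT1a : η * T1 ≤ Real.log (4 * x) := by
    have h := Nat.floor_le (div_nonneg (by rw [hlog4x]; linarith : 0 ≤ Real.log (4 * x)) hη.le)
    rw [le_div_iff₀ hη] at h
    linarith
  have hT0a : Real.log x - 2 * η < η * T0 := by
    have h := Nat.lt_floor_add_one (Real.log x / η)
    rw [div_lt_iff₀ hη] at h
    have h2 : (⌊Real.log x / η⌋₊ : ℝ) ≤ T0 + 1 := by exact_mod_cast (by omega : ⌊Real.log x / η⌋₊ ≤ T0 + 1)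
    nlinarith
  have hT01 : T0 ≤ T1 := by
    have : ⌊Real.log x / η⌋₊ ≤ T1 := by
      apply Nat.floor_mono
      apply div_le_div_of_nonneg_right _ hη.le
      rw [hlog4x]; linarith
    omega
  -- lower bound for the pair sums
  have hlow : ∀ d ∈ S, ∑ n ∈ (Ioc x (4 * x)).filter (fun n => n ≡ 1 [MOD d]), Dn z n
      ≤ ∑ q ∈ prs T0 T1, Td (al z η q.1) (be z η q.2) (Nb η q.1) (Nb η q.2) d := by
    intro d _
    rw [prs_sum z η hη T0 T1 M d (by omega)]
    have hsub : (Ioc x (4 * x)).filter (fun n => n ≡ 1 [MOD d]) ⊆ Ioc 0 M := by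
      intro n hn
      rw [mem_filter, mem_Ioc] at hn
      rw [mem_Ioc]
      refine ⟨by omega, ?_⟩
      have h4 : 4 * x ≤ b := by
        have : (4 : ℝ) * x ≤ b := by
          refine le_trans ?_ hb
          have : 1 ≤ Real.exp (2 * η) := Real.one_le_exp (by linarith)
          nlinarith
        exact_mod_cast this
      omega
    rw [sum_congr rfl (fun n hn => Dn_eq z n (mem_Ioc.1 (hsub hn)).1), sum_divAnti _ M hsub]
    apply sum_le_sum_of_subset_of_nonneg
    · intro p hp
      simp only [mem_filter, mem_product, mem_Ioc] at hp ⊢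
      obtain ⟨⟨⟨hi, _⟩, hm, _⟩, ⟨hx1, hx4⟩, hcong⟩ := hp
      refine ⟨⟨⟨hi, by assumption⟩, hm, by assumption⟩, hcong, ?_, ?_⟩
      · have h1 := bx_lt η hη p.1
        have h2 := bx_lt η hη p.2
        have hi' : (0 : ℝ) < p.1 := by exact_mod_cast hi
        have hm' : (0 : ℝ) < p.2 := by exact_mod_cast hm
        have h3 : Real.log x ≤ Real.log p.1 + Real.log p.2 := by
          rw [← Real.log_mul hi'.ne' hm'.ne']
          apply Real.log_le_log hx0
          exact_mod_cast hx1.le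
        have h4 : Real.log x / η < (bx η p.1 + bx η p.2 + 2 : ℕ) := by
          rw [div_lt_iff₀ hη]
          push_cast
          nlinarith
        have h5 := (Nat.floor_lt (div_nonneg hlx hη.le)).2 h4
        omega
      · have h1 := bx_le η hη p.1
        have h2 := bx_le η hη p.2
        have hi' : (0 : ℝ) < p.1 := by exact_mod_cast hi
        have hm' : (0 : ℝ) < p.2 := by exact_mod_cast hm
        have h3 : Real.log p.1 + Real.log p.2 ≤ Real.log (4 * x) := by
          rw [← Real.log_mul hi'.ne' hm'.ne']
          apply Real.log_le_log (mul_pos hi' hm')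
          exact_mod_cast hx4
        apply Nat.le_floor
        rw [le_div_iff₀ hη]
        push_cast
        nlinarith
    · intro p _ _; exact Wp_nonneg _ _ _
  have hup : ∑ q ∈ prs T0 T1, Td (al z η q.1) (be z η q.2) (Nb η q.1) (Nb η q.2) 1
      ≤ ∑ n ∈ Ioc a b, Dn z n := by
    rw [prs_sum z η hη T0 T1 M 1 (by omega)]
    have hsub : Ioc a b ⊆ Ioc 0 M := by
      intro n hn
      rw [mem_Ioc] at hn ⊢
      omega
    rw [sum_congr rfl (fun n hn => Dn_eq z n (mem_Ioc.1 (hsub hn)).1), sum_divAnti _ M hsub]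
    apply sum_le_sum_of_subset_of_nonneg
    · intro p hp
      simp only [mem_filter, mem_product, mem_Ioc] at hp ⊢
      obtain ⟨⟨⟨hi, _⟩, hm, _⟩, _, hc0, hc1⟩ := hp
      refine ⟨⟨⟨hi, by assumption⟩, hm, by assumption⟩, ?_⟩
      have hi' : (0 : ℝ) < p.1 := by exact_mod_cast hi
      have hm' : (0 : ℝ) < p.2 := by exact_mod_cast hm
      have hpp : (0 : ℝ) < (p.1 : ℝ) * p.2 := mul_pos hi' hm'
      have hc0' : (T0 : ℝ) ≤ bx η p.1 + bx η p.2 := by exact_mod_cast hc0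
      have hc1' : (bx η p.1 + bx η p.2 : ℝ) ≤ T1 := by exact_mod_cast hc1
      constructor
      · have h1 := bx_le η hη p.1
        have h2 := bx_le η hη p.2
        have h3 : Real.log x - 2 * η < Real.log ((p.1 : ℝ) * p.2) := by
          rw [Real.log_mul hi'.ne' hm'.ne']
          nlinarith
        have h4 := Real.exp_lt_exp.2 h3
        rw [Real.exp_log hpp, sub_eq_add_neg, Real.exp_add, Real.exp_log hx0] at h4
        have h5 : (a : ℝ) < ((p.1 * p.2 : ℕ) : ℝ) := by
          push_cast
          refine lt_of_le_of_lt ha ?_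
          rw [neg_mul]; exact h4
        exact_mod_cast h5
      · have h1 := bx_lt η hη p.1
        have h2 := bx_lt η hη p.2
        have h3 : Real.log ((p.1 : ℝ) * p.2) ≤ Real.log (4 * x) + 2 * η := by
          rw [Real.log_mul hi'.ne' hm'.ne']
          nlinarith
        have h4 := Real.exp_le_exp.2 h3
        rw [Real.exp_log hpp, Real.exp_add, Real.exp_log (by positivity)] at h4
        have h5 : ((p.1 * p.2 : ℕ) : ℝ) ≤ b := by
          push_cast
          exact h4.trans hb
        exact_mod_cast h5
    · intro p _ _; exact Wp_nonneg _ _ _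
  set Z := (18 / Real.log y) ^ 2 * (Real.exp (η * (T1 + 2)) * (η * (T1 + 1))) with hZ
  have hZb : Z ≤ (18 / Real.log y) ^ 2 * (b * Real.log (8 * x)) := by
    rw [hZ]
    gcongr
    · refine le_trans ?_ hb
      have : Real.exp (η * (T1 + 2)) ≤ Real.exp (Real.log (4 * x) + 2 * η) := by
        apply Real.exp_le_exp.2; linarith
      rwa [Real.exp_add, Real.exp_log (by positivity)] at this
    · rw [hlog8x]; linarith
  have hcard : ((prs T0 T1).card : ℝ) ≤ (Real.log (8 * x) / η) * (5 / η) := by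
    have h := prs_card T0 T1 hT01
    have h' : ((prs T0 T1).card : ℝ) ≤ ((T1 : ℝ) + 1) * (T1 + 1 - T0) := by
      have : ((T1 + 1 - T0 : ℕ) : ℝ) = (T1 : ℝ) + 1 - T0 := by
        rw [Nat.cast_sub (by omega)]; push_cast; ring
      rw [← this]
      exact_mod_cast h
    refine h'.trans ?_
    have hT : (T0 : ℝ) ≤ T1 := by exact_mod_cast hT01
    apply mul_le_mul
    · rw [le_div_iff₀ hη, hlog8x]; linarith
    · rw [le_div_iff₀ hη]; nlinarith
    · linarith
    · rw [hlog8x]; apply div_nonneg _ hη.le; linarith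
  calc _ ≤ ∑ d ∈ S, ((d : ℝ) - 1) * ∑ q ∈ prs T0 T1, Td (al z η q.1) (be z η q.2) (Nb η q.1) (Nb η q.2) d := by
        apply sum_le_sum
        intro d hd
        apply mul_le_mul_of_nonneg_left (hlow d hd)
        have : (1 : ℝ) < d := by exact_mod_cast (hS d hd).one_lt
        linarith
    _ = ∑ q ∈ prs T0 T1, ∑ d ∈ S, ((d : ℝ) - 1) * Td (al z η q.1) (be z η q.2) (Nb η q.1) (Nb η q.2) d := by
        rw [sum_comm]
        apply sum_congr rfl
        intro d _
        rw [mul_sum]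
    _ ≤ ∑ q ∈ prs T0 T1, (S.card * Td (al z η q.1) (be z η q.2) (Nb η q.1) (Nb η q.2) 1 + Z) := by
        apply sum_le_sum
        intro q hq
        rw [← prs_global]
        exact pair_bound S hS hS2 y z hy hSy hyz hz η hη T1 q.1 q.2 (mem_filter.1 hq).2.2
    _ = S.card * ∑ q ∈ prs T0 T1, Td (al z η q.1) (be z η q.2) (Nb η q.1) (Nb η q.2) 1
        + (prs T0 T1).card * Z := by
        rw [sum_add_distrib, ← mul_sum, sum_const, nsmul_eq_mul]
    _ ≤ S.card * ∑ n ∈ Ioc a b, Dn z n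
        + (Real.log (8 * x) / η) * (5 / η) * ((18 / Real.log y) ^ 2 * (b * Real.log (8 * x))) := by
        have hZ0 : 0 ≤ Z := by rw [hZ]; positivity
        have : 0 ≤ Real.log (8 * x) := by rw [hlog8x]; linarith
        gcongr
    _ = _ := by
        congr 1
        field_simp
        ring

end LSP
end

section
open Finset ArithmeticFunction
namespace LSP

lemma rough_sdiff (z d n : ℕ) (hd : d.Prime) (hdn : ¬ d ∣ n) :
    Nat.Coprime n (PS (Nat.primesBelow z \ {d})) ↔ rough z n := by
  constructor
  · intro h
    rw [rough_iff]
    intro p hp hpz hpn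
    by_cases hpd : p = d
    · exact hdn (hpd ▸ hpn)
    have h2 : p ∣ PS (Nat.primesBelow z \ {d}) := dvd_prod_of_mem _ (by
      rw [mem_sdiff, mem_singleton]
      exact ⟨Nat.mem_primesBelow.2 ⟨hpz, hp⟩, hpd⟩)
    exact hp.one_lt.ne' (Nat.eq_one_of_dvd_coprimes h hpn h2)
  · intro h
    apply Nat.Coprime.coprime_dvd_right _ h
    exact prod_dvd_prod_of_subset _ _ _ sdiff_subset

lemma equi (z V d x : ℕ) (hz : 2 ≤ z) (hV : 3 ≤ V) (hd : d.Prime) (hdz : d < z) (hx : 1 ≤ x) :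
    ∑ n ∈ (Ioc x (4 * x)).filter (rough z), Real.log n
      ≤ ((d : ℝ) - 1) * ∑ n ∈ (Ioc x (4 * x)).filter (fun n => n ≡ 1 [MOD d] ∧ rough z n), Real.log n
        + (Real.log 4 * (48 * x / Real.log z + d * (z : ℝ) ^ 4)
          + Real.log (4 * x) * (1500000 * x / (((V : ℝ) - 2) ^ 2 * Real.log z) + d * (4 * z * ((z : ℝ) ^ V) ^ 4))) := by
  set P := PS (Nat.primesBelow z \ {d}) with hP
  have hx0 : (1 : ℝ) ≤ x := by exact_mod_cast hx
  have hd1 : (1 : ℝ) < d := by exact_mod_cast hd.one_lt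
  have hd2 : (2 : ℝ) ≤ d := by exact_mod_cast hd.two_le
  have hz1 : (1 : ℝ) < z := by exact_mod_cast (by omega : 1 < z)
  have hlz : 0 < Real.log z := Real.log_pos hz1
  have hV2 : (1 : ℝ) ≤ (V : ℝ) - 2 := by
    have : (3 : ℝ) ≤ V := by exact_mod_cast hV
    linarith
  have hE : ∀ p ∈ ({d} : Finset ℕ), p.Prime := by simpa using hd
  have hE2 : ∑ q ∈ ({d} : Finset ℕ), 1 / ((q : ℝ) - 1) ≤ 2 := by
    rw [sum_singleton, div_le_iff₀ (by linarith)]; linarith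
  have hcop : Nat.Coprime d P := by
    apply PS_coprime _ (fun p hp => Nat.prime_of_mem_primesBelow (mem_sdiff.1 hp).1) d hd
    simp
  have hlog4x : Real.log (4 * x) = Real.log 4 + Real.log x := Real.log_mul (by norm_num) (by linarith)
  have hl4 : 0 ≤ Real.log 4 := Real.log_nonneg (by norm_num)
  have hlx : 0 ≤ Real.log x := Real.log_nonneg hx0
  set FL : ℝ := 500000 * ((4 * x : ℕ) - x) / (d * (((V : ℝ) - 2) ^ 2 * Real.log z)) + 4 * z * ((z : ℝ) ^ V) ^ 4 with hFL
  set S1 := Sc P d x (4 * x) 1 with hS1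
  have hS1u : S1 ≤ 16 * ((4 * x : ℕ) - x) / (d * Real.log z) + (z : ℝ) ^ 4 :=
    sieve_upper z d x (4 * x) 1 {d} hz hE hE2 hd.pos (by omega) hcop
  have hfl : ∀ c, Sc P d x (4 * x) c ≤ S1 + FL := by
    intro c
    have := fund_lemma z V d x (4 * x) 1 c {d} hz hV hE hE2 hd.pos (by omega) hcop
    rw [hFL]; linarith
  set L1 := ∑ n ∈ (Ioc x (4 * x)).filter (fun n => n ≡ 1 [MOD d] ∧ rough z n), Real.log n with hL1
  have hfilt : ∀ c, ¬ d ∣ c → (Ioc x (4 * x)).filter (fun n => n ≡ c [MOD d] ∧ rough z n)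
      = (Ioc x (4 * x)).filter (fun n => n ≡ c [MOD d] ∧ Nat.Coprime n P) := by
    intro c hc
    apply filter_congr
    intro n _
    constructor
    · rintro ⟨h1, h2⟩
      exact ⟨h1, (rough_sdiff z d n hd (fun h => hc ((h1.dvd_iff dvd_rfl).1 h))).2 h2⟩
    · rintro ⟨h1, h2⟩
      exact ⟨h1, (rough_sdiff z d n hd (fun h => hc ((h1.dvd_iff dvd_rfl).1 h))).1 h2⟩
  have hL1low : Real.log x * S1 ≤ L1 := by
    rw [hL1, hfilt 1 (fun h => hd.one_lt.ne' (Nat.dvd_one.1 h)), hS1, Sc, mul_comm, ← nsmul_eq_mul, ← sum_const]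
    apply sum_le_sum
    intro n hn
    rw [mem_filter, mem_Ioc] at hn
    apply Real.log_le_log (by linarith)
    exact_mod_cast hn.1.1.le
  have hLc : ∀ c, ¬ d ∣ c → ∑ n ∈ (Ioc x (4 * x)).filter (fun n => n ≡ c [MOD d] ∧ rough z n), Real.log n
      ≤ L1 + (Real.log 4 * S1 + Real.log (4 * x) * FL) := by
    intro c hc
    have h1 : ∑ n ∈ (Ioc x (4 * x)).filter (fun n => n ≡ c [MOD d] ∧ rough z n), Real.log n
        ≤ Real.log (4 * x) * Sc P d x (4 * x) c := by
      rw [hfilt c hc, Sc, mul_comm (Real.log _), ← nsmul_eq_mul, ← sum_const]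
      apply sum_le_sum
      intro n hn
      rw [mem_filter, mem_Ioc] at hn
      apply Real.log_le_log
      · exact_mod_cast (by omega : 0 < n)
      · exact_mod_cast hn.1.2
    have h2 := mul_le_mul_of_nonneg_left (hfl c) (by linarith : 0 ≤ Real.log (4 * x))
    have h3 : Real.log (4 * x) * (S1 + FL) = Real.log x * S1 + Real.log 4 * S1 + Real.log (4 * x) * FL := by
      rw [hlog4x]; ring
    linarith
  have hsum : ∑ n ∈ (Ioc x (4 * x)).filter (rough z), Real.log n
      = ∑ c ∈ range d, ∑ n ∈ (Ioc x (4 * x)).filter (fun n => n ≡ c [MOD d] ∧ rough z n), Real.log n := by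
    rw [← sum_fiberwise_of_maps_to (g := fun n => n % d) (t := range d)
      (fun n _ => mem_range.2 (Nat.mod_lt _ hd.pos))]
    apply sum_congr rfl
    intro c hc
    rw [filter_filter]
    apply sum_congr _ (fun _ _ => rfl)
    apply filter_congr
    intro n _
    unfold Nat.ModEq
    rw [Nat.mod_eq_of_lt (mem_range.1 hc), and_comm]
  have hr : range d = insert 0 ((range d).erase 0) := by
    rw [insert_erase]; simpa using hd.pos
  rw [hsum, hr, sum_insert (notMem_erase _ _)]
  have h0 : ∑ n ∈ (Ioc x (4 * x)).filter (fun n => n ≡ 0 [MOD d] ∧ rough z n), Real.log n = 0 := by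
    apply sum_eq_zero
    intro n hn
    rw [mem_filter] at hn
    exact absurd ((Nat.modEq_zero_iff_dvd).1 hn.2.1) ((rough_iff z n).1 hn.2.2 d hd hdz)
  rw [h0, zero_add]
  have hbd : ∑ c ∈ (range d).erase 0, ∑ n ∈ (Ioc x (4 * x)).filter (fun n => n ≡ c [MOD d] ∧ rough z n), Real.log n
      ≤ ((d : ℝ) - 1) * (L1 + (Real.log 4 * S1 + Real.log (4 * x) * FL)) := by
    have hc : ((range d).erase 0).card = d - 1 := by
      rw [card_erase_of_mem (by simpa using hd.pos), card_range]
    have hc' : (((range d).erase 0).card : ℝ) = (d : ℝ) - 1 := by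
      rw [hc, Nat.cast_sub hd.one_lt.le]; push_cast; ring
    rw [← hc', ← nsmul_eq_mul, ← sum_const]
    apply sum_le_sum
    intro c hcm
    apply hLc c
    rw [mem_erase, mem_range] at hcm
    exact fun h => absurd (Nat.le_of_dvd (Nat.pos_of_ne_zero hcm.1) h) (by omega)
  refine hbd.trans ?_
  rw [mul_add]
  apply add_le_add le_rfl
  rw [mul_add]
  have hS10 : 0 ≤ S1 := Nat.cast_nonneg _
  have hxx : ((4 * x : ℕ) : ℝ) - x = 3 * x := by push_cast; ring
  have hFL0 : 0 ≤ FL := by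
    rw [hFL, hxx]; positivity
  have a1 : ((d : ℝ) - 1) * S1 ≤ 48 * x / Real.log z + d * (z : ℝ) ^ 4 := by
    calc ((d : ℝ) - 1) * S1 ≤ d * S1 := by gcongr; linarith
      _ ≤ d * (16 * ((4 * x : ℕ) - x) / (d * Real.log z) + (z : ℝ) ^ 4) := by gcongr
      _ = _ := by rw [hxx]; field_simp; ring
  have a2 : ((d : ℝ) - 1) * FL ≤ 1500000 * x / (((V : ℝ) - 2) ^ 2 * Real.log z) + d * (4 * z * ((z : ℝ) ^ V) ^ 4) := by
    calc ((d : ℝ) - 1) * FL ≤ d * FL := by gcongr; linarith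
      _ = _ := by
        rw [hFL, hxx]
        have : (V : ℝ) - 2 ≠ 0 := by linarith
        field_simp
        ring
  have b1 := mul_le_mul_of_nonneg_left a1 hl4
  have b2 := mul_le_mul_of_nonneg_left a2 (by linarith : 0 ≤ Real.log (4 * x))
  linarith

end LSP
end

section
open Finset ArithmeticFunction
namespace LSP

lemma log8x (t : ℕ) (ht : 1 ≤ t) : Real.log (8 * (t : ℝ) ^ 100) ≤ 100 * t := by
  have h0 : (0 : ℝ) < t := by exact_mod_cast ht
  rw [Real.log_mul (by norm_num) (by positivity), Real.log_pow]
  have hl8 : Real.log 8 = 3 * Real.log 2 := by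
    rw [show (8 : ℝ) = 2 ^ 3 by norm_num, Real.log_pow]; norm_num
  have := Real.log_two_lt_d9
  have := Real.log_le_sub_one_of_pos h0
  push_cast
  linarith

lemma sqrt4x (t : ℕ) : √(4 * (t : ℝ) ^ 100) = 2 * (t : ℝ) ^ 50 := by
  rw [show 4 * (t : ℝ) ^ 100 = (2 * (t : ℝ) ^ 50) ^ 2 by ring]
  exact Real.sqrt_sq (by positivity)

lemma tpow (t : ℕ) (ht : 1000000 ≤ t) (k : ℕ) (hk : k ≤ 99) : 1000000 * (t : ℝ) ^ k ≤ (t : ℝ) ^ 100 := by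
  have h1 : (1000000 : ℝ) ≤ t := by exact_mod_cast ht
  calc 1000000 * (t : ℝ) ^ k ≤ t * (t : ℝ) ^ 99 := by gcongr; linarith
    _ = _ := by ring

lemma theta_part (t z : ℕ) (ht : 1000000 ≤ t) (hz : z ≤ t ^ 100) :
    ((t ^ 100 : ℕ) : ℝ) ≤ ∑ n ∈ (Ioc (t ^ 100) (4 * t ^ 100)).filter (rough z), vonMangoldt n := by
  set x := t ^ 100 with hx
  have hx1 : 1 ≤ x := Nat.one_le_pow _ _ (by omega)
  have hxr : (x : ℝ) = (t : ℝ) ^ 100 := by rw [hx]; push_cast; rfl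
  have h1 := Chebyshev.theta_ge (4 * x)
  have h2 := Chebyshev.theta_le_log4_mul_x (x := (x : ℝ)) (Nat.cast_nonneg _)
  have hdiff : Chebyshev.theta ((4 * x : ℕ) : ℝ) - Chebyshev.theta (x : ℝ)
      ≤ ∑ n ∈ (Ioc x (4 * x)).filter (rough z), vonMangoldt n := by
    unfold Chebyshev.theta
    rw [Nat.floor_natCast, Nat.floor_natCast]
    have hU : Ioc 0 (4 * x) = Ioc 0 x ∪ Ioc x (4 * x) := (Ioc_union_Ioc_eq_Ioc (by omega) (by omega)).symm
    rw [hU, filter_union, sum_union (by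
      apply disjoint_filter_filter
      exact Ioc_disjoint_Ioc_of_le le_rfl), add_sub_cancel_left]
    calc _ = ∑ p ∈ (Ioc x (4 * x)).filter Nat.Prime, vonMangoldt p := by
          apply sum_congr rfl
          intro p hp
          rw [vonMangoldt_apply_prime (mem_filter.1 hp).2]
      _ ≤ _ := by
          apply sum_le_sum_of_subset_of_nonneg
          · intro p hp
            rw [mem_filter] at hp ⊢
            exact ⟨hp.1, rough_prime hp.2 (by have := (mem_Ioc.1 hp.1).1; omega)⟩
          · intro _ _ _; exact vonMangoldt_nonneg
  refine le_trans ?_ hdiff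
  push_cast at h1 ⊢
  have hl4 : Real.log 4 = 2 * Real.log 2 := by
    rw [show (4 : ℝ) = 2 ^ 2 by norm_num, Real.log_pow]; norm_num
  have hl2a := Real.log_two_gt_d9
  have hl2b := Real.log_two_lt_d9
  have hx1' : (1 : ℝ) ≤ x := by exact_mod_cast hx1
  have hl8 := log8x t (by omega)
  have hA : Real.log (4 * (x : ℝ) + 1) ≤ 100 * t := by
    refine le_trans (Real.log_le_log (by linarith) ?_) hl8
    rw [← hxr]; linarith
  have hB : Real.log (4 * (x : ℝ)) ≤ 100 * t := by
    refine le_trans (Real.log_le_log (by linarith) ?_) hl8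
    rw [← hxr]; linarith
  have hC : 2 * √(4 * (x : ℝ)) * Real.log (4 * x) ≤ 2 * (2 * (t : ℝ) ^ 50) * (100 * t) := by
    rw [hxr, sqrt4x, ← hxr]; gcongr
  have hD := tpow t ht 51 (by norm_num)
  have hE := tpow t ht 1 (by norm_num)
  have hF : 2 * (2 * (t : ℝ) ^ 50) * (100 * t) = 400 * (t : ℝ) ^ 51 := by ring
  rw [← hxr] at hD hE
  rw [hF] at hC
  rw [pow_one] at hE
  rw [hl4] at h2
  nlinarith

lemma pp_part (t d z : ℕ) (ht : 1000000 ≤ t)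
    (hno : ∀ p ∈ Ioc (t ^ 100) (4 * t ^ 100), p ≡ 1 [MOD d] → ¬ p.Prime) :
    ∑ n ∈ (Ioc (t ^ 100) (4 * t ^ 100)).filter (fun n => n ≡ 1 [MOD d] ∧ rough z n), vonMangoldt n
      ≤ 400 * (t : ℝ) ^ 51 := by
  set x := t ^ 100 with hx
  have hx1 : 1 ≤ x := Nat.one_le_pow _ _ (by omega)
  have hxr : (x : ℝ) = (t : ℝ) ^ 100 := by rw [hx]; push_cast; rfl
  have hx1' : (1 : ℝ) ≤ x := by exact_mod_cast hx1
  have h1 := Chebyshev.psi_sub_theta_le (x := ((4 * x : ℕ) : ℝ)) (by push_cast; linarith)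
  have hdiff : ∑ n ∈ (Ioc x (4 * x)).filter (fun n => n ≡ 1 [MOD d] ∧ rough z n), vonMangoldt n
      ≤ Chebyshev.psi ((4 * x : ℕ) : ℝ) - Chebyshev.theta ((4 * x : ℕ) : ℝ) := by
    unfold Chebyshev.theta Chebyshev.psi
    rw [Nat.floor_natCast, sum_filter (p := Nat.Prime), ← sum_sub_distrib]
    calc _ = ∑ n ∈ (Ioc x (4 * x)).filter (fun n => n ≡ 1 [MOD d] ∧ rough z n),
          (vonMangoldt n - if n.Prime then Real.log n else 0) := by
          apply sum_congr rfl
          intro n hn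
          rw [mem_filter] at hn
          rw [if_neg (hno n hn.1 hn.2.1), sub_zero]
      _ ≤ _ := by
          apply sum_le_sum_of_subset_of_nonneg
          · intro n hn
            rw [mem_filter, mem_Ioc] at hn
            rw [mem_Ioc]; omega
          · intro n _ _
            split_ifs with h
            · rw [vonMangoldt_apply_prime h]; simp
            · rw [sub_zero]; exact vonMangoldt_nonneg
  refine hdiff.trans (h1.trans ?_)
  push_cast
  have hl8 := log8x t (by omega)
  have hB : Real.log (4 * (x : ℝ)) ≤ 100 * t := by
    refine le_trans (Real.log_le_log (by linarith) ?_) hl8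
    rw [← hxr]; linarith
  calc 2 * √(4 * (x : ℝ)) * Real.log (4 * x) ≤ 2 * (2 * (t : ℝ) ^ 50) * (100 * t) := by
        rw [hxr, sqrt4x, ← hxr]; gcongr
    _ = _ := by ring

end LSP
end

section
open Finset ArithmeticFunction
namespace LSP

lemma err_part (V y t d : ℕ) (hV : 1000000000 ≤ V) (hy : 300 ≤ Real.log y) (hyt : y ≤ t) (htV : t = y ^ V)
    (ht : 1000000 ≤ t) (hdy : d ≤ y) :
    Real.log 4 * (48 * ((t ^ 100 : ℕ) : ℝ) / Real.log ((y ^ 10 : ℕ) : ℝ) + d * ((y ^ 10 : ℕ) : ℝ) ^ 4)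
      + Real.log (4 * ((t ^ 100 : ℕ) : ℝ)) * (1500000 * ((t ^ 100 : ℕ) : ℝ) /
        (((V : ℝ) - 2) ^ 2 * Real.log ((y ^ 10 : ℕ) : ℝ))
        + d * (4 * ((y ^ 10 : ℕ) : ℝ) * (((y ^ 10 : ℕ) : ℝ) ^ V) ^ 4)) ≤ ((t ^ 100 : ℕ) : ℝ) / 4 := by
  set x : ℝ := ((t ^ 100 : ℕ) : ℝ) with hx
  have hxr : x = (t : ℝ) ^ 100 := by rw [hx]; push_cast; rfl
  set l := Real.log y with hl
  have hlz : Real.log ((y ^ 10 : ℕ) : ℝ) = 10 * l := by push_cast; rw [Real.log_pow, ← hl]; norm_num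
  have ht1 : (1000000 : ℝ) ≤ t := by exact_mod_cast ht
  have hx0 : 0 < x := by rw [hxr]; positivity
  have hyt' : (y : ℝ) ≤ t := by exact_mod_cast hyt
  have hdt : (d : ℝ) ≤ t := by exact_mod_cast hdy.trans hyt
  have hVr : (1000000000 : ℝ) ≤ V := by exact_mod_cast hV
  have hl4 : Real.log 4 = 2 * Real.log 2 := by
    rw [show (4 : ℝ) = 2 ^ 2 by norm_num, Real.log_pow]; norm_num
  have hl2b := Real.log_two_lt_d9
  have hl2a := Real.log_two_gt_d9
  have hl4b : Real.log 4 ≤ 2 := by linarith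
  have hl8 := log8x t (by omega)
  have hB : Real.log (4 * x) ≤ 100 * t := by
    refine le_trans (Real.log_le_log (by linarith) ?_) hl8
    rw [← hxr]; linarith
  have hlogx : Real.log x = 100 * (V * l) := by
    rw [hxr, Real.log_pow, htV]; push_cast; rw [Real.log_pow]
  have hB2 : Real.log (4 * x) ≤ 101 * V * l := by
    rw [Real.log_mul (by norm_num) hx0.ne', hlogx]
    nlinarith
  have hB0 : 0 ≤ Real.log (4 * x) := by
    apply Real.log_nonneg
    rw [hxr]
    have : (1 : ℝ) ≤ (t : ℝ) ^ 100 := one_le_pow₀ (by linarith)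
    linarith
  rw [hlz]
  have z4 : d * ((y ^ 10 : ℕ) : ℝ) ^ 4 ≤ (t : ℝ) ^ 41 := by
    push_cast
    calc (d : ℝ) * ((y : ℝ) ^ 10) ^ 4 ≤ t * ((t : ℝ) ^ 10) ^ 4 := by gcongr
      _ = _ := by ring
  have zV : (((y ^ 10 : ℕ) : ℝ) ^ V) = (t : ℝ) ^ 10 := by
    rw [htV]; push_cast; rw [← pow_mul, ← pow_mul, mul_comm]
  have z5 : d * (4 * ((y ^ 10 : ℕ) : ℝ) * (((y ^ 10 : ℕ) : ℝ) ^ V) ^ 4) ≤ 4 * (t : ℝ) ^ 51 := by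
    rw [zV]
    push_cast
    calc (d : ℝ) * (4 * (y : ℝ) ^ 10 * ((t : ℝ) ^ 10) ^ 4) ≤ t * (4 * (t : ℝ) ^ 10 * ((t : ℝ) ^ 10) ^ 4) := by gcongr
      _ = _ := by ring
  have p1 := tpow t ht 41 (by norm_num)
  have p2 := tpow t ht 52 (by norm_num)
  rw [← hxr] at p1 p2
  have q1 : 48 * x / (10 * l) ≤ x / 60 := by
    rw [div_le_div_iff₀ (by linarith) (by norm_num)]
    nlinarith
  have q2 : Real.log (4 * x) * (1500000 * x / (((V : ℝ) - 2) ^ 2 * (10 * l))) ≤ x / 16 := by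
    have hV2 : 0 < ((V : ℝ) - 2) ^ 2 := by
      have : 0 < (V : ℝ) - 2 := by linarith
      positivity
    calc _ ≤ (101 * V * l) * (1500000 * x / (((V : ℝ) - 2) ^ 2 * (10 * l))) := by
          have : 0 < l := by linarith
          gcongr
      _ = (15150000 * V * x) / ((V : ℝ) - 2) ^ 2 := by
          have : l ≠ 0 := by linarith
          have : (V : ℝ) - 2 ≠ 0 := by linarith
          field_simp
          ring
      _ ≤ _ := by
          rw [div_le_div_iff₀ hV2 (by norm_num)]
          have : 15150000 * (V : ℝ) * 16 ≤ ((V : ℝ) - 2) ^ 2 := by nlinarith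
          nlinarith
  have q3 : Real.log (4 * x) * (d * (4 * ((y ^ 10 : ℕ) : ℝ) * (((y ^ 10 : ℕ) : ℝ) ^ V) ^ 4)) ≤ x / 1000 := by
    calc _ ≤ (100 * t) * (4 * (t : ℝ) ^ 51) := by gcongr
      _ = 400 * (t : ℝ) ^ 52 := by ring
      _ ≤ _ := by linarith
  have q4 : Real.log 4 * (48 * x / (10 * l) + d * ((y ^ 10 : ℕ) : ℝ) ^ 4) ≤ 2 * (x / 60 + x / 1000000) := by
    have : 0 ≤ 48 * x / (10 * l) + d * ((y ^ 10 : ℕ) : ℝ) ^ 4 := by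
      have : 0 < l := by linarith
      positivity
    apply mul_le_mul hl4b _ this (by norm_num)
    linarith
  rw [mul_add (Real.log (4 * x))]
  linarith

lemma Dn_le_log (z n b : ℕ) (hn : 1 ≤ n) (hb : n ≤ b) : Dn z n ≤ if rough z n then Real.log b else 0 := by
  unfold Dn
  split_ifs
  · have h1 : Real.log n ≤ Real.log b := Real.log_le_log (by exact_mod_cast hn) (by exact_mod_cast hb)
    have h2 : 0 ≤ vonMangoldt n := vonMangoldt_nonneg
    linarith
  · exact le_rfl

lemma edge_one (z a b B : ℕ) (hz : 2 ≤ z) (hab : a ≤ b) (hB : b ≤ B) :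
    ∑ n ∈ Ioc a b, Dn z n ≤ Real.log B * (16 * ((b : ℝ) - a) / Real.log z + (z : ℝ) ^ 4) := by
  calc ∑ n ∈ Ioc a b, Dn z n ≤ ∑ n ∈ Ioc a b, if rough z n then Real.log B else 0 := by
        apply sum_le_sum
        intro n hn
        rw [mem_Ioc] at hn
        exact Dn_le_log z n B (by omega) (by omega)
    _ = Real.log B * ((Ioc a b).filter (rough z)).card := by
        rw [← sum_filter, sum_const, nsmul_eq_mul, mul_comm]
    _ ≤ _ := by
        apply mul_le_mul_of_nonneg_left (rough_count z a b hz hab) (Real.log_natCast_nonneg _)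

lemma edge_part (V y t M w : ℕ) (hV : 1000000000 ≤ V) (hy : 300 ≤ Real.log y) (hyt : y ≤ t) (htV : t = y ^ V)
    (ht : 1000000 ≤ t) (hM : M = 100000 * V) (hVt : V ≤ t) (hw : w = 16 * t ^ 100 / M + 1) (hy2 : 2 ≤ y) :
    ∑ n ∈ Ioc (t ^ 100 - w) (4 * t ^ 100 + w), Dn (y ^ 10) n
      ≤ ∑ n ∈ Ioc (t ^ 100) (4 * t ^ 100), Dn (y ^ 10) n + ((t ^ 100 : ℕ) : ℝ) / 8 := by
  have hz2 : 2 ≤ y ^ 10 := le_trans hy2 (Nat.le_self_pow (by norm_num) y)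
  set X := t ^ 100 with hX
  set x : ℝ := (X : ℝ) with hx
  have hxr : x = (t : ℝ) ^ 100 := by rw [hx, hX]; push_cast; rfl
  have hX1 : 1 ≤ X := Nat.one_le_pow _ _ (by omega)
  have ht1 : (1000000 : ℝ) ≤ t := by exact_mod_cast ht
  have hx0 : 0 < x := by rw [hxr]; positivity
  set l := Real.log y with hl
  have hlz : Real.log ((y ^ 10 : ℕ) : ℝ) = 10 * l := by push_cast; rw [Real.log_pow, ← hl]; norm_num
  have hyt' : (y : ℝ) ≤ t := by exact_mod_cast hyt
  have hVr : (1000000000 : ℝ) ≤ V := by exact_mod_cast hV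
  have hwX : w ≤ X := by
    rw [hw]
    have h1 : 16 * X / M ≤ 16 * X / 32 := Nat.div_le_div_left (by omega) (by norm_num)
    have h2 : 16 * X / 32 + 1 ≤ X := by
      have : 2 ≤ X := by
        rw [hX]
        calc 2 ≤ t := by omega
          _ ≤ _ := Nat.le_self_pow (by norm_num) t
      omega
    omega
  have hwr : (w : ℝ) ≤ 16 * x / (100000 * V) + 1 := by
    rw [hw, hM]
    push_cast
    have := Nat.cast_div_le (α := ℝ) (m := 16 * X) (n := 100000 * V)
    push_cast at this
    linarith
  have e1 := edge_one (y ^ 10) (X - w) X (8 * X) hz2 (by omega) (by omega)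
  have e2 := edge_one (y ^ 10) (4 * X) (4 * X + w) (8 * X) hz2 (by omega) (by omega)
  have hsplit : ∑ n ∈ Ioc (X - w) (4 * X + w), Dn (y ^ 10) n
      = ∑ n ∈ Ioc (X - w) X, Dn (y ^ 10) n + ∑ n ∈ Ioc X (4 * X), Dn (y ^ 10) n
        + ∑ n ∈ Ioc (4 * X) (4 * X + w), Dn (y ^ 10) n := by
    rw [sum_Ioc_consecutive _ (by omega) (by omega), sum_Ioc_consecutive _ (by omega) (by omega)]
  rw [hsplit]
  have hc1 : (X : ℝ) - ((X - w : ℕ) : ℝ) = w := by rw [Nat.cast_sub hwX]; ring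
  have hc2 : ((4 * X + w : ℕ) : ℝ) - ((4 * X : ℕ) : ℝ) = w := by push_cast; ring
  rw [hc1, hlz] at e1
  rw [hc2, hlz] at e2
  have hl8 := log8x t (by omega)
  have h8c : ((8 * X : ℕ) : ℝ) = 8 * x := by push_cast; rfl
  rw [h8c] at e1 e2
  rw [← hxr] at hl8
  have hlogx : Real.log x = 100 * (V * l) := by
    rw [hxr, Real.log_pow, htV]; push_cast; rw [Real.log_pow]
  have hl8' : Real.log 8 = 3 * Real.log 2 := by
    rw [show (8 : ℝ) = 2 ^ 3 by norm_num, Real.log_pow]; norm_num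
  have hl2b := Real.log_two_lt_d9
  have hB2 : Real.log (8 * x) ≤ 101 * V * l := by
    rw [Real.log_mul (by norm_num) hx0.ne', hlogx]
    nlinarith
  have z4 : ((y ^ 10 : ℕ) : ℝ) ^ 4 ≤ (t : ℝ) ^ 40 := by
    push_cast
    calc ((y : ℝ) ^ 10) ^ 4 ≤ ((t : ℝ) ^ 10) ^ 4 := by gcongr
      _ = _ := by ring
  have hbd : Real.log (8 * x) * (16 * w / (10 * l) + ((y ^ 10 : ℕ) : ℝ) ^ 4) ≤ x / 16 := by
    rw [mul_add]
    have hl0 : 0 < l := by linarith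
    have a1 : Real.log (8 * x) * (16 * w / (10 * l)) ≤ 162 * V * w := by
      calc _ ≤ (101 * V * l) * (16 * w / (10 * l)) := by gcongr
        _ = 161.6 * V * w := by field_simp; ring
        _ ≤ _ := by gcongr; norm_num
    have a2 : 162 * (V : ℝ) * w ≤ 162 * V * (16 * x / (100000 * V) + 1) := by gcongr
    have a3 : 162 * (V : ℝ) * (16 * x / (100000 * V) + 1) = 0.02592 * x + 162 * V := by
      field_simp
      ring
    have a4 : Real.log (8 * x) * ((y ^ 10 : ℕ) : ℝ) ^ 4 ≤ (100 * t) * (t : ℝ) ^ 40 := by gcongr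
    have a5 := tpow t ht 41 (by norm_num)
    have a6 := tpow t ht 1 (by norm_num)
    rw [← hxr] at a5 a6
    rw [pow_one] at a6
    have a7 : (100 * (t : ℝ)) * (t : ℝ) ^ 40 = 100 * (t : ℝ) ^ 41 := by ring
    have a8 : (V : ℝ) ≤ t := by exact_mod_cast hVt
    linarith
  linarith

end LSP
end

section
open Finset ArithmeticFunction
namespace LSP

set_option maxHeartbeats 1600000 in
lemma core (V y t : ℕ) (hV : 1000000000 ≤ V) (hy : 300 ≤ Real.log y) (htV : t = y ^ V)
    (S : Finset ℕ) (hS : ∀ d ∈ S, d.Prime) (hS2 : ∑ q ∈ S, 1 / ((q : ℝ) - 1) ≤ 2)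
    (hSy : ∀ d ∈ S, d ≤ y) (hcard : (10 : ℝ) ^ 19 * (V : ℝ) ^ 4 ≤ S.card) :
    ∃ d ∈ S, ∃ p ∈ Ioc (t ^ 100) (4 * t ^ 100), p ≡ 1 [MOD d] ∧ p.Prime := by
  by_contra hcon
  push Not at hcon
  have hy2 : 2 ≤ y := by
    by_contra h
    have : y = 0 ∨ y = 1 := by omega
    rcases this with rfl | rfl <;> simp at hy <;> linarith
  have hVt : V ≤ t := by
    rw [htV]
    exact (Nat.lt_pow_self (by omega : 1 < y)).le
  have ht : 1000000 ≤ t := by omega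
  have hyt : y ≤ t := by rw [htV]; exact Nat.le_self_pow (by omega) y
  set z := y ^ 10 with hz
  have hyz : y < z := by
    rw [hz]
    exact lt_self_pow₀ (by omega) (by norm_num)
  set X := t ^ 100 with hX
  set x : ℝ := (X : ℝ) with hx
  have hxr : x = (t : ℝ) ^ 100 := by rw [hx, hX]; push_cast; rfl
  have hX1 : 1 ≤ X := Nat.one_le_pow _ _ (by omega)
  have ht1 : (1000000 : ℝ) ≤ t := by exact_mod_cast ht
  have hx0 : 0 < x := by rw [hxr]; positivity
  have hVr : (1000000000 : ℝ) ≤ V := by exact_mod_cast hV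
  have hzX : z ≤ X := by
    rw [hz, hX]
    calc y ^ 10 ≤ t ^ 10 := Nat.pow_le_pow_left hyt 10
      _ ≤ t ^ 100 := Nat.pow_le_pow_right (by omega) (by norm_num)
  set M := 100000 * V with hM
  set w := 16 * X / M + 1 with hw
  have hMr : (M : ℝ) = 100000 * V := by rw [hM]; push_cast; ring
  have hM0 : (0 : ℝ) < M := by rw [hMr]; linarith
  set η : ℝ := 1 / M with hη
  have hη0 : 0 < η := by positivity
  have hη1 : η ≤ 1 / 4 := by
    rw [hη]; apply one_div_le_one_div_of_le (by norm_num); rw [hMr]; linarith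
  have hwr : 16 * x * η ≤ w := by
    have h := Nat.lt_div_mul_add (a := 16 * X) (b := M) (by omega)
    have h2 : 16 * X ≤ w * M := by rw [hw, add_mul, one_mul]; omega
    have h3 : (16 : ℝ) * x ≤ w * M := by rw [hx]; exact_mod_cast h2
    rw [hη, mul_one_div, div_le_iff₀ hM0]
    exact h3
  have hwX : w ≤ X := by
    have h1 : 16 * X / M ≤ 16 * X / 32 := Nat.div_le_div_left (by omega) (by norm_num)
    have h2 : 16 * X / 32 + 1 ≤ X := by
      have : 2 ≤ X := le_trans (by omega : 2 ≤ t) (Nat.le_self_pow (by norm_num) t)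
      omega
    omega
  have ha : ((X - w : ℕ) : ℝ) ≤ X * Real.exp (-2 * η) := by
    rw [Nat.cast_sub hwX]
    have := Real.add_one_le_exp (-2 * η)
    change x - w ≤ x * _
    nlinarith
  have hb : 4 * X * Real.exp (2 * η) ≤ ((4 * X + w : ℕ) : ℝ) := by
    have h1 := Real.exp_bound_div_one_sub_of_interval (x := 2 * η) (by positivity) (by linarith)
    have h2 : 1 / (1 - 2 * η) ≤ 1 + 4 * η := by
      rw [div_le_iff₀ (by linarith)]; nlinarith
    push_cast
    change 4 * x * _ ≤ 4 * x + _
    have : Real.exp (2 * η) ≤ 1 + 4 * η := h1.trans h2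
    nlinarith
  have hbox := box_main S hS hS2 y z hy2 hSy hyz le_rfl η hη0 hη1 X (X - w) (4 * X + w) hX1 ha hb
  have hedge := edge_part V y t M w hV hy hyt htV ht hM hVt hw hy2
  rw [← hz, ← hX] at hedge
  have hthe := theta_part t z ht hzX
  rw [← hX] at hthe
  set DI := ∑ n ∈ Ioc X (4 * X), Dn z n with hDI
  set LI := ∑ n ∈ (Ioc X (4 * X)).filter (rough z), vonMangoldt n with hLI
  have hLsplit : ∑ n ∈ (Ioc X (4 * X)).filter (rough z), Real.log n = LI + DI := by
    rw [hLI, hDI, sum_filter, sum_filter, ← sum_add_distrib]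
    apply sum_congr rfl
    intro n _
    unfold Dn
    split_ifs <;> ring
  have hL1split : ∀ d, ∑ n ∈ (Ioc X (4 * X)).filter (fun n => n ≡ 1 [MOD d] ∧ rough z n), Real.log n
      = ∑ n ∈ (Ioc X (4 * X)).filter (fun n => n ≡ 1 [MOD d] ∧ rough z n), vonMangoldt n
        + ∑ n ∈ (Ioc X (4 * X)).filter (fun n => n ≡ 1 [MOD d]), Dn z n := by
    intro d
    rw [← filter_filter, sum_filter (p := rough z), sum_filter (p := rough z), ← sum_add_distrib]
    apply sum_congr rfl
    intro n _
    unfold Dn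
    split_ifs <;> ring
  have hper : ∀ d ∈ S, LI + DI ≤ x / 8
      + ((d : ℝ) - 1) * ∑ n ∈ (Ioc X (4 * X)).filter (fun n => n ≡ 1 [MOD d]), Dn z n + x / 4 := by
    intro d hd
    have hdp := hS d hd
    have e1 := equi z V d X (by omega) (by omega) hdp (lt_of_le_of_lt (hSy d hd) hyz) hX1
    have e2 := err_part V y t d hV hy hyt htV ht (hSy d hd)
    rw [← hz, ← hX] at e2
    rw [hLsplit, hL1split, mul_add] at e1
    have e3 := pp_part t d z ht (by rw [← hX]; exact hcon d hd)
    rw [← hX] at e3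
    have hd1 : (1 : ℝ) < d := by exact_mod_cast hdp.one_lt
    have hdt : (d : ℝ) ≤ t := by exact_mod_cast (hSy d hd).trans hyt
    have e4 := tpow t ht 52 (by norm_num)
    rw [← hxr] at e4
    have e5 : ((d : ℝ) - 1) * ∑ n ∈ (Ioc X (4 * X)).filter (fun n => n ≡ 1 [MOD d] ∧ rough z n), vonMangoldt n
        ≤ x / 8 := by
      calc _ ≤ ((d : ℝ) - 1) * (400 * (t : ℝ) ^ 51) := by
            apply mul_le_mul_of_nonneg_left e3; linarith
        _ ≤ t * (400 * (t : ℝ) ^ 51) := by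
            apply mul_le_mul_of_nonneg_right _ (by positivity); linarith
        _ = 400 * (t : ℝ) ^ 52 := by ring
        _ ≤ _ := by linarith
    linarith
  have hsum := sum_le_sum hper
  rw [sum_const, nsmul_eq_mul, sum_add_distrib, sum_add_distrib, sum_const, sum_const, nsmul_eq_mul,
    nsmul_eq_mul] at hsum
  have hc0 : (0 : ℝ) ≤ S.card := Nat.cast_nonneg _
  have hE := mul_le_mul_of_nonneg_left hedge hc0
  have hT := mul_le_mul_of_nonneg_left hthe hc0
  set l := Real.log y with hl
  have hlogx : Real.log x = 100 * (V * l) := by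
    rw [hxr, Real.log_pow, htV]; push_cast; rw [Real.log_pow]
  have hl8' : Real.log 8 = 3 * Real.log 2 := by
    rw [show (8 : ℝ) = 2 ^ 3 by norm_num, Real.log_pow]; norm_num
  have hl2b := Real.log_two_lt_d9
  have hl2a := Real.log_two_gt_d9
  have hrat : Real.log (8 * x) / l ≤ 101 * V := by
    rw [div_le_iff₀ (by linarith), Real.log_mul (by norm_num) hx0.ne', hlogx]
    nlinarith
  have hrat0 : 0 ≤ Real.log (8 * x) / l := by
    apply div_nonneg _ (by linarith)
    rw [Real.log_mul (by norm_num) hx0.ne', hlogx]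
    have : 0 < l := by linarith
    positivity
  have hK : 1620 * ((4 * X + w : ℕ) : ℝ) * (Real.log (8 * X) / l) ^ 2 / η ^ 2 ≤ S.card * (x / 4) := by
    have hb8 : ((4 * X + w : ℕ) : ℝ) ≤ 8 * x := by
      push_cast
      have : (w : ℝ) ≤ X := by exact_mod_cast hwX
      change 4 * x + w ≤ 8 * x
      change (w : ℝ) ≤ x at this
      linarith
    have hη2 : (1 : ℝ) / η ^ 2 = (100000 * V) ^ 2 := by
      rw [hη, hMr]; field_simp
    calc _ = 1620 * ((4 * X + w : ℕ) : ℝ) * (Real.log (8 * x) / l) ^ 2 * (1 / η ^ 2) := by rw [mul_one_div]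
      _ ≤ 1620 * (8 * x) * (101 * V) ^ 2 * (100000 * V) ^ 2 := by
          rw [hη2]; gcongr
      _ = (1620 * 8 * 101 ^ 2 * 100000 ^ 2 * (V : ℝ) ^ 4) * x := by ring
      _ ≤ (10 ^ 19 * (V : ℝ) ^ 4 / 4) * x := by
          apply mul_le_mul_of_nonneg_right _ hx0.le
          have : 0 ≤ (V : ℝ) ^ 4 := by positivity
          linarith
      _ ≤ (S.card / 4) * x := by gcongr
      _ = _ := by ring
  have hcpos : 0 < (S.card : ℝ) := by
    refine lt_of_lt_of_le ?_ hcard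
    positivity
  have hfin : 0 < S.card * x := mul_pos hcpos hx0
  change (S.card : ℝ) * x ≤ _ at hT
  change _ ≤ (S.card : ℝ) * (DI + x / 8) at hE
  nlinarith

end LSP
end

section
open Finset
namespace LSP

lemma thmT : ∃ m J y0 : ℕ, 1 ≤ m ∧ ∀ y R : ℕ, y0 ≤ y → 1 ≤ R → 2 ^ J * R ≤ y →
    ∃ d p : ℕ, d.Prime ∧ p.Prime ∧ R < d ∧ d ≤ 2 ^ J * R ∧ y ^ m < p ∧ p ≤ 4 * y ^ m ∧
      d ∣ p - 1 := by
  obtain ⟨V, hV⟩ : ∃ V : ℕ, 1000000000 ≤ V := ⟨_, le_rfl⟩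
  obtain ⟨J, hJ⟩ := exists_nat_ge ((10 : ℝ) ^ 19 * (V : ℝ) ^ 4)
  obtain ⟨y0, hy0⟩ := exists_nat_ge (Real.exp 300)
  refine ⟨V * 100, J, y0, by omega, ?_⟩
  intro y R hy hR hJR
  have hlog : 300 ≤ Real.log y := by
    have h1 : Real.exp 300 ≤ y := hy0.trans (by exact_mod_cast hy)
    exact (Real.le_log_iff_exp_le (lt_of_lt_of_le (Real.exp_pos _) h1)).2 h1
  have hex : ∀ i : ℕ, ∃ p, p.Prime ∧ 2 ^ i * R < p ∧ p ≤ 2 * (2 ^ i * R) := fun i =>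
    Nat.exists_prime_lt_and_le_two_mul _ (by positivity)
  choose f hf1 hf2 hf3 using hex
  have hmono : StrictMono f := by
    apply strictMono_nat_of_lt_succ
    intro i
    have h1 := hf3 i
    have h2 := hf2 (i+1)
    have : 2 ^ (i+1) * R = 2 * (2 ^ i * R) := by ring
    omega
  have hup : ∀ i < J, f i ≤ 2 ^ J * R := by
    intro i hi
    have h1 := hf3 i
    have h2 : 2 ^ (i+1) ≤ 2 ^ J := Nat.pow_le_pow_right (by norm_num) hi
    have : 2 * (2 ^ i * R) = 2 ^ (i+1) * R := by ring
    calc f i ≤ 2 ^ (i+1) * R := by omega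
      _ ≤ _ := Nat.mul_le_mul_right _ h2
  have key : ∃ d ∈ (range J).image f, ∃ p ∈ Ioc ((y ^ V) ^ 100) (4 * (y ^ V) ^ 100),
      p ≡ 1 [MOD d] ∧ p.Prime := by
    refine core V y (y ^ V) hV hlog rfl ((range J).image f) ?_ ?_ ?_ ?_
    · intro d hd
      obtain ⟨i, hi, rfl⟩ := mem_image.1 hd
      exact hf1 i
    · rw [sum_image (fun a _ b _ h => hmono.injective h)]
      calc ∑ i ∈ range J, 1 / ((f i : ℝ) - 1) ≤ ∑ i ∈ range J, (1 / (2:ℝ)) ^ i := by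
            apply sum_le_sum
            intro i _
            have h2 : 2 ^ i * 1 + 1 ≤ f i := by
              have : 2 ^ i * 1 ≤ 2 ^ i * R := Nat.mul_le_mul_left _ hR
              have := hf2 i
              omega
            have h3 : (2:ℝ) ^ i * 1 + 1 ≤ f i := by exact_mod_cast h2
            rw [one_div_pow]
            apply one_div_le_one_div_of_le (by positivity)
            linarith
        _ ≤ 2 := sum_geometric_two_le J
    · intro d hd
      obtain ⟨i, hi, rfl⟩ := mem_image.1 hd
      exact (hup i (mem_range.1 hi)).trans hJR
    · rw [card_image_of_injective _ hmono.injective, card_range]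
      exact hJ
  obtain ⟨d, hd, p, hp, hpd, hpp⟩ := key
  · obtain ⟨i, hi, rfl⟩ := mem_image.1 hd
    rw [mem_Ioc, ← pow_mul] at hp
    refine ⟨f i, p, hf1 i, hpp, ?_, hup i (mem_range.1 hi), hp.1, hp.2, ?_⟩
    · have : 1 * R ≤ 2 ^ i * R := Nat.mul_le_mul_right _ Nat.one_le_two_pow
      have := hf2 i
      omega
    · exact (Nat.modEq_iff_dvd' hpp.one_lt.le).1 hpd.symm


end LSP
end

section
open Finset
namespace LSP

lemma bits (P : ℝ) (hP : 1 ≤ P) (g : ℕ → ℕ)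
    (hg : ∀ i, P ^ (2 ^ i) ≤ 2 * g i ∧ (g i : ℝ) ≤ 2 * P ^ (2 ^ i)) :
    ∀ a v : ℕ, v < 2 ^ a → ∃ X : ℕ, X ∣ ∏ i ∈ range a, g i ∧
      P ^ v ≤ 2 ^ a * X ∧ (X : ℝ) ≤ 2 ^ a * P ^ v := by
  intro a
  induction a with
  | zero =>
    intro v hv
    have : v = 0 := by simpa using hv
    subst this
    exact ⟨1, by simp, by simp, by simp⟩
  | succ a ih =>
    intro v hv
    by_cases h : v < 2 ^ a
    · obtain ⟨X, h1, h2, h3⟩ := ih v h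
      refine ⟨X, ?_, ?_, ?_⟩
      · rw [prod_range_succ]; exact h1.mul_right _
      · have : (0:ℝ) ≤ 2 ^ a * X := by positivity
        rw [pow_succ]; nlinarith
      · have : (0:ℝ) ≤ 2 ^ a * P ^ v := by positivity
        rw [pow_succ]; nlinarith
    · push Not at h
      obtain ⟨w, rfl⟩ := Nat.exists_eq_add_of_le h
      obtain ⟨X, h1, h2, h3⟩ := ih w (by rw [pow_succ] at hv; omega)
      obtain ⟨g1, g2⟩ := hg a
      refine ⟨X * g a, ?_, ?_, ?_⟩
      · rw [prod_range_succ]; exact mul_dvd_mul_right h1 _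
      · push_cast
        calc P ^ (2 ^ a + w) = P ^ w * P ^ (2 ^ a) := by rw [pow_add, mul_comm]
          _ ≤ (2 ^ a * X) * (2 * g a) := by gcongr
          _ = _ := by ring
      · push_cast
        calc (X : ℝ) * g a ≤ (2 ^ a * P ^ w) * (2 * P ^ (2 ^ a)) := by gcongr
          _ = _ := by rw [pow_add]; ring

lemma prod_tel (x a : ℕ) (hx : 1 ≤ x) :
    (x - 1) * ∏ i ∈ range a, (x ^ (2 ^ i) + 1) = x ^ (2 ^ a) - 1 := by
  induction a with
  | zero => simp
  | succ a ih =>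
    rw [prod_range_succ, ← mul_assoc, ih]
    have h : 1 ≤ x ^ 2 ^ a := Nat.one_le_pow _ _ hx
    have e : x ^ 2 ^ (a+1) = x ^ 2 ^ a * x ^ 2 ^ a := by rw [pow_succ 2 a, pow_mul, sq]
    rw [e]
    obtain ⟨z, hz⟩ := Nat.exists_eq_add_of_le h
    rw [hz]
    have : (1 + z) * (1 + z) = (1 + z - 1) * (1 + z + 1) + 1 := by
      rw [Nat.add_sub_cancel_left]; ring
    omega

lemma geo (p t : ℕ) (hp : 2 ≤ p) : ∃ G : ℕ, (p - 1) * G = p ^ (t+1) - 1 ∧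
    p ^ t ≤ G ∧ G ≤ 2 * p ^ t := by
  refine ⟨∑ i ∈ range (t+1), p ^ i, ?_, ?_, ?_⟩
  · have := Nat.geomSum_eq hp (t+1)
    rw [this]
    apply Nat.mul_div_cancel'
    simpa using Nat.sub_dvd_pow_sub_pow p 1 (t+1)
  · exact single_le_sum (f := fun i => p ^ i) (fun _ _ => Nat.zero_le _) (by simp)
  · induction t with
    | zero => simp
    | succ t ih =>
      have : p ^ t * 2 ≤ p ^ t * p := Nat.mul_le_mul_left _ hp
      rw [sum_range_succ, pow_succ p t]
      linarith

lemma fac_odd (p a t : ℕ) (hp : 2 ≤ p) (ht : Odd t) (hta : t ≤ 2 ^ a) (j : ℕ) (hj : j < 2 ^ a * t) :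
    ∃ N : ℕ, (p - 1) * N ∣ p ^ (2 ^ a * t) - 1 ∧ (p : ℝ) ^ j ≤ 2 ^ (2 * a + 1) * N ∧
      (N : ℝ) ≤ 2 ^ (2 * a + 1) * (p : ℝ) ^ j := by
  obtain ⟨s, rfl⟩ : ∃ s, t = s + 1 := ⟨t - 1, by have := ht.pos; omega⟩
  have hp1 : (1:ℝ) ≤ p := by exact_mod_cast (by omega : 1 ≤ p)
  have hdv : ∀ i, p ^ (2 ^ i) + 1 ∣ (p ^ (s+1)) ^ (2 ^ i) + 1 := by
    intro i
    have := ht.nat_add_dvd_pow_add_pow (p ^ (2 ^ i)) 1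
    rwa [one_pow, ← pow_mul, mul_comm, pow_mul] at this
  choose g2 hg2 using hdv
  obtain ⟨G, hG1, hG2, hG3⟩ := geo p s hp
  have htot : (p - 1) * ((∏ i ∈ range a, (p ^ (2 ^ i) + 1)) * ((∏ i ∈ range a, g2 i) * G))
      = p ^ (2 ^ a * (s+1)) - 1 := by
    have h := prod_tel (p ^ (s+1)) a (Nat.one_le_pow _ _ (by omega))
    rw [← pow_mul, mul_comm (s+1)] at h
    rw [← h, ← hG1]
    simp_rw [hg2]
    rw [prod_mul_distrib]
    ring
  have hg1b : ∀ i, (p:ℝ) ^ (2 ^ i) ≤ 2 * ((fun i => p ^ (2 ^ i) + 1) i : ℕ) ∧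
      (((fun i => p ^ (2 ^ i) + 1) i : ℕ) : ℝ) ≤ 2 * (p:ℝ) ^ (2 ^ i) := by
    intro i
    have : (1:ℝ) ≤ (p:ℝ) ^ (2 ^ i) := one_le_pow₀ hp1
    push_cast
    constructor <;> linarith
  have hg2b : ∀ i, ((p:ℝ) ^ s) ^ (2 ^ i) ≤ 2 * g2 i ∧
      (g2 i : ℝ) ≤ 2 * ((p:ℝ) ^ s) ^ (2 ^ i) := by
    intro i
    have e : ((p:ℝ) ^ (s+1)) ^ (2 ^ i) + 1 = ((p:ℝ) ^ (2 ^ i) + 1) * g2 i := by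
      exact_mod_cast hg2 i
    have e2 : ((p:ℝ) ^ (s+1)) ^ (2 ^ i) = ((p:ℝ) ^ s) ^ (2 ^ i) * (p:ℝ) ^ (2 ^ i) := by
      rw [pow_succ, mul_pow]
    rw [e2] at e
    have h1 : (1:ℝ) ≤ (p:ℝ) ^ (2 ^ i) := one_le_pow₀ hp1
    have h2 : (1:ℝ) ≤ ((p:ℝ) ^ s) ^ (2 ^ i) := one_le_pow₀ (one_le_pow₀ hp1)
    have h3 : (0:ℝ) ≤ g2 i := by positivity
    set Z := (p:ℝ) ^ (2 ^ i)
    set W := ((p:ℝ) ^ s) ^ (2 ^ i)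
    constructor
    · by_contra hc
      push Not at hc
      nlinarith
    · by_contra hc
      push Not at hc
      nlinarith
  have comb : ∀ v X Y K : ℕ, ∀ w : ℕ, (X ∣ ∏ i ∈ range a, (p ^ (2 ^ i) + 1)) →
      (Y ∣ (∏ i ∈ range a, g2 i) * G) → j = v + w →
      (p:ℝ) ^ v ≤ 2 ^ a * X → (X:ℝ) ≤ 2 ^ a * (p:ℝ) ^ v →
      (p:ℝ) ^ w ≤ 2 ^ (a+1) * Y → (Y:ℝ) ≤ 2 ^ (a+1) * (p:ℝ) ^ w →
      ∃ N : ℕ, (p - 1) * N ∣ p ^ (2 ^ a * (s+1)) - 1 ∧ (p : ℝ) ^ j ≤ 2 ^ (2 * a + 1) * N ∧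
      (N : ℝ) ≤ 2 ^ (2 * a + 1) * (p : ℝ) ^ j := by
    intro v X Y K w hX hY hjv h1 h2 h3 h4
    refine ⟨X * Y, ?_, ?_, ?_⟩
    · rw [← htot]
      exact mul_dvd_mul_left _ (mul_dvd_mul hX hY)
    · rw [hjv, pow_add]; push_cast
      calc (p:ℝ) ^ v * (p:ℝ) ^ w ≤ (2 ^ a * X) * (2 ^ (a+1) * Y) := by gcongr
        _ = _ := by ring
    · rw [hjv, pow_add]; push_cast
      calc (X:ℝ) * Y ≤ (2 ^ a * (p:ℝ) ^ v) * (2 ^ (a+1) * (p:ℝ) ^ w) := by gcongr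
        _ = _ := by ring
  by_cases hc : j < s * 2 ^ a
  · have hs : 0 < s := by
      rcases Nat.eq_zero_or_pos s with h | h
      · subst h; simp at hc
      · exact h
    have hv : j % s < 2 ^ a := by have := Nat.mod_lt j hs; omega
    have hu : j / s < 2 ^ a := (Nat.div_lt_iff_lt_mul hs).2 (by rwa [mul_comm])
    obtain ⟨X, hX1, hX2, hX3⟩ := bits p hp1 _ hg1b a _ hv
    obtain ⟨Y, hY1, hY2, hY3⟩ := bits ((p:ℝ) ^ s) (one_le_pow₀ hp1) _ hg2b a _ hu
    rw [← pow_mul] at hY2 hY3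
    refine comb (j % s) X Y 0 (s * (j / s)) hX1 (hY1.mul_right _) (Nat.mod_add_div j s).symm
      hX2 hX3 ?_ ?_
    · have : (0:ℝ) ≤ 2 ^ a * Y := by positivity
      rw [pow_succ]; nlinarith
    · have : (0:ℝ) ≤ 2 ^ a * (p:ℝ) ^ (s * (j / s)) := by positivity
      rw [pow_succ]; nlinarith
  · push Not at hc
    obtain ⟨v, hv⟩ := Nat.exists_eq_add_of_le hc
    have hva : v < 2 ^ a := by
      have : 2 ^ a * (s+1) = s * 2 ^ a + 2 ^ a := by ring
      omega
    have h2a : 0 < 2 ^ a := by positivity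
    obtain ⟨X, hX1, hX2, hX3⟩ := bits p hp1 _ hg1b a _ hva
    obtain ⟨Y, hY1, hY2, hY3⟩ := bits ((p:ℝ) ^ s) (one_le_pow₀ hp1) _ hg2b a (2 ^ a - 1) (by omega)
    have hG2' : (p:ℝ) ^ s ≤ G := by exact_mod_cast hG2
    have hG3' : (G:ℝ) ≤ 2 * (p:ℝ) ^ s := by exact_mod_cast hG3
    have e : ((p:ℝ) ^ s) ^ (2 ^ a - 1) * (p:ℝ) ^ s = (p:ℝ) ^ (s * 2 ^ a) := by
      rw [← pow_succ, ← pow_mul]; congr 2; omega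
    refine comb v X (Y * G) 0 (s * 2 ^ a) hX1 (mul_dvd_mul_right hY1 _) (by omega)
      hX2 hX3 ?_ ?_
    · rw [← e]; push_cast
      calc ((p:ℝ) ^ s) ^ (2 ^ a - 1) * (p:ℝ) ^ s ≤ (2 ^ a * Y) * G := by gcongr
        _ ≤ (2 ^ a * Y) * (2 * G) := by
          gcongr
          have : (0:ℝ) ≤ G := by positivity
          linarith
        _ = _ := by ring
    · rw [← e]; push_cast
      calc (Y:ℝ) * G ≤ (2 ^ a * ((p:ℝ) ^ s) ^ (2 ^ a - 1)) * (2 * (p:ℝ) ^ s) := by gcongr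
        _ = _ := by ring

lemma fac (p T t : ℕ) (hp : 2 ≤ p) (ht : 1 ≤ t) (htT : t ≤ T) (j : ℕ) (hj : j < 2 ^ T * t) :
    ∃ N : ℕ, (p - 1) * N ∣ p ^ (2 ^ T * t) - 1 ∧ (p : ℝ) ^ j ≤ 2 ^ (4 * T + 1) * N ∧
      (N : ℝ) ≤ 2 ^ (4 * T + 1) * (p : ℝ) ^ j := by
  obtain ⟨b, u, hu, rfl⟩ := Nat.exists_eq_two_pow_mul_odd (n := t) (by omega)
  have hb : 2 ^ b ≤ 2 ^ b * u := Nat.le_mul_of_pos_right _ hu.pos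
  have hu2 : u ≤ 2 ^ b * u := Nat.le_mul_of_pos_left _ (by positivity)
  have hbT : b ≤ T := by have : b < 2 ^ b := Nat.lt_two_pow_self; omega
  have e : 2 ^ T * (2 ^ b * u) = 2 ^ (T + b) * u := by rw [pow_add]; ring
  rw [e] at hj ⊢
  obtain ⟨N, h1, h2, h3⟩ := fac_odd p (T + b) u hp hu (by
    have : T < 2 ^ T := Nat.lt_two_pow_self
    have : 2 ^ T ≤ 2 ^ (T + b) := Nat.pow_le_pow_right (by norm_num) (by omega)
    omega) j hj
  have hK : (2:ℝ) ^ (2 * (T + b) + 1) ≤ 2 ^ (4 * T + 1) :=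
    pow_le_pow_right₀ (by norm_num) (by omega)
  refine ⟨N, h1, h2.trans (by gcongr), h3.trans (by gcongr)⟩

end LSP
end

section
open Finset
namespace LSP

lemma up_case (k j p d N : ℕ) (r x s D K L : ℝ) (hjk : j ≤ k) (hx : 1 ≤ x) (hxp : x ≤ p)
    (hpx : p ≤ L * x) (hL : 1 ≤ L) (hs : 1 ≤ s) (hsd : s ≤ d) (hds : d ≤ D * s) (hK : 1 ≤ K)
    (hr : r = x ^ j * s)
    (hN1 : (p:ℝ) ^ j ≤ K * N) (hN2 : (N:ℝ) ≤ K * (p:ℝ) ^ j) :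
    r ≤ K * ((d * N : ℕ) : ℝ) ∧ ((d * N : ℕ) : ℝ) ≤ D * K * L ^ k * r := by
  push_cast
  have hD : 0 ≤ D * s := le_trans (by positivity) hds
  have hLk : L ^ j ≤ L ^ k := pow_le_pow_right₀ hL hjk
  constructor
  · calc r = x ^ j * s := hr
      _ ≤ (p:ℝ) ^ j * d := by gcongr
      _ ≤ (K * N) * d := by gcongr
      _ = _ := by ring
  · calc (d:ℝ) * N ≤ (D * s) * (K * (p:ℝ) ^ j) := by gcongr
      _ ≤ (D * s) * (K * (L * x) ^ j) := by gcongr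
      _ = (D * s) * (K * (L ^ j * x ^ j)) := by rw [mul_pow]
      _ ≤ (D * s) * (K * (L ^ k * x ^ j)) := by gcongr
      _ = _ := by rw [hr]; ring

lemma down_case (k j p d e N : ℕ) (r x s D K L : ℝ) (hjk : j + 1 ≤ k) (hx : 1 ≤ x) (hxp : x ≤ p)
    (hpx : p ≤ L * x) (hL : 1 ≤ L) (hs : 1 ≤ s) (hsd : s ≤ d) (hds : d ≤ D * s) (hK : 1 ≤ K)
    (hr : r * s = x ^ (j + 1)) (hp2 : 2 ≤ p) (hde : p - 1 = d * e)
    (hN1 : (p:ℝ) ^ j ≤ K * N) (hN2 : (N:ℝ) ≤ K * (p:ℝ) ^ j) :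
    r ≤ 2 * D * K * ((e * N : ℕ) : ℝ) ∧ ((e * N : ℕ) : ℝ) ≤ K * L ^ k * r := by
  push_cast
  have hLk : L ^ (j+1) ≤ L ^ k := pow_le_pow_right₀ hL hjk
  have hs0 : 0 < s := by linarith
  have hde' : (p:ℝ) - 1 = d * e := by
    rw [← Nat.cast_mul, ← hde]; push_cast [Nat.cast_sub (show 1 ≤ p by omega)]; ring
  have hp2' : (2:ℝ) ≤ p := by exact_mod_cast hp2
  constructor
  · refine le_of_mul_le_mul_right ?_ hs0
    calc r * s = x ^ (j+1) := hr
      _ ≤ (p:ℝ) ^ (j+1) := by gcongr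
      _ = (p:ℝ) ^ j * p := pow_succ _ _
      _ ≤ (K * N) * (2 * (d * e)) := by
        gcongr
        linarith
      _ ≤ (K * N) * (2 * ((D * s) * e)) := by gcongr
      _ = _ := by ring
  · refine le_of_mul_le_mul_right ?_ hs0
    calc (e:ℝ) * N * s = s * e * N := by ring
      _ ≤ d * e * N := by gcongr
      _ ≤ p * (K * (p:ℝ) ^ j) := by
        gcongr
        linarith
      _ = K * (p:ℝ) ^ (j+1) := by ring
      _ ≤ K * (L * x) ^ (j+1) := by gcongr
      _ = K * (L ^ (j+1) * x ^ (j+1)) := by rw [mul_pow]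
      _ ≤ K * (L ^ k * x ^ (j+1)) := by gcongr
      _ = _ := by rw [← hr]; ring

/-- Combined step: real data to a divisor. -/
lemma step (k j p d T t : ℕ) (r x s D L : ℝ) (hk : k = 2 ^ T * t) (ht : 1 ≤ t) (htT : t ≤ T)
    (hx : 1 ≤ x) (hxp : x ≤ p) (hpp : p.Prime)
    (hpx : p ≤ L * x) (hL : 1 ≤ L) (hs : 1 ≤ s) (hsd : s ≤ d) (hds : d ≤ D * s) (hD : 1 ≤ D)
    (hdp : d ∣ p - 1) (hr0 : 0 ≤ r)
    (h : (j < k ∧ r = x ^ j * s) ∨ (1 ≤ j ∧ j ≤ k ∧ r * s = x ^ j)) :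
    ∃ A : ℕ, A ∣ p ^ k - 1 ∧ r ≤ (2 * D * 2 ^ (4 * T + 1) * L ^ k) * A ∧
      (A:ℝ) ≤ (2 * D * 2 ^ (4 * T + 1) * L ^ k) * r := by
  have hp2 := hpp.two_le
  have hK : (1:ℝ) ≤ 2 ^ (4 * T + 1) := one_le_pow₀ (by norm_num)
  have hLk : 1 ≤ L ^ k := one_le_pow₀ hL
  set K : ℝ := 2 ^ (4 * T + 1) with hKd
  have hDK : 0 ≤ D * K := by positivity
  have hKL : 0 ≤ K * L ^ k := by positivity
  have m1 : K ≤ 2 * D * K * L ^ k := by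
    have : 1 ≤ D * L ^ k := one_le_mul_of_one_le_of_one_le hD hLk
    nlinarith
  have m2 : 2 * D * K ≤ 2 * D * K * L ^ k := by nlinarith
  have m3 : K * L ^ k ≤ 2 * D * K * L ^ k := by nlinarith
  have m4 : D * K * L ^ k ≤ 2 * D * K * L ^ k := by
    have : 0 ≤ D * K * L ^ k := by positivity
    nlinarith
  rcases h with ⟨hj, hr⟩ | ⟨hj1, hjk, hr⟩
  · obtain ⟨N, hN, hN1, hN2⟩ := fac p T t hp2 ht htT j (hk ▸ hj)
    obtain ⟨h1, h2⟩ := up_case k j p d N r x s D K L hj.le hx hxp hpx hL hs hsd hds hK hr hN1 hN2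
    refine ⟨d * N, ?_, ?_, ?_⟩
    · rw [hk]; exact (mul_dvd_mul_right hdp _).trans hN
    · exact h1.trans (by gcongr)
    · exact h2.trans (by gcongr)
  · obtain ⟨i, rfl⟩ : ∃ i, j = i + 1 := ⟨j - 1, by omega⟩
    obtain ⟨N, hN, hN1, hN2⟩ := fac p T t hp2 ht htT i (by omega)
    obtain ⟨e, he⟩ := hdp
    obtain ⟨h1, h2⟩ := down_case k i p d e N r x s D K L hjk hx hxp hpx hL hs hsd hds hK hr hp2 he
      hN1 hN2
    refine ⟨e * N, ?_, ?_, ?_⟩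
    · rw [hk]; exact (mul_dvd_mul_right ⟨d, by rw [he, mul_comm]⟩ _).trans hN
    · exact h1.trans (by gcongr)
    · exact h2.trans (by gcongr)

/-- Dirichlet step. -/
lemma dir (m r n : ℕ) (hm : 1 ≤ m) (hr : 1 ≤ r) (hrn : r ≤ n) (hn : 2 ≤ n) :
    ∃ t j : ℕ, 1 ≤ t ∧ t ≤ 2 * m ∧ ∃ s : ℝ, 1 ≤ s ∧
      s ≤ (n:ℝ) ^ ((1:ℝ) / ((2 ^ (2 * m) * t : ℕ) * (2 * m : ℕ))) ∧
      ((j < 2 ^ (2*m) * t ∧ (r:ℝ) = ((n:ℝ) ^ ((1:ℝ) / (2 ^ (2 * m) * t : ℕ))) ^ j * s) ∨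
       (1 ≤ j ∧ j ≤ 2 ^ (2*m) * t ∧
          (r:ℝ) * s = ((n:ℝ) ^ ((1:ℝ) / (2 ^ (2 * m) * t : ℕ))) ^ j)) := by
  set α : ℝ := Real.log r / Real.log n with hα
  have hn0 : (0:ℝ) < n := by exact_mod_cast (by omega : 0 < n)
  have hn1 : (1:ℝ) ≤ n := by exact_mod_cast (by omega : 1 ≤ n)
  have hr0 : (0:ℝ) < r := by exact_mod_cast hr
  have hlog : 0 < Real.log n := Real.log_pos (by exact_mod_cast (by omega : 1 < n))
  have hrα : (r:ℝ) = (n:ℝ) ^ α := by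
    rw [Real.rpow_def_of_pos hn0, hα, mul_div_cancel₀ _ hlog.ne', Real.exp_log hr0]
  have hα0 : 0 ≤ α := div_nonneg (Real.log_nonneg (by exact_mod_cast hr)) hlog.le
  have hα1 : α ≤ 1 := by
    rw [hα, div_le_one hlog]
    exact Real.log_le_log hr0 (by exact_mod_cast hrn)
  obtain ⟨t, ht0, htT, hb⟩ := Real.exists_nat_abs_mul_sub_round_le ((2 ^ (2*m) : ℕ) * α)
    (n := 2 * m) (by omega)
  set k : ℕ := 2 ^ (2*m) * t with hk
  have hk0 : 0 < k := by positivity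
  have hkR : (0:ℝ) < k := by exact_mod_cast hk0
  have e1 : (t:ℝ) * ((2 ^ (2*m) : ℕ) * α) = k * α := by rw [hk]; push_cast; ring
  rw [e1] at hb
  have hj0 : 0 ≤ round ((k:ℝ) * α) := by
    rw [round_eq]; apply Int.floor_nonneg.2; positivity
  have hjk : round ((k:ℝ) * α) ≤ k := by
    have : (k:ℝ) * α ≤ k := by nlinarith
    rw [round_eq]
    have h : ⌊(k:ℝ) * α + 1/2⌋ < (k:ℤ) + 1 := by
      rw [Int.floor_lt]; push_cast; linarith
    omega
  obtain ⟨j, hj⟩ := Int.eq_ofNat_of_zero_le hj0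
  rw [hj] at hb hjk
  have hjk' : j ≤ k := by exact_mod_cast hjk
  have hm0 : (0:ℝ) < (2 * m : ℕ) := by exact_mod_cast (by omega : 0 < 2 * m)
  have hb' : |(k:ℝ) * α - j| ≤ 1 / (2 * m : ℕ) := by
    have h1 : (1:ℝ) / ((2 * m : ℕ) + 1) ≤ 1 / (2 * m : ℕ) :=
      one_div_le_one_div_of_le hm0 (by linarith)
    exact le_trans (by simpa using hb) h1
  have hxj : ((n:ℝ) ^ ((1:ℝ) / k)) ^ j = (n:ℝ) ^ ((j:ℝ) / k) := by
    rw [← Real.rpow_natCast, ← Real.rpow_mul hn0.le]; congr 1; ring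
  refine ⟨t, j, ht0, htT, (n:ℝ) ^ (|(k:ℝ) * α - j| / k), ?_, ?_, ?_⟩
  · exact Real.one_le_rpow hn1 (by positivity)
  · apply Real.rpow_le_rpow_of_exponent_le hn1
    calc |(k:ℝ) * α - j| / k ≤ (1 / (2 * m : ℕ)) / k := by gcongr
      _ = _ := by rw [div_div, mul_comm]
  · rw [hxj]
    have up : (j:ℝ) ≤ k * α → (r:ℝ) = (n:ℝ) ^ ((j:ℝ) / k) * (n:ℝ) ^ (|(k:ℝ) * α - j| / k) := by
      intro h
      rw [abs_of_nonneg (by linarith), ← Real.rpow_add hn0, hrα]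
      congr 1; field_simp; ring
    have dn : k * α ≤ (j:ℝ) → (r:ℝ) * (n:ℝ) ^ (|(k:ℝ) * α - j| / k) = (n:ℝ) ^ ((j:ℝ) / k) := by
      intro h
      rw [abs_of_nonpos (by linarith), hrα, ← Real.rpow_add hn0]
      congr 1; field_simp; ring
    by_cases h1 : (j:ℝ) ≤ k * α
    · by_cases h2 : j < k
      · exact Or.inl ⟨h2, up h1⟩
      · have h3 : j = k := by omega
        refine Or.inr ⟨by omega, hjk', dn ?_⟩
        rw [h3]; nlinarith
    · push Not at h1
      refine Or.inr ⟨?_, hjk', dn h1.le⟩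
      have : (0:ℝ) < j := lt_of_le_of_lt (by positivity) h1
      exact_mod_cast this

end LSP
end

section
open Finset
namespace LSP

lemma weak : ∃ M n0 : ℕ, 1 ≤ M ∧ 1 ≤ n0 ∧ ∀ r n : ℕ, 1 ≤ r → r ≤ n → n0 ≤ n →
    ∃ q A : ℕ, IsPrimePow q ∧ 2 ≤ q ∧ q ≤ M * n ∧ n ≤ q ∧ A ∣ q - 1 ∧ r ≤ M * A ∧ A ≤ M * r := by
  obtain ⟨m, J, y0, hm, hT⟩ := thmT
  obtain ⟨kmax, hkm⟩ : ∃ z : ℕ, z = 2 ^ (2 * m) * (2 * m) := ⟨_, rfl⟩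
  refine ⟨2 * 2 ^ (J+1) * 2 ^ (4 * (2 * m) + 1) * (4 * 2 ^ m) ^ kmax,
    2 + (2 ^ (J+1) + y0) ^ (kmax * (2 * m)), by apply Nat.one_le_iff_ne_zero.2; positivity,
    by omega, ?_⟩
  intro r n hr hrn hn
  obtain ⟨t, j, ht1, htT, s, hs1, hs2, hcase⟩ := dir m r n hm hr hrn (by omega)
  obtain ⟨k, hk⟩ : ∃ k : ℕ, k = 2 ^ (2 * m) * t := ⟨_, rfl⟩
  rw [← hk] at hs2 hcase
  have hk0 : 0 < k := by rw [hk]; positivity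
  have hkR : (0:ℝ) < k := by exact_mod_cast hk0
  have hmR : (0:ℝ) < (2 * m : ℕ) := by exact_mod_cast (by omega : 0 < 2 * m)
  have hkk : k ≤ kmax := by rw [hk, hkm]; exact Nat.mul_le_mul_left _ htT
  have hn0 : (0:ℝ) < n := by exact_mod_cast (by omega : 0 < n)
  have hn1 : (1:ℝ) ≤ n := by exact_mod_cast (by omega : 1 ≤ n)
  obtain ⟨W, hW⟩ : ∃ W : ℝ, W = (n:ℝ) ^ ((1:ℝ) / ((k : ℝ) * (2 * m : ℕ))) := ⟨_, rfl⟩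
  obtain ⟨x, hx⟩ : ∃ x : ℝ, x = (n:ℝ) ^ ((1:ℝ) / (k : ℝ)) := ⟨_, rfl⟩
  rw [← hW] at hs2
  rw [← hx] at hcase
  have hxW : x = W ^ (2 * m) := by
    rw [hx, hW, ← Real.rpow_natCast, ← Real.rpow_mul hn0.le]; congr 1; field_simp
  have hxk : x ^ k = n := by
    rw [hx, ← Real.rpow_natCast, ← Real.rpow_mul hn0.le, one_div_mul_cancel hkR.ne', Real.rpow_one]
  have hW0 : 0 ≤ W := by rw [hW]; positivity
  have hWk : W ^ (k * (2 * m)) = n := by rw [mul_comm, pow_mul, ← hxW, hxk]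
  have hQ1 : 1 ≤ 2 ^ (J+1) + y0 := by have : 0 < 2 ^ (J+1) := by positivity
                                      omega
  have hWQ : ((2 ^ (J+1) + y0 : ℕ) : ℝ) ≤ W := by
    by_contra hc
    push Not at hc
    have h1 : W ^ (k * (2 * m)) ≤ ((2 ^ (J+1) + y0 : ℕ) : ℝ) ^ (k * (2 * m)) := by gcongr
    rw [hWk] at h1
    have h2 : (2 ^ (J+1) + y0) ^ (k * (2 * m)) ≤ (2 ^ (J+1) + y0) ^ (kmax * (2 * m)) :=
      Nat.pow_le_pow_right hQ1 (Nat.mul_le_mul_right _ hkk)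
    have h3 : n ≤ (2 ^ (J+1) + y0) ^ (k * (2 * m)) := by exact_mod_cast h1
    omega
  push_cast at hWQ
  have hpJ : (0:ℝ) < 2 ^ (J+1) := by positivity
  have hy0R : (0:ℝ) ≤ y0 := by positivity
  have hW1 : 1 ≤ W := by linarith
  have hx1 : 1 ≤ x := by rw [hxW]; exact one_le_pow₀ hW1
  obtain ⟨y, hy⟩ : ∃ y : ℕ, y = ⌈W ^ 2⌉₊ := ⟨_, rfl⟩
  obtain ⟨R, hR⟩ : ∃ R : ℕ, R = ⌈s⌉₊ := ⟨_, rfl⟩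
  have hy1 : W ^ 2 ≤ y := hy ▸ Nat.le_ceil _
  have hy2 : (y:ℝ) ≤ 2 * W ^ 2 := by
    have := Nat.ceil_lt_add_one (show 0 ≤ W ^ 2 by positivity)
    rw [← hy] at this
    have : 1 ≤ W ^ 2 := one_le_pow₀ hW1
    linarith
  have hR1 : s ≤ R := hR ▸ Nat.le_ceil _
  have hR2 : (R:ℝ) ≤ 2 * s := by
    have := Nat.ceil_lt_add_one (show 0 ≤ s by linarith)
    rw [← hR] at this
    linarith
  have hRy : 2 ^ J * R ≤ y := by
    have : (2:ℝ) ^ J * R ≤ y := by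
      calc (2:ℝ) ^ J * R ≤ 2 ^ J * (2 * W) := by gcongr; linarith
        _ = 2 ^ (J+1) * W := by ring
        _ ≤ W * W := by gcongr; linarith
        _ = W ^ 2 := by ring
        _ ≤ y := hy1
    exact_mod_cast this
  obtain ⟨d, p, hd, hp, hRd, hdR, hpy, hpy2, hdp⟩ := hT y R (by
      have : (y0:ℝ) ≤ y := by nlinarith
      exact_mod_cast this) (by
      have : (1:ℝ) ≤ R := by linarith
      exact_mod_cast this) hRy
  have hp2 := hp.two_le
  have hsd : s ≤ d := hR1.trans (by exact_mod_cast hRd.le)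
  have hds : (d:ℝ) ≤ 2 ^ (J+1) * s := by
    have : (d:ℝ) ≤ 2 ^ J * R := by exact_mod_cast hdR
    calc (d:ℝ) ≤ 2 ^ J * R := this
      _ ≤ 2 ^ J * (2 * s) := by gcongr
      _ = _ := by ring
  have hxp : x ≤ p := by
    have : (y:ℝ) ^ m ≤ p := by exact_mod_cast hpy.le
    rw [hxW, pow_mul]
    exact le_trans (by gcongr) this
  have hpx : (p:ℝ) ≤ (4 * 2 ^ m) * x := by
    have : (p:ℝ) ≤ 4 * (y:ℝ) ^ m := by exact_mod_cast hpy2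
    calc (p:ℝ) ≤ 4 * (y:ℝ) ^ m := this
      _ ≤ 4 * (2 * W ^ 2) ^ m := by gcongr
      _ = _ := by rw [mul_pow, hxW, pow_mul]; ring
  have hL : (1:ℝ) ≤ 4 * 2 ^ m := by
    have : (1:ℝ) ≤ 2 ^ m := one_le_pow₀ (by norm_num)
    linarith
  obtain ⟨A, hA1, hA2, hA3⟩ := step k j p d (2 * m) t r x s (2 ^ (J+1)) (4 * 2 ^ m) hk ht1 htT hx1
    hxp hp hpx hL hs1 hsd hds (one_le_pow₀ (by norm_num)) hdp (by positivity) hcase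
  have hLL : ((4:ℝ) * 2 ^ m) ^ k ≤ (4 * 2 ^ m) ^ kmax := pow_le_pow_right₀ hL hkk
  refine ⟨p ^ k, A, hp.isPrimePow.pow hk0.ne', ?_, ?_, ?_, hA1, ?_, ?_⟩
  · calc 2 ≤ p ^ 1 := by simpa using hp2
      _ ≤ p ^ k := Nat.pow_le_pow_right (by omega) hk0
  · have h : ((p:ℝ)) ^ k ≤ (1 * 1 * 1 * (4 * 2 ^ m) ^ kmax) * n := by
      calc (p:ℝ) ^ k ≤ ((4 * 2 ^ m) * x) ^ k := by gcongr
        _ = (4 * 2 ^ m) ^ k * n := by rw [mul_pow, hxk]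
        _ ≤ (4 * 2 ^ m) ^ kmax * n := by gcongr
        _ = _ := by ring
    have h' : p ^ k ≤ (1 * 1 * 1 * (4 * 2 ^ m) ^ kmax) * n := by exact_mod_cast h
    refine h'.trans ?_
    have e1 : 1 ≤ 2 ^ (J+1) := Nat.one_le_two_pow
    have e2 : 1 ≤ 2 ^ (4 * (2 * m) + 1) := Nat.one_le_two_pow
    gcongr
    norm_num
  · have : (n:ℝ) ≤ (p:ℝ) ^ k := by rw [← hxk]; gcongr
    exact_mod_cast this
  · have : (r:ℝ) ≤ (2 * 2 ^ (J+1) * 2 ^ (4 * (2 * m) + 1) * (4 * 2 ^ m) ^ kmax) * A :=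
      hA2.trans (by gcongr)
    exact_mod_cast this
  · have : (A:ℝ) ≤ (2 * 2 ^ (J+1) * 2 ^ (4 * (2 * m) + 1) * (4 * 2 ^ m) ^ kmax) * r :=
      hA3.trans (by gcongr)
    exact_mod_cast this

end LSP
end

/-- **Lemma 4.3.** There is an absolute constant `C > 0` such that for all positive
integers `r ≤ n` there is a prime power `q ≤ C·n` and a divisor `d` of `q - 1` with
`d ≥ r` and `(q-1)/d ≥ n/r` (so `𝔽_q^*` has a subgroup of size at least `r` with at
least `n/r` cosets). -/
theorem exists_primepow_with_large_subgroup_and_index :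
    ∃ C : ℝ, 0 < C ∧
      ∀ r n : ℕ, 0 < r → r ≤ n →
        ∃ q : ℕ, IsPrimePow q ∧ (q : ℝ) ≤ C * (n : ℝ) ∧
          ∃ d : ℕ, 0 < d ∧ d ∣ q - 1 ∧ r ≤ d ∧
            (n : ℝ) / (r : ℝ) ≤ (((q - 1) / d : ℕ) : ℝ) := by
  obtain ⟨M, n0, hM, hn0, H⟩ := LSP.weak
  refine ⟨((M * (2 * M ^ 2 * n0) : ℕ) : ℝ), by positivity, ?_⟩
  intro r n hr hrn
  have hM2 : M ≤ 2 * M ^ 2 := by nlinarith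
  obtain ⟨q, A, hq, hq2, hqn, hnq, ⟨B, hB⟩, hrA, hAr⟩ := H (M * r) (2 * M ^ 2 * n0 * n)
    (by nlinarith) (by
      have h1 : M ≤ 2 * M ^ 2 * n0 := hM2.trans (Nat.le_mul_of_pos_right _ hn0)
      exact Nat.mul_le_mul h1 hrn) (by
      have h1 : 1 ≤ 2 * M ^ 2 * n := by
        apply Nat.one_le_iff_ne_zero.2
        have : 0 < n := by omega
        positivity
      calc n0 ≤ (2 * M ^ 2 * n) * n0 := Nat.le_mul_of_pos_left _ h1
        _ = _ := by ring)
  have hA : r ≤ A := Nat.le_of_mul_le_mul_left hrA (by omega)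
  have hA0 : 0 < A := by omega
  refine ⟨q, hq, ?_, A, hA0, ⟨B, hB⟩, hA, ?_⟩
  · calc (q:ℝ) ≤ ((M * (2 * M ^ 2 * n0 * n) : ℕ) : ℝ) := by exact_mod_cast hqn
      _ = _ := by push_cast; ring
  · rw [hB, Nat.mul_div_cancel_left _ hA0]
    have hr0 : (0:ℝ) < r := by exact_mod_cast hr
    rw [div_le_iff₀ hr0]
    have h1 : 2 * M ^ 2 * n0 * n ≤ 2 * (A * B) := by omega
    have h2 : A * B ≤ M * (M * r) * B := Nat.mul_le_mul_right _ hAr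
    have h3 : (2 * M ^ 2) * (n0 * n) ≤ (2 * M ^ 2) * (B * r) := by nlinarith
    have h4 : n0 * n ≤ B * r := Nat.le_of_mul_le_mul_left h3 (by positivity)
    have h5 : n ≤ B * r := (Nat.le_mul_of_pos_left n hn0).trans h4
    exact_mod_cast h5
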